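/- Let D and D′ be domains in ℝ^n, n ≥ 3, and let φ:(0,∞)→(0,∞) be a nondecreasing function satisfying ∫_{t_*}^∞ (t/φ(t))^{1/(n−2)} dt < ∞ for some t_* ∈ (0,∞). Then every homeomorphism f:D→D′ of finite distortion of class W^{1,φ}_loc is a lower K_p(x,f)-homeomorphism with respect to p-modulus at every point, for every p > n−1. -/

import Mathlib

open MeasureTheory Metric Set Filter
open scoped ENNReal NNReal Topology RealInnerProductSpace Classical

noncomputable section

abbrev Eucl (n : ℕ) : Type := EuclideanSpace ℝ (Fin n)

/-- A `k`-dimensional surface in `ℝⁿ`: a continuous map defined on an open subset of the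
one-point compactification of `ℝᵏ`. -/
structure Surface (n k : ℕ) where
  dom : Set (OnePoint (Eucl k))
  isOpen_dom : IsOpen dom
  toFun : OnePoint (Eucl k) → Eucl n
  continuousOn : ContinuousOn toFun dom

namespace Surface

variable {n k : ℕ}

/-- The multiplicity function `N(S,y)` of a surface. -/
def mult (S : Surface n k) (y : Eucl n) : ℝ≥0∞ :=
  ((S.dom ∩ S.toFun ⁻¹' {y}).encard : ℕ∞)

/-- The integral `∫_S ρ dA = ∫ ρ(y) N(S,y) dH^k(y)` of `ρ` over the surface `S`. -/
def sint (S : Surface n k) (ρ : Eucl n → ℝ≥0∞) : ℝ≥0∞ :=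
  ∫⁻ y, ρ y * S.mult y ∂(μH[(k : ℝ)] : Measure (Eucl n))

end Surface

/-- Admissible functions for a family of `k`-surfaces. -/
def surfAdm {n : ℕ} (k : ℕ) (Γ : Set (Surface n k)) : Set (Eucl n → ℝ≥0∞) :=
  {ρ | Measurable ρ ∧ ∀ S ∈ Γ, 1 ≤ S.sint fun y => ρ y ^ k}

/-- The `p`-modulus of a family of `k`-surfaces. -/
def surfModulus {n : ℕ} (p : ℝ) (k : ℕ) (Γ : Set (Surface n k)) : ℝ≥0∞ :=
  ⨅ ρ ∈ surfAdm k Γ, ∫⁻ x, ρ x ^ p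

/-- Extensively `p`-admissible functions: admissibility may fail on a subfamily of
`p`-modulus zero. -/
def extAdm {n : ℕ} (p : ℝ) (k : ℕ) (Γ : Set (Surface n k)) : Set (Eucl n → ℝ≥0∞) :=
  {ρ | Measurable ρ ∧ surfModulus p k {S ∈ Γ | ¬ 1 ≤ S.sint fun y => ρ y ^ k} = 0}

/-- The family of the (injectively parametrized, nonempty) surfaces `S(x₀,r) ∩ D`,
`r ∈ I`. -/
def sphereFam {n : ℕ} (D : Set (Eucl n)) (x₀ : Eucl n) (I : Set ℝ) :
    Set (Surface n (n - 1)) :=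
  {S | ∃ r ∈ I, S.dom.Nonempty ∧ Set.InjOn S.toFun S.dom ∧
      S.toFun '' S.dom = sphere x₀ r ∩ D}

/-- The image of a family of surfaces under a map `f`. -/
def imageFam {n k : ℕ} (f : Eucl n → Eucl n) (Γ : Set (Surface n k)) :
    Set (Surface n k) :=
  {S' | ∃ S ∈ Γ, S'.dom = S.dom ∧ Set.EqOn S'.toFun (f ∘ S.toFun) S.dom}

/-- The spherical ring `R(x₀,a,b)`. -/
def ringA {n : ℕ} (x₀ : Eucl n) (a b : ℝ) : Set (Eucl n) :=
  {x | a < dist x x₀ ∧ dist x x₀ < b}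

/-- `‖Q‖_α(r) = (∫_{D ∩ S(x₀,r)} Q^α dA)^{1/α}`. -/
def sphNorm {n : ℕ} (D : Set (Eucl n)) (x₀ : Eucl n) (Q : Eucl n → ℝ≥0∞)
    (α : ℝ) (r : ℝ) : ℝ≥0∞ :=
  (∫⁻ x in D ∩ sphere x₀ r, Q x ^ α ∂(μH[((n : ℝ) - 1)] : Measure (Eucl n))) ^ (1 / α)

/-- `f` is a lower `Q`-homeomorphism w.r.t. the `p`-modulus at `x₀`. -/
def IsLowerQHomeoAt {n : ℕ} (D : Set (Eucl n)) (f : Eucl n → Eucl n)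
    (Q : Eucl n → ℝ≥0∞) (p : ℝ) (x₀ : Eucl n) (d₀ : ℝ≥0∞) : Prop :=
  ∀ ε ε₀ : ℝ, 0 < ε → ε < ε₀ → ENNReal.ofReal ε₀ < d₀ →
    (⨅ ρ ∈ extAdm p (n - 1) (sphereFam D x₀ (Ioo ε ε₀)),
        ∫⁻ x in ringA x₀ ε ε₀, ρ x ^ p / Q x) ≤
      surfModulus p (n - 1) (imageFam f (sphereFam D x₀ (Ioo ε ε₀)))

/-- `f` is a homeomorphism of `D` onto `D'`. -/
structure IsHomeoOn {n : ℕ} (f : Eucl n → Eucl n) (D D' : Set (Eucl n)) : Prop where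
  continuousOn : ContinuousOn f D
  injOn : Set.InjOn f D
  image_eq : f '' D = D'
  isOpenMapOn : ∀ U : Set (Eucl n), U ⊆ D → IsOpen U → IsOpen (f '' U)

/-- `Df` is the weak (Sobolev) derivative of `f` on `D`, and `f ∈ W^{1,1}_loc(D)`. -/
def IsWeakDerivOn {n m : ℕ} (D : Set (Eucl n)) (f : Eucl n → Eucl m)
    (Df : Eucl n → Eucl n →L[ℝ] Eucl m) : Prop :=
  LocallyIntegrableOn f D volume ∧ LocallyIntegrableOn Df D volume ∧
  ∀ ψ : Eucl n → ℝ, ContDiff ℝ (⊤ : ℕ∞) ψ → HasCompactSupport ψ → tsupport ψ ⊆ D →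
    ∀ v : Eucl n, ∫ x, ψ x • Df x v = - ∫ x, fderiv ℝ ψ x v • f x

/-- The Frobenius norm `|∇f| = (Σ_{i,j} (∂f_i/∂x_j)²)^{1/2}` of a linear map. -/
def frobNorm {n m : ℕ} (A : Eucl n →L[ℝ] Eucl m) : ℝ :=
  Real.sqrt (∑ i : Fin m, ∑ j : Fin n, (A (EuclideanSpace.single j 1) i) ^ 2)

/-- The Orlicz–Sobolev class `W^{1,φ}_loc(D)` (with explicit weak derivative `Df`). -/
def MemOrliczSobolevOn {n m : ℕ} (φ : ℝ → ℝ) (D : Set (Eucl n))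
    (f : Eucl n → Eucl m) (Df : Eucl n → Eucl n →L[ℝ] Eucl m) : Prop :=
  IsWeakDerivOn D f Df ∧
  ∀ K : Set (Eucl n), K ⊆ D → IsCompact K →
    (∫⁻ x in K, ENNReal.ofReal (φ (frobNorm (Df x)))) < ⊤

/-- `φ` is nondecreasing and positive on `(0,∞)`. -/
def NondecPos (φ : ℝ → ℝ) : Prop :=
  (∀ s t : ℝ, 0 < s → s ≤ t → φ s ≤ φ t) ∧ ∀ t : ℝ, 0 < t → 0 < φ t

/-- The Calderón-type condition `∫_{t₀}^∞ (t/φ(t))^{1/(n-2)} dt < ∞`. -/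
def CalderonCond (n : ℕ) (φ : ℝ → ℝ) : Prop :=
  ∃ t₀ : ℝ, 0 < t₀ ∧
    IntegrableOn (fun t => (t / φ t) ^ (1 / ((n : ℝ) - 2))) (Ioi t₀) volume

/-- `f` (with a.e. derivative `Df`) has finite distortion on `D`. -/
def HasFiniteDistortionOn {n : ℕ} (D : Set (Eucl n))
    (Df : Eucl n → Eucl n →L[ℝ] Eucl n) : Prop :=
  ∃ K : Eucl n → ℝ, AEMeasurable K (volume.restrict D) ∧
    ∀ᵐ x ∂volume.restrict D, 1 ≤ K x ∧ ‖Df x‖ ^ n ≤ K x * (Df x).det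

/-- The distortion `K_p(x,f)` for a map with derivative `Df`. -/
def distortionKp {n : ℕ} (p : ℝ) (Df : Eucl n → Eucl n →L[ℝ] Eucl n)
    (x : Eucl n) : ℝ≥0∞ :=
  if (Df x).det ≠ 0 then ENNReal.ofReal (‖Df x‖ ^ p / (Df x).det)
  else if Df x = 0 then 1 else ⊤

/-- The multiplicity function of a curve `γ : [0,1] → ℝⁿ`. -/
def curveMult {n : ℕ} (γ : ℝ → Eucl n) (y : Eucl n) : ℝ≥0∞ :=
  (({t ∈ Icc (0:ℝ) 1 | γ t = y}).encard : ℕ∞)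

/-- The line integral `∫_γ ρ ds = ∫ ρ(y) N(γ,y) dH¹(y)`. -/
def curveInt {n : ℕ} (γ : ℝ → Eucl n) (ρ : Eucl n → ℝ≥0∞) : ℝ≥0∞ :=
  ∫⁻ y, ρ y * curveMult γ y ∂(μH[(1 : ℝ)] : Measure (Eucl n))

/-- The family of curves joining `A` and `B` in `G`. -/
def curveJoin {n : ℕ} (A B G : Set (Eucl n)) : Set (ℝ → Eucl n) :=
  {γ | ContinuousOn γ (Icc 0 1) ∧ γ 0 ∈ A ∧ γ 1 ∈ B ∧ Set.MapsTo γ (Icc 0 1) G}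

/-- The `q`-modulus of a family of curves. -/
def curveModulus {n : ℕ} (q : ℝ) (Γ : Set (ℝ → Eucl n)) : ℝ≥0∞ :=
  ⨅ ρ ∈ {ρ : Eucl n → ℝ≥0∞ | Measurable ρ ∧ ∀ γ ∈ Γ, 1 ≤ curveInt γ ρ},
    ∫⁻ x, ρ x ^ q

/-- The `q`-capacity of the condenser `(A,C)`, via the modulus of joining curves. -/
def condenserCap {n : ℕ} (q : ℝ) (A C : Set (Eucl n)) : ℝ≥0∞ :=
  curveModulus q (curveJoin (frontier A) (frontier C) (A \ C))

/-- `L(x₀,f) = limsup_{x→x₀} |f(x)-f(x₀)|/|x-x₀|`. -/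
def LAt {n : ℕ} (f : Eucl n → Eucl n) (x₀ : Eucl n) : ℝ≥0∞ :=
  limsup (fun x => edist (f x) (f x₀) / edist x x₀) (𝓝[≠] x₀)

/-- `k_p(x₀) = limsup_{ε→0} (⨍_{B(x₀,ε)} K_p(x,f)^{(n-1)/(p-n+1)} dm)^{(p-n+1)/(n-1)}`. -/
def kpAt {n : ℕ} (p : ℝ) (Df : Eucl n → Eucl n →L[ℝ] Eucl n) (x₀ : Eucl n) : ℝ≥0∞ :=
  limsup (fun ε : ℝ =>
      ((∫⁻ x in ball x₀ ε, distortionKp p Df x ^ (((n:ℝ)-1)/(p-(n:ℝ)+1))) /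
        volume (ball x₀ ε)) ^ ((p-(n:ℝ)+1)/((n:ℝ)-1)))
    (𝓝[>] (0:ℝ))

/-- `f` is absolutely continuous on `S` w.r.t. `d`-dimensional Hausdorff measure. -/
def ACOnSet {n m : ℕ} (f : Eucl n → Eucl m) (S : Set (Eucl n)) (d : ℝ) : Prop :=
  ∀ ε : ℝ, 0 < ε → ∃ δ : ℝ, 0 < δ ∧ ∀ A : Set (Eucl n), A ⊆ S →
    (μH[d] : Measure (Eucl n)) A < ENNReal.ofReal δ →
      (μH[d] : Measure (Eucl m)) (f '' A) < ENNReal.ofReal ε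

/-- `f` is locally absolutely continuous on `S` w.r.t. `H^d`. -/
def LocACOnSet {n m : ℕ} (f : Eucl n → Eucl m) (S : Set (Eucl n)) (d : ℝ) : Prop :=
  ∀ x ∈ S, ∃ V ∈ 𝓝 x, ACOnSet f (S ∩ V) d

/-- The Luzin (N)-property of `f` on `S` w.r.t. `d`-dimensional Hausdorff measure. -/
def LusinNOn {n m : ℕ} (f : Eucl n → Eucl m) (S : Set (Eucl n)) (d : ℝ) : Prop :=
  ∀ A : Set (Eucl n), A ⊆ S → (μH[d] : Measure (Eucl n)) A = 0 →
    (μH[d] : Measure (Eucl m)) (f '' A) = 0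

end

/-!
On almost every sphere `S` around `x₀`, Calderón's condition on `φ` bounds the oscillation of `f`
on balls of `S` by a Riesz potential of `|∇f|`, summably enough for `f` to have the Lusin property
for the `(n - 1)`-dimensional Hausdorff measure on `S`. Since `f` is differentiable along the pieces
of a countable decomposition of almost all of the domain, this gives
`H^(n-1)(f(B)) ≤ ∫_B ‖f'‖^(n-1)` for Borel `B ⊆ S`, and in the solid domain, where no Lusin property
is available, still `∫ g(f) |J_f| ≤ ∫ g`. Hence `ρ(f) ‖f'‖` is extensively admissible for the
spheres whenever `ρ` is admissible for their images, and as `‖f'‖^p / K_p ≤ |J_f|` pointwise, its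
weighted energy is at most `∫ ρ^p`.
-/

section RieszPotential

open Module (finrank)

open AffineMap (lineMap)

theorem edist_le_lintegral_enorm_fderiv_lineMap {E F : Type*} [NormedAddCommGroup E]
    [NormedSpace ℝ E] [NormedAddCommGroup F] [NormedSpace ℝ F] {g : E → F}
    (hg : ContDiff ℝ 1 g) (x y : E) :
    edist (g x) (g y) ≤
      ∫⁻ t in Icc (0 : ℝ) 1, ‖fderiv ℝ g (lineMap x y t)‖ₑ * edist x y := by
  have hderiv : ∀ t : ℝ, HasDerivAt (g ∘ lineMap x y) (fderiv ℝ g (lineMap x y t) (y - x)) t :=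
    fun t ↦ ((hg.differentiable one_ne_zero _).hasFDerivAt).comp_hasDerivAt t
      AffineMap.hasDerivAt_lineMap
  have hC1 : ContDiff ℝ 1 (g ∘ lineMap x y) :=
    hg.comp (show ContDiff ℝ 1 fun t : ℝ ↦ t • (y - x) + x by fun_prop)
  calc edist (g x) (g y) = ‖(g ∘ lineMap x y) (1 : ℝ) - (g ∘ lineMap x y) (0 : ℝ)‖ₑ := by
        simp [edist_comm (g x), edist_eq_enorm_sub]
    _ ≤ ∫⁻ t in Icc (0 : ℝ) 1, ‖deriv (g ∘ lineMap x y) t‖ₑ :=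
        enorm_sub_le_lintegral_deriv_of_contDiffOn_Icc hC1.contDiffOn zero_le_one
    _ ≤ _ := by
        gcongr with t
        rw [(hderiv t).deriv, edist_comm, edist_eq_enorm_sub]
        exact ContinuousLinearMap.le_opENorm _ _

variable {E F : Type*} [NormedAddCommGroup E] [NormedSpace ℝ E] [FiniteDimensional ℝ E]
  [MeasurableSpace E] [BorelSpace E] [NormedAddCommGroup F] [NormedSpace ℝ F]
  (μ : Measure E) [μ.IsAddHaarMeasure]

theorem lintegral_fun_norm_addHaar [Nontrivial E] {f : ℝ → ℝ≥0∞} (hf : Measurable f) :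
    ∫⁻ x, f ‖x‖ ∂μ =
      finrank ℝ E * μ (ball 0 1) *
        ∫⁻ r in Ioi 0, ENNReal.ofReal (r ^ (finrank ℝ E - 1)) * f r := by
  calc ∫⁻ x, f ‖x‖ ∂μ
      = ∫⁻ x : ({(0)}ᶜ : Set E), f ‖(x : E)‖ ∂(μ.comap (↑)) := by
        rw [lintegral_subtype_comap (measurableSet_singleton _).compl fun x : E ↦ f ‖x‖,
          restrict_compl_singleton]
    _ = ∫⁻ x, f x.2 ∂μ.toSphere.prod (.volumeIoiPow (finrank ℝ E - 1)) := by
        simpa using μ.measurePreserving_homeomorphUnitSphereProd.lintegral_comp_emb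
          (Homeomorph.measurableEmbedding _) (f ∘ Subtype.val ∘ Prod.snd)
    _ = μ.toSphere univ * ∫⁻ r, f r ∂.volumeIoiPow (finrank ℝ E - 1) := by
        rw [lintegral_prod (fun x : sphere (0 : E) 1 × Ioi (0 : ℝ) ↦ f x.2)
          (hf.comp (by fun_prop)).aemeasurable]
        simp only [lintegral_const, mul_comm]
    _ = _ := by
        have hpow : Measurable fun r : Ioi (0 : ℝ) ↦
            ENNReal.ofReal ((r : ℝ) ^ (finrank ℝ E - 1)) := by fun_prop
        rw [μ.toSphere_apply_univ, Measure.volumeIoiPow,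
          lintegral_withDensity_eq_lintegral_mul _ hpow (g := fun r ↦ f (r : ℝ)) (by fun_prop),
          ← lintegral_subtype_comap measurableSet_Ioi]
        rfl

theorem lintegral_comp_lineMap {f : E → ℝ≥0∞} (hf : Measurable f) (x : E) {t : ℝ} (ht : t ≠ 0) :
    ∫⁻ y, f (lineMap x y t) ∂μ = ENNReal.ofReal |(t ^ finrank ℝ E)⁻¹| * ∫⁻ z, f z ∂μ := by
  simp only [AffineMap.lineMap_apply_module']
  rw [lintegral_sub_right_eq_self (fun y ↦ f (t • y + x)) x,
    ← lintegral_map (f := fun y ↦ f (y + x)) (by fun_prop) (measurable_const_smul t),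
    Measure.map_addHaar_smul μ ht, lintegral_smul_measure, lintegral_add_right_eq_self f x,
    smul_eq_mul]

/-- The kernel `|z - x|^(1 - m)` of the Riesz potential of order one on a space of dimension `m`.
On the diagonal its value is `⊤` as soon as `2 ≤ m`. -/
noncomputable def rieszKernel {E : Type*} [NormedAddCommGroup E] [NormedSpace ℝ E]
    (x z : E) : ℝ≥0∞ :=
  (edist z x ^ (finrank ℝ E - 1))⁻¹

omit [FiniteDimensional ℝ E] [MeasurableSpace E] [BorelSpace E] in
theorem rieszKernel_comm (x z : E) : rieszKernel x z = rieszKernel z x := by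
  rw [rieszKernel, rieszKernel, edist_comm]

@[fun_prop]
theorem measurable_rieszKernel (x : E) : Measurable (rieszKernel x) :=
  ((measurable_id.edist measurable_const).pow_const _).inv

theorem setLIntegral_closedBall_rieszKernel [Nontrivial E] (x : E) (R : ℝ) :
    ∫⁻ z in closedBall x R, rieszKernel x z ∂μ =
      finrank ℝ E * μ (ball 0 1) * ENNReal.ofReal R := by
  let f : ℝ → ℝ≥0∞ := (Iic R).indicator fun r ↦ (ENNReal.ofReal r ^ (finrank ℝ E - 1))⁻¹
  have hf : Measurable f := Measurable.indicator (by fun_prop) measurableSet_Iic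
  have hkernel : ∀ z, (closedBall x R).indicator (rieszKernel x) z = f ‖z - x‖ := fun z ↦ by
    simp only [f, indicator_apply, mem_closedBall, mem_Iic, rieszKernel, dist_eq_norm, edist_dist]
  have hradial : ∀ r ∈ Ioi (0 : ℝ), ENNReal.ofReal (r ^ (finrank ℝ E - 1)) * f r =
      (Iic R).indicator 1 r := fun r (hr : 0 < r) ↦ by
    by_cases hrR : r ≤ R
    · have hpow : ENNReal.ofReal r ^ (finrank ℝ E - 1) ≠ 0 := by positivity
      simp only [f, indicator_of_mem (mem_Iic.2 hrR), ENNReal.ofReal_pow hr.le, Pi.one_apply]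
      exact ENNReal.mul_inv_cancel hpow (by finiteness)
    · simp only [f, indicator_of_notMem (mt mem_Iic.1 hrR), mul_zero]
  rw [← lintegral_indicator measurableSet_closedBall, lintegral_congr hkernel,
    lintegral_sub_right_eq_self (fun z ↦ f ‖z‖) x, lintegral_fun_norm_addHaar μ hf,
    setLIntegral_congr_fun measurableSet_Ioi hradial, lintegral_indicator_one measurableSet_Iic,
    Measure.restrict_apply measurableSet_Iic, inter_comm, Ioi_inter_Iic, Real.volume_Ioc, sub_zero]

theorem setLIntegral_closedBall_rieszKernel_le [Nontrivial E] {c x : E} {r : ℝ}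
    (hx : x ∈ closedBall c r) :
    ∫⁻ z in closedBall c r, rieszKernel x z ∂μ ≤
      finrank ℝ E * μ (ball 0 1) * ENNReal.ofReal (2 * r) := by
  rw [← setLIntegral_closedBall_rieszKernel]
  refine lintegral_mono_set (closedBall_subset_closedBall' ?_)
  rw [two_mul, dist_comm]
  exact add_le_add_right hx r

theorem setLIntegral_comp_lineMap_mul_edist_le {W : E → ℝ≥0∞} (hW : Measurable W) {s : Set E}
    (hs : MeasurableSet s) {x : E} (hsx : StarConvex ℝ x s) {d t : ℝ} (hd : 0 < d)
    (hsd : s ⊆ closedBall x d) (ht : t ∈ Ioc (0 : ℝ) 1) :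
    ∫⁻ y in s, W (lineMap x y t) * edist x y ∂μ ≤
      ∫⁻ z in s, W z * edist z x *
        (Ici (dist z x / d)).indicator (fun t ↦ ENNReal.ofReal (t ^ (-(finrank ℝ E + 1 : ℝ)))) t
          ∂μ := by
  let V : E → ℝ≥0∞ := (s ∩ closedBall x (t * d)).indicator fun z ↦ W z * edist z x
  have hV : Measurable V := Measurable.indicator (by fun_prop) (hs.inter measurableSet_closedBall)
  have ht0 : ENNReal.ofReal t ≠ 0 := by simpa using ht.1
  have hdist : ∀ y, dist (lineMap x y t) x = t * dist y x := fun y ↦ by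
    rw [dist_lineMap_left, Real.norm_of_nonneg ht.1.le, dist_comm]
  have hpoint : ∀ y ∈ s, W (lineMap x y t) * edist x y =
      (ENNReal.ofReal t)⁻¹ * V (lineMap x y t) := fun y hy ↦ by
    have hmem : lineMap x y t ∈ s ∩ closedBall x (t * d) :=
      ⟨hsx.segment_subset hy (lineMap_mem_segment ℝ x y ⟨ht.1.le, ht.2⟩), by
        rw [mem_closedBall, hdist]
        exact mul_le_mul_of_nonneg_left (hsd hy) ht.1.le⟩
    rw [show V _ = _ from indicator_of_mem hmem _, edist_dist _ x, hdist,
      ENNReal.ofReal_mul ht.1.le, ← edist_dist, edist_comm x y, mul_left_comm (W _),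
      ENNReal.inv_mul_cancel_left ht0 (by finiteness)]
  have hcoeff : (ENNReal.ofReal t)⁻¹ * ENNReal.ofReal |(t ^ finrank ℝ E)⁻¹| =
      ENNReal.ofReal (t ^ (-(finrank ℝ E + 1 : ℝ))) := by
    have htpow : 0 < t ^ finrank ℝ E := pow_pos ht.1 _
    rw [abs_of_pos (by positivity), ← ENNReal.ofReal_inv_of_pos ht.1, ← ENNReal.ofReal_mul
      (by have := ht.1; positivity), Real.rpow_neg ht.1.le, Real.rpow_add_one ht.1.ne',
      Real.rpow_natCast, mul_inv, mul_comm]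
  calc ∫⁻ y in s, W (lineMap x y t) * edist x y ∂μ
      = ∫⁻ y in s, (ENNReal.ofReal t)⁻¹ * V (lineMap x y t) ∂μ := setLIntegral_congr_fun hs hpoint
    _ ≤ ∫⁻ y, (ENNReal.ofReal t)⁻¹ * V (lineMap x y t) ∂μ := setLIntegral_le_lintegral _ _
    _ = ENNReal.ofReal (t ^ (-(finrank ℝ E + 1 : ℝ))) * ∫⁻ z, V z ∂μ := by
        rw [lintegral_const_mul' _ _ (by finiteness), lintegral_comp_lineMap μ hV x ht.1.ne',
          ← mul_assoc, hcoeff]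
    _ = _ := by
        rw [← lintegral_const_mul _ hV, ← lintegral_indicator hs]
        refine lintegral_congr fun z ↦ ?_
        by_cases hzs : z ∈ s <;> by_cases hzt : dist z x ≤ t * d <;>
          simp [V, indicator_apply, div_le_iff₀ hd, hzs, hzt, mul_comm (W z * _)]

omit [MeasurableSpace E] [BorelSpace E] in
theorem edist_mul_setLIntegral_Ici_rpow_le [Nontrivial E] (x z : E) {d : ℝ} (hd : 0 < d) :
    edist z x * ∫⁻ t in Ici (dist z x / d), ENNReal.ofReal (t ^ (-(finrank ℝ E + 1 : ℝ))) ≤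
      ENNReal.ofReal (d ^ finrank ℝ E / finrank ℝ E) * rieszKernel x z := by
  rcases eq_or_ne z x with rfl | hzx
  · simp
  have hρ : 0 < dist z x := dist_pos.2 hzx
  have hm : (0 : ℝ) < finrank ℝ E := mod_cast Module.finrank_pos
  have hexp : -(finrank ℝ E + 1 : ℝ) < -1 := by linarith
  have hint : ∫⁻ t in Ici (dist z x / d), ENNReal.ofReal (t ^ (-(finrank ℝ E + 1 : ℝ))) =
      ENNReal.ofReal (((dist z x / d) ^ finrank ℝ E)⁻¹ / finrank ℝ E) := by
    rw [setLIntegral_congr Ioi_ae_eq_Ici.symm, ← ofReal_integral_eq_lintegral_ofReal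
      (integrableOn_Ioi_rpow_of_lt hexp (by positivity)),
      integral_Ioi_rpow_of_lt hexp (by positivity)]
    · congr 1
      rw [show -(finrank ℝ E + 1 : ℝ) + 1 = -finrank ℝ E by ring, Real.rpow_neg (by positivity),
        Real.rpow_natCast, neg_div_neg_eq]
    · filter_upwards [ae_restrict_mem measurableSet_Ioi] with t ht
      exact Real.rpow_nonneg ((by positivity : 0 ≤ dist z x / d).trans ht.le) _
  rw [hint, rieszKernel, edist_dist, ← ENNReal.ofReal_mul hρ.le, ← ENNReal.ofReal_pow hρ.le,
    ← ENNReal.ofReal_inv_of_pos (by positivity), ← ENNReal.ofReal_mul (by positivity)]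
  refine ENNReal.ofReal_le_ofReal (le_of_eq ?_)
  obtain ⟨k, hk⟩ : ∃ k, finrank ℝ E = k + 1 :=
    ⟨_, (Nat.succ_pred_eq_of_pos Module.finrank_pos).symm⟩
  rw [hk, Nat.add_sub_cancel, div_pow, pow_succ (dist z x)]
  field_simp

theorem setLIntegral_edist_le_rieszPotential [Nontrivial E] {g : E → F} (hg : ContDiff ℝ 1 g)
    {s : Set E} (hs : MeasurableSet s) {x : E} (hsx : StarConvex ℝ x s) {d : ℝ} (hd : 0 < d)
    (hsd : s ⊆ closedBall x d) :
    ∫⁻ y in s, edist (g x) (g y) ∂μ ≤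
      ENNReal.ofReal (d ^ finrank ℝ E / finrank ℝ E) *
        ∫⁻ z in s, ‖fderiv ℝ g z‖ₑ * rieszKernel x z ∂μ := by
  set W : E → ℝ≥0∞ := fun z ↦ ‖fderiv ℝ g z‖ₑ
  have hWc : Continuous W := (hg.continuous_fderiv one_ne_zero).enorm
  have hWm : Measurable W := hWc.measurable
  have hline : Continuous fun p : E × ℝ ↦ (lineMap x p.1 p.2 : E) := by fun_prop
  set ψ : ℝ → ℝ≥0∞ := fun t ↦ ENNReal.ofReal (t ^ (-(finrank ℝ E + 1 : ℝ)))
  have hψ : Measurable ψ := by fun_prop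
  have hψ_ind : Measurable fun p : ℝ × E ↦ (Ici (dist p.2 x / d)).indicator ψ p.1 := by
    simp only [indicator_apply, mem_Ici]
    exact Measurable.ite (measurableSet_le (by fun_prop) (by fun_prop)) (by fun_prop) (by fun_prop)
  calc ∫⁻ y in s, edist (g x) (g y) ∂μ
      ≤ ∫⁻ y in s, (∫⁻ t in Ioc (0 : ℝ) 1, W (lineMap x y t) * edist x y) ∂μ := by
        gcongr with y
        rw [restrict_Ioc_eq_restrict_Icc]
        exact edist_le_lintegral_enorm_fderiv_lineMap hg x y
    _ = ∫⁻ t in Ioc (0 : ℝ) 1, ∫⁻ y in s, W (lineMap x y t) * edist x y ∂μ :=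
        lintegral_lintegral_swap (((hWc.comp hline).measurable.mul (by fun_prop)).aemeasurable)
    _ ≤ ∫⁻ t in Ioc (0 : ℝ) 1, ∫⁻ z in s,
          W z * edist z x * (Ici (dist z x / d)).indicator ψ t ∂μ :=
        setLIntegral_mono' measurableSet_Ioc fun t ht ↦
          setLIntegral_comp_lineMap_mul_edist_le μ hWm hs hsx hd hsd ht
    _ = ∫⁻ z in s, (∫⁻ t in Ioc (0 : ℝ) 1,
          W z * edist z x * (Ici (dist z x / d)).indicator ψ t) ∂μ :=
        lintegral_lintegral_swap (((by fun_prop : Measurable fun p : ℝ × E ↦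
          W p.2 * edist p.2 x).mul hψ_ind).aemeasurable)
    _ ≤ ∫⁻ z in s, W z * (ENNReal.ofReal (d ^ finrank ℝ E / finrank ℝ E) * rieszKernel x z) ∂μ := by
        gcongr with z
        rw [lintegral_const_mul _ (hψ.indicator measurableSet_Ici), mul_assoc]
        refine mul_le_mul_right (le_trans ?_ (edist_mul_setLIntegral_Ici_rpow_le x z hd)) _
        rw [← lintegral_indicator measurableSet_Ici]
        exact mul_le_mul_right (setLIntegral_le_lintegral _ _) _
    _ = _ := by
        simp only [mul_left_comm (W _)]
        exact lintegral_const_mul _ (by fun_prop)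

end RieszPotential

section RieszPoincare

open Module (finrank)

variable {E F : Type*} [NormedAddCommGroup E] [NormedSpace ℝ E] [FiniteDimensional ℝ E]
  [MeasurableSpace E] [BorelSpace E] [Nontrivial E] (μ : Measure E) [μ.IsAddHaarMeasure]
  [NormedAddCommGroup F] [NormedSpace ℝ F]

/-- A Poincaré inequality in potential form on the closed balls contained in `S`: the oscillation
of `h` seen from almost every point is controlled by the Riesz potential of `w` at that point. It
plays the role of `‖Dh‖ ≤ w` and survives limits in which the derivatives converge only in `L¹`. -/
def HasRieszPoincareOn {E F : Type*} [NormedAddCommGroup E] [NormedSpace ℝ E] [MeasurableSpace E]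
    [PseudoEMetricSpace F] (μ : Measure E) (h : E → F) (w : E → ℝ≥0∞) (C : ℝ≥0∞) (S : Set E) :
    Prop :=
  ∀ c r, 0 < r → closedBall c r ⊆ S → ∀ᵐ x ∂μ.restrict (closedBall c r),
    ∫⁻ y in closedBall c r, edist (h x) (h y) ∂μ ≤
      C * ENNReal.ofReal r ^ finrank ℝ E * ∫⁻ z in closedBall c r, w z * rieszKernel x z ∂μ

theorem hasRieszPoincareOn_of_contDiff {g : E → F} (hg : ContDiff ℝ 1 g) (S : Set E) :
    HasRieszPoincareOn μ g (fun x ↦ ‖fderiv ℝ g x‖ₑ)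
      (ENNReal.ofReal (2 ^ finrank ℝ E / finrank ℝ E)) S := by
  intro c r hr _
  filter_upwards [ae_restrict_mem measurableSet_closedBall] with x hx
  have hsub : closedBall c r ⊆ closedBall x (2 * r) :=
    closedBall_subset_closedBall' (by rw [two_mul, dist_comm]; exact add_le_add_right hx r)
  convert setLIntegral_edist_le_rieszPotential μ hg measurableSet_closedBall
    ((convex_closedBall c r).starConvex hx) (by positivity) hsub using 2
  rw [← ENNReal.ofReal_pow hr.le, ← ENNReal.ofReal_mul (by positivity)]
  congr 1
  ring

theorem setLIntegral_closedBall_rieszPotential_le {e : E → ℝ≥0∞} (he : Measurable e) (c : E)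
    (r : ℝ) :
    ∫⁻ x in closedBall c r, (∫⁻ z in closedBall c r, e z * rieszKernel x z ∂μ) ∂μ ≤
      finrank ℝ E * μ (ball 0 1) * ENNReal.ofReal (2 * r) * ∫⁻ z in closedBall c r, e z ∂μ := by
  have hker : Measurable fun p : E × E ↦ rieszKernel p.1 p.2 := by
    unfold rieszKernel
    fun_prop
  rw [lintegral_lintegral_swap (((he.comp measurable_snd).mul hker).aemeasurable),
    ← lintegral_const_mul _ he]
  refine setLIntegral_mono' measurableSet_closedBall fun z hz ↦ ?_
  simp only [rieszKernel_comm _ z]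
  rw [lintegral_const_mul _ (measurable_rieszKernel z), mul_comm]
  gcongr
  exact setLIntegral_closedBall_rieszKernel_le μ hz

theorem ae_liminf_rieszPotential_eq_zero {e : ℕ → E → ℝ≥0∞} (he : ∀ k, Measurable (e k)) {c : E}
    {r : ℝ} (hlim : Tendsto (fun k ↦ ∫⁻ z in closedBall c r, e k z ∂μ) atTop (𝓝 0)) :
    ∀ᵐ x ∂μ.restrict (closedBall c r),
      liminf (fun k ↦ ∫⁻ z in closedBall c r, e k z * rieszKernel x z ∂μ) atTop = 0 := by
  have hmeas : ∀ k, Measurable fun x ↦ ∫⁻ z in closedBall c r, e k z * rieszKernel x z ∂μ :=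
    fun k ↦ Measurable.lintegral_prod_right' (f := fun p : E × E ↦ e k p.2 * rieszKernel p.1 p.2)
      (((he k).comp measurable_snd).mul (by unfold rieszKernel; fun_prop))
  have hbound : Tendsto (fun k ↦ finrank ℝ E * μ (ball 0 1) * ENNReal.ofReal (2 * r) *
      ∫⁻ z in closedBall c r, e k z ∂μ) atTop (𝓝 0) := by
    simpa only [mul_zero] using ENNReal.Tendsto.const_mul hlim
      (Or.inr (by have := measure_ball_lt_top (μ := μ) (x := (0 : E)) (r := 1); finiteness))
  have hzero : ∫⁻ x in closedBall c r,
      liminf (fun k ↦ ∫⁻ z in closedBall c r, e k z * rieszKernel x z ∂μ) atTop ∂μ = 0 := by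
    refine le_antisymm ((lintegral_liminf_le hmeas).trans ?_) zero_le
    rw [← hbound.liminf_eq]
    exact liminf_le_liminf
      (Eventually.of_forall fun k ↦ setLIntegral_closedBall_rieszPotential_le μ (he k) c r)
  exact (lintegral_eq_zero_iff (Measurable.liminf hmeas)).1 hzero

variable {μ}

omit [NormedSpace ℝ F] in
theorem HasRieszPoincareOn.of_tendsto {h : E → F} {hk : ℕ → E → F} {w : E → ℝ≥0∞}
    {wk ek : ℕ → E → ℝ≥0∞} {C c : ℝ≥0∞} (hC : C ≠ ⊤) (hc : c ≠ ⊤) {S : Set E}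
    (hP : ∀ k, HasRieszPoincareOn μ (hk k) (wk k) C S) (hkc : ∀ k, Continuous (hk k))
    (hlim : ∀ x ∈ S, Tendsto (fun k ↦ hk k x) atTop (𝓝 (h x)))
    (hw : ∀ k, ∀ x ∈ S, wk k x ≤ c * w x + ek k x) (hek : ∀ k, Measurable (ek k))
    (he : Tendsto (fun k ↦ ∫⁻ x in S, ek k x ∂μ) atTop (𝓝 0)) :
    HasRieszPoincareOn μ h w (C * c) S := by
  intro a r hr hS
  set A : ℝ≥0∞ := C * ENNReal.ofReal r ^ finrank ℝ E
  have hA : A ≠ ⊤ := by finiteness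
  have he' : Tendsto (fun k ↦ ∫⁻ x in closedBall a r, ek k x ∂μ) atTop (𝓝 0) :=
    tendsto_of_tendsto_of_tendsto_of_le_of_le tendsto_const_nhds he (fun _ ↦ zero_le)
      fun _ ↦ lintegral_mono_set hS
  filter_upwards [ae_all_iff.2 fun k ↦ hP k a r hr hS, ae_liminf_rieszPotential_eq_zero μ hek he',
    ae_restrict_mem measurableSet_closedBall] with x hPx he0 hx
  set W : ℝ≥0∞ := ∫⁻ z in closedBall a r, w z * rieszKernel x z ∂μ
  set e : ℕ → ℝ≥0∞ := fun k ↦ ∫⁻ z in closedBall a r, ek k z * rieszKernel x z ∂μ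
  have hstep : ∀ k, ∫⁻ z in closedBall a r, wk k z * rieszKernel x z ∂μ ≤ c * W + e k := fun k ↦ by
    have hmeas : Measurable fun z ↦ ek k z * rieszKernel x z := (hek k).mul (by fun_prop)
    rw [← lintegral_const_mul' _ _ hc, ← lintegral_add_right _ hmeas]
    refine setLIntegral_mono' measurableSet_closedBall fun z hz ↦ ?_
    rw [← mul_assoc, ← add_mul]
    exact mul_le_mul_left (hw k z (hS hz)) _
  have hmap := Monotone.map_liminf_of_continuousAt (F := atTop) (f := fun t ↦ A * (c * W + t))
    (fun s t hst ↦ by dsimp only; gcongr) e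
    ((ENNReal.continuous_const_mul hA).comp (continuous_const_add _)).continuousAt
  calc ∫⁻ y in closedBall a r, edist (h x) (h y) ∂μ
      = ∫⁻ y in closedBall a r, liminf (fun k ↦ edist (hk k x) (hk k y)) atTop ∂μ :=
        setLIntegral_congr_fun measurableSet_closedBall fun y hy ↦
          (((hlim x (hS hx)).edist (hlim y (hS hy))).liminf_eq).symm
    _ ≤ liminf (fun k ↦ ∫⁻ y in closedBall a r, edist (hk k x) (hk k y) ∂μ) atTop :=
        lintegral_liminf_le fun k ↦ (continuous_const.edist (hkc k)).measurable
    _ ≤ liminf (fun k ↦ A * (c * W + e k)) atTop :=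
        liminf_le_liminf <| Eventually.of_forall fun k ↦
          (hPx k).trans (mul_le_mul_right (hstep k) _)
    _ = A * (c * W + liminf e atTop) := hmap.symm
    _ = C * c * ENNReal.ofReal r ^ finrank ℝ E * W := by
        rw [he0, add_zero]
        ring

end RieszPoincare

section Calderon

open Module (finrank)

/-- The integral `∫_{t₀}^∞ (t / Φ t) ^ q dt` of Calderón's condition. -/
noncomputable def calderonIntegral (Φ : ℝ → ℝ≥0∞) (q t₀ : ℝ) : ℝ≥0∞ :=
  ∫⁻ t in Ioi t₀, (ENNReal.ofReal t / Φ t) ^ q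

theorem ofReal_le_add_volume_add_mul {Φ : ℝ → ℝ≥0∞} (hΦ : Monotone Φ) (t₀ : ℝ) (s : ℝ≥0∞)
    (v : ℝ) :
    ENNReal.ofReal v ≤ 2 * ENNReal.ofReal t₀ +
      2 * volume {t | t₀ < t ∧ s * Φ t < 2 * ENNReal.ofReal t} + s * Φ v := by
  have htwo : ∀ a : ℝ, ENNReal.ofReal (2 * a) = 2 * ENNReal.ofReal a := fun a ↦ by
    rw [ENNReal.ofReal_mul zero_le_two, ENNReal.ofReal_ofNat]
  by_cases hv : v ≤ 2 * t₀
  · calc ENNReal.ofReal v ≤ 2 * ENNReal.ofReal t₀ := htwo t₀ ▸ ENNReal.ofReal_le_ofReal hv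
      _ ≤ _ := by rw [add_assoc]; exact le_self_add
  by_cases hs : ENNReal.ofReal v ≤ s * Φ v
  · exact hs.trans le_add_self
  push Not at hv hs
  have hsub : Ioo (v / 2) v ⊆ {t | t₀ < t ∧ s * Φ t < 2 * ENNReal.ofReal t} := fun t ht ↦
    ⟨by linarith [ht.1], calc
      s * Φ t ≤ s * Φ v := by gcongr; exact hΦ ht.2.le
      _ < ENNReal.ofReal v := hs
      _ ≤ 2 * ENNReal.ofReal t := htwo t ▸ ENNReal.ofReal_le_ofReal (by linarith [ht.1])⟩
  calc ENNReal.ofReal v = 2 * volume (Ioo (v / 2) v) := by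
        rw [Real.volume_Ioo, ← htwo]
        congr 1
        ring
    _ ≤ 2 * volume {t | t₀ < t ∧ s * Φ t < 2 * ENNReal.ofReal t} := by gcongr
    _ ≤ _ := le_add_right le_add_self

theorem le_mul_rpow_of_div_pow_mul_lt {m : ℕ} (hm : 2 ≤ m) {a e T Φ : ℝ≥0∞} (ha0 : a ≠ 0)
    (ha : a ≠ ⊤) (hT0 : T ≠ 0) (hT : T ≠ ⊤) (h : (e / a) ^ (m - 1) * Φ < T) :
    e ≤ a * (T / Φ) ^ ((m : ℝ) - 1)⁻¹ := by
  have hm1 : ((m - 1 : ℕ) : ℝ) = m - 1 := by push_cast [Nat.one_le_of_lt hm]; ring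
  have hpos : (0 : ℝ) < m - 1 := by
    rw [← hm1]
    exact_mod_cast Nat.sub_pos_of_lt hm
  rw [← ENNReal.div_le_iff' ha0 ha, ENNReal.le_rpow_inv_iff hpos, ← hm1, ENNReal.rpow_natCast]
  exact (ENNReal.le_div_iff_mul_le (Or.inr hT0) (Or.inr hT)).2 h.le

variable {E F : Type*} [NormedAddCommGroup E] [NormedSpace ℝ E] [FiniteDimensional ℝ E]
  [MeasurableSpace E] [BorelSpace E] [Nontrivial E] (μ : Measure E) [μ.IsAddHaarMeasure]

theorem setLIntegral_edist_le_rieszKernel_le (x : E) (ρ : ℝ≥0∞) :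
    ∫⁻ z in {z | edist z x ≤ ρ}, rieszKernel x z ∂μ ≤ finrank ℝ E * μ (ball 0 1) * ρ := by
  rcases eq_or_ne ρ ⊤ with rfl | hρ
  · have h0 : (finrank ℝ E : ℝ≥0∞) * μ (ball 0 1) ≠ 0 :=
      mul_ne_zero (mod_cast (Module.finrank_pos (R := ℝ) (M := E)).ne')
        (measure_ball_pos μ 0 one_pos).ne'
    rw [ENNReal.mul_top h0]
    exact le_top
  · lift ρ to ℝ≥0 using hρ
    rw [show {z | edist z x ≤ ρ} = closedBall x ρ from Metric.closedEBall_coe,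
      setLIntegral_closedBall_rieszKernel, ENNReal.ofReal_coe_nnreal]

theorem lintegral_measure_prodMk_preimage_mul {α β : Type*} [MeasurableSpace α]
    [MeasurableSpace β] {ν : Measure α} {ν' : Measure β} [SFinite ν] [SFinite ν'] {V : Set (α × β)}
    (hV : MeasurableSet V) {k : α → ℝ≥0∞} (hk : Measurable k) :
    ∫⁻ z, ν' (Prod.mk z ⁻¹' V) * k z ∂ν = ∫⁻ t, ∫⁻ z in (·, t) ⁻¹' V, k z ∂ν ∂ν' := by
  have hind : Measurable (V.indicator (1 : α × β → ℝ≥0∞)) := measurable_one.indicator hV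
  calc _ = ∫⁻ z, ∫⁻ t, V.indicator 1 (z, t) * k z ∂ν' ∂ν := by
        refine lintegral_congr fun z ↦ ?_
        have hz : Measurable fun t ↦ V.indicator (1 : α × β → ℝ≥0∞) (z, t) := by fun_prop
        rw [lintegral_mul_const _ hz]
        congr 1
        exact (lintegral_indicator_one (hV.preimage measurable_prodMk_left)).symm
    _ = ∫⁻ t, ∫⁻ z, V.indicator 1 (z, t) * k z ∂ν ∂ν' :=
        lintegral_lintegral_swap (hind.mul (by fun_prop)).aemeasurable
    _ = _ := by
        refine lintegral_congr fun t ↦ ?_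
        rw [← lintegral_indicator (hV.preimage measurable_prodMk_right)]
        refine lintegral_congr fun z ↦ ?_
        by_cases hz : (z, t) ∈ V <;> simp [indicator, hz]

/-- The layers `{z | |z - x| ≤ a (2 t / Φ t) ^ (1 / (m - 1))}` turn the Riesz potential of the
volume term in `ofReal_le_add_volume_add_mul` into Calderón's integral. -/
theorem lintegral_volume_mul_rieszKernel_le {Φ : ℝ → ℝ≥0∞} (hΦ : Monotone Φ) {t₀ : ℝ}
    (ht₀ : 0 ≤ t₀) (hE : 2 ≤ finrank ℝ E) {a : ℝ≥0∞} (ha0 : a ≠ 0) (ha : a ≠ ⊤) (x : E) :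
    ∫⁻ z, volume {t | t₀ < t ∧ (edist z x / a) ^ (finrank ℝ E - 1) * Φ t < 2 * ENNReal.ofReal t} *
        rieszKernel x z ∂μ ≤
      finrank ℝ E * μ (ball 0 1) * (a * (2 ^ ((finrank ℝ E : ℝ) - 1)⁻¹ *
        calderonIntegral Φ ((finrank ℝ E : ℝ) - 1)⁻¹ t₀)) := by
  set q : ℝ := ((finrank ℝ E : ℝ) - 1)⁻¹
  have hq : 0 ≤ q := inv_nonneg.2 (sub_nonneg.2 (mod_cast Nat.one_le_of_lt hE))
  have hΦm := hΦ.measurable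
  set V : Set (E × ℝ) :=
    {p | t₀ < p.2 ∧ (edist p.1 x / a) ^ (finrank ℝ E - 1) * Φ p.2 < 2 * ENNReal.ofReal p.2}
  have hV : MeasurableSet V :=
    (measurableSet_lt measurable_const measurable_snd).inter (measurableSet_lt
      (f := fun p : E × ℝ ↦ (edist p.1 x / a) ^ (finrank ℝ E - 1) * Φ p.2) (by fun_prop)
      (g := fun p ↦ 2 * ENNReal.ofReal p.2) (by fun_prop))
  have hlayer : ∀ t, ∫⁻ z in (·, t) ⁻¹' V, rieszKernel x z ∂μ ≤
      (Ioi t₀).indicator (fun t ↦ finrank ℝ E * μ (ball 0 1) *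
        (a * (2 ^ q * (ENNReal.ofReal t / Φ t) ^ q))) t := fun t ↦ by
    by_cases ht : t₀ < t
    · rw [indicator_of_mem (mem_Ioi.2 ht)]
      refine (lintegral_mono_set fun z hz ↦ ?_).trans (setLIntegral_edist_le_rieszKernel_le μ x _)
      have hT0 : 2 * ENNReal.ofReal t ≠ 0 :=
        mul_ne_zero two_ne_zero (ENNReal.ofReal_pos.2 (ht₀.trans_lt ht)).ne'
      have hle := le_mul_rpow_of_div_pow_mul_lt hE ha0 ha hT0 (by finiteness) hz.2
      rwa [mul_div_assoc, ENNReal.mul_rpow_of_nonneg _ _ hq] at hle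
    · have hempty : (·, t) ⁻¹' V = ∅ := eq_empty_of_forall_notMem fun z hz ↦ ht hz.1
      rw [hempty, setLIntegral_empty]
      exact zero_le
  calc _ = ∫⁻ t, ∫⁻ z in (·, t) ⁻¹' V, rieszKernel x z ∂μ :=
        lintegral_measure_prodMk_preimage_mul hV (measurable_rieszKernel x)
    _ ≤ ∫⁻ t in Ioi t₀, finrank ℝ E * μ (ball 0 1) *
          (a * (2 ^ q * (ENNReal.ofReal t / Φ t) ^ q)) := by
        rw [← lintegral_indicator measurableSet_Ioi]
        exact lintegral_mono hlayer
    _ = _ := by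
        rw [lintegral_const_mul _ (by fun_prop), lintegral_const_mul _ (by fun_prop),
          lintegral_const_mul _ (by fun_prop), calderonIntegral]

omit [FiniteDimensional ℝ E] [MeasurableSpace E] [BorelSpace E] [Nontrivial E] in
theorem div_pow_mul_rieszKernel_le (x z : E) (a : ℝ≥0∞) :
    (edist z x / a) ^ (finrank ℝ E - 1) * rieszKernel x z ≤ (a ^ (finrank ℝ E - 1))⁻¹ := by
  rw [rieszKernel, div_eq_mul_inv, mul_pow, ENNReal.inv_pow (a := a), mul_right_comm]
  exact mul_le_of_le_one_left zero_le (ENNReal.mul_inv_le_one _)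

theorem setLIntegral_ofReal_mul_rieszKernel_le {Φ : ℝ → ℝ≥0∞} (hΦ : Monotone Φ) {t₀ : ℝ}
    (ht₀ : 0 ≤ t₀) (hE : 2 ≤ finrank ℝ E) {v : E → ℝ} (hv : Measurable v) {c x : E} {r : ℝ}
    (hx : x ∈ closedBall c r) {a : ℝ≥0∞} (ha0 : a ≠ 0) (ha : a ≠ ⊤) (hra : ENNReal.ofReal r ≤ a)
    (hΦa : ∫⁻ z in closedBall c r, Φ (v z) ∂μ ≤ a ^ finrank ℝ E) :
    ∫⁻ z in closedBall c r, ENNReal.ofReal (v z) * rieszKernel x z ∂μ ≤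
      (finrank ℝ E * μ (ball 0 1) * (4 * ENNReal.ofReal t₀ + 2 * (2 ^ ((finrank ℝ E : ℝ) - 1)⁻¹ *
        calderonIntegral Φ ((finrank ℝ E : ℝ) - 1)⁻¹ t₀)) + 1) * a := by
  set k := rieszKernel x
  have hk : Measurable k := measurable_rieszKernel x
  set s : E → ℝ≥0∞ := fun z ↦ (edist z x / a) ^ (finrank ℝ E - 1)
  set V : E → ℝ≥0∞ := fun z ↦ volume {t | t₀ < t ∧ s z * Φ t < 2 * ENNReal.ofReal t}
  have hΦv : Measurable fun z ↦ Φ (v z) := hΦ.measurable.comp hv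
  have hpoint : ∀ z, ENNReal.ofReal (v z) * k z ≤
      2 * ENNReal.ofReal t₀ * k z + 2 * (V z * k z) + (a ^ (finrank ℝ E - 1))⁻¹ * Φ (v z) :=
    fun z ↦ calc
      _ ≤ (2 * ENNReal.ofReal t₀ + 2 * V z + s z * Φ (v z)) * k z :=
        mul_le_mul_left (ofReal_le_add_volume_add_mul hΦ t₀ (s z) (v z)) _
      _ = 2 * ENNReal.ofReal t₀ * k z + 2 * (V z * k z) + s z * k z * Φ (v z) := by ring
      _ ≤ _ := by gcongr; exact div_pow_mul_rieszKernel_le x z a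
  have hk_int : ∫⁻ z in closedBall c r, k z ∂μ ≤ finrank ℝ E * μ (ball 0 1) * (2 * a) :=
    (setLIntegral_closedBall_rieszKernel_le μ hx).trans <| by
      rw [ENNReal.ofReal_mul zero_le_two, ENNReal.ofReal_ofNat]
      gcongr
  have hV_int := (setLIntegral_le_lintegral (closedBall c r) _).trans
    (lintegral_volume_mul_rieszKernel_le μ hΦ ht₀ hE ha0 ha x)
  have hpow : (a ^ (finrank ℝ E - 1))⁻¹ * a ^ finrank ℝ E = a := by
    rw [← Nat.sub_add_cancel (Nat.one_le_of_lt hE), pow_succ, Nat.add_sub_cancel]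
    exact ENNReal.inv_mul_cancel_left (pow_ne_zero _ ha0) (by finiteness)
  calc _ ≤ ∫⁻ z in closedBall c r, (2 * ENNReal.ofReal t₀ * k z + 2 * (V z * k z) +
          (a ^ (finrank ℝ E - 1))⁻¹ * Φ (v z)) ∂μ := lintegral_mono hpoint
    _ = 2 * ENNReal.ofReal t₀ * ∫⁻ z in closedBall c r, k z ∂μ +
          2 * ∫⁻ z in closedBall c r, V z * k z ∂μ +
          (a ^ (finrank ℝ E - 1))⁻¹ * ∫⁻ z in closedBall c r, Φ (v z) ∂μ := by
        rw [lintegral_add_right _ (hΦv.const_mul _), lintegral_add_left (hk.const_mul _),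
          lintegral_const_mul _ hk, lintegral_const_mul' _ _ (by finiteness),
          lintegral_const_mul _ hΦv]
    _ ≤ 2 * ENNReal.ofReal t₀ * (finrank ℝ E * μ (ball 0 1) * (2 * a)) +
          2 * (finrank ℝ E * μ (ball 0 1) * (a * (2 ^ ((finrank ℝ E : ℝ) - 1)⁻¹ *
            calderonIntegral Φ ((finrank ℝ E : ℝ) - 1)⁻¹ t₀))) +
          (a ^ (finrank ℝ E - 1))⁻¹ * a ^ finrank ℝ E :=
        add_le_add (add_le_add (mul_le_mul_right hk_int _) (mul_le_mul_right hV_int _))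
          (mul_le_mul_right hΦa _)
    _ = _ := by rw [hpow]; ring

end Calderon

section Lusin

open Module (finrank)

theorem edist_mul_measure_le {X Y : Type*} [MeasurableSpace X] [TopologicalSpace X]
    [OpensMeasurableSpace X] [PseudoEMetricSpace Y] (μ : Measure X) {h : X → Y} {s : Set X}
    (hs : MeasurableSet s) (hh : ContinuousOn h s) (x y : X) :
    edist (h x) (h y) * μ s ≤
      ∫⁻ u in s, edist (h x) (h u) ∂μ + ∫⁻ u in s, edist (h y) (h u) ∂μ := by
  have hmeas : AEMeasurable (fun u ↦ edist (h x) (h u)) (μ.restrict s) :=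
    (continuous_const.edist continuous_id).comp_continuousOn hh |>.aemeasurable hs
  rw [← setLIntegral_const, ← lintegral_add_left' hmeas]
  exact lintegral_mono fun u ↦ edist_triangle_right _ _ _

variable {E F : Type*} [NormedAddCommGroup E] [NormedSpace ℝ E] [FiniteDimensional ℝ E]
  [MeasurableSpace E] [BorelSpace E] {μ : Measure E} [μ.IsAddHaarMeasure]
  [PseudoEMetricSpace F]

omit [FiniteDimensional ℝ E] in
theorem ediam_image_closedBall_le_of_ae {h : E → F} {c : E} {r : ℝ} (hr : r ≠ 0)
    (hh : ContinuousOn h (closedBall c r)) {P : E → Prop}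
    (hP : ∀ᵐ x ∂μ.restrict (closedBall c r), P x) {K : ℝ≥0∞}
    (hK : ∀ x ∈ closedBall c r, P x → ∀ y ∈ closedBall c r, P y → edist (h x) (h y) ≤ K) :
    ediam (h '' closedBall c r) ≤ K := by
  have hdense : Dense {x | x ∈ closedBall c r → P x} :=
    Measure.dense_of_ae ((ae_restrict_iff' measurableSet_closedBall).1 hP)
  set G := ball c r ∩ {x | x ∈ closedBall c r → P x}
  have hG : closedBall c r ⊆ closure G := closure_ball c hr ▸
    closure_minimal (hdense.open_subset_closure_inter isOpen_ball) isClosed_closure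
  have hGc : closure G ⊆ closedBall c r :=
    closure_minimal (inter_subset_left.trans ball_subset_closedBall) isClosed_closedBall
  calc ediam (h '' closedBall c r) ≤ ediam (closure (h '' G)) :=
        ediam_mono ((image_mono hG).trans (hh.mono hGc).image_closure)
    _ = ediam (h '' G) := ediam_closure _
    _ ≤ K := by
        refine ediam_le ?_
        rintro _ ⟨x, hx, rfl⟩ _ ⟨y, hy, rfl⟩
        have hx' := ball_subset_closedBall hx.1
        have hy' := ball_subset_closedBall hy.1
        exact hK x hx' (hx.2 hx') y hy' (hy.2 hy')

variable [Nontrivial E]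

omit [Nontrivial E] in
theorem HasRieszPoincareOn.ediam_image_closedBall_le {h : E → F} {w : E → ℝ≥0∞} {C : ℝ≥0∞}
    {S : Set E} (hP : HasRieszPoincareOn μ h w C S) (hh : ContinuousOn h S) {c : E} {r : ℝ}
    (hr : 0 < r) (hS : closedBall c r ⊆ S) {T : ℝ≥0∞}
    (hT : ∀ x ∈ closedBall c r, ∫⁻ z in closedBall c r, w z * rieszKernel x z ∂μ ≤ T) :
    ediam (h '' closedBall c r) ≤ (μ (ball 0 1))⁻¹ * (2 * C * T) := by
  set m := finrank ℝ E
  set κ := μ (ball 0 1)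
  set r' := ENNReal.ofReal r
  have : r' ≠ 0 := (ENNReal.ofReal_pos.2 hr).ne'
  have hκ0 : κ ≠ 0 := (measure_ball_pos μ 0 one_pos).ne'
  have hκ : κ ≠ ⊤ := measure_ball_lt_top.ne
  refine ediam_image_closedBall_le_of_ae hr.ne' (hh.mono hS) (hP c r hr hS)
    fun x hx hPx y hy hPy ↦ ?_
  have hxy : edist (h x) (h y) * (r' ^ m * κ) ≤ κ⁻¹ * (2 * C * T) * (r' ^ m * κ) := calc
    _ = edist (h x) (h y) * μ (closedBall c r) := by
      rw [Measure.addHaar_closedBall μ c hr.le, ENNReal.ofReal_pow hr.le]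
    _ ≤ C * r' ^ m * T + C * r' ^ m * T :=
      (edist_mul_measure_le μ measurableSet_closedBall (hh.mono hS) x y).trans
        (add_le_add (hPx.trans (mul_le_mul_right (hT x hx) _))
          (hPy.trans (mul_le_mul_right (hT y hy) _)))
    _ = κ⁻¹ * κ * (2 * C * T * r' ^ m) := by
      rw [ENNReal.inv_mul_cancel hκ0 hκ]
      ring
    _ = _ := by ring
  exact (ENNReal.mul_le_mul_iff_left (by positivity) (by finiteness)).1 hxy

theorem HasRieszPoincareOn.exists_ediam_pow_le {h : E → F} {v : E → ℝ} {C : ℝ≥0∞} {S : Set E}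
    (hP : HasRieszPoincareOn μ h (fun x ↦ ENNReal.ofReal (v x)) C S) (hC : C ≠ ⊤)
    (hh : ContinuousOn h S) (hE : 2 ≤ finrank ℝ E) (hv : Measurable v) {Φ : ℝ → ℝ≥0∞}
    (hΦ : Monotone Φ) {t₀ : ℝ} (ht₀ : 0 ≤ t₀)
    (hJ : calderonIntegral Φ ((finrank ℝ E : ℝ) - 1)⁻¹ t₀ ≠ ⊤)
    (hfin : ∫⁻ x in S, Φ (v x) ∂μ ≠ ⊤) :
    ∃ K ≠ ⊤, ∀ c r, 0 < r → closedBall c r ⊆ S → ediam (h '' closedBall c r) ^ finrank ℝ E ≤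
      K * (∫⁻ x in closedBall c r, Φ (v x) ∂μ + ENNReal.ofReal r ^ finrank ℝ E) := by
  set m := finrank ℝ E
  set κ := μ (ball 0 1)
  have hκ0 : κ ≠ 0 := (measure_ball_pos μ 0 one_pos).ne'
  have hκ : κ ≠ ⊤ := measure_ball_lt_top.ne
  set L : ℝ≥0∞ := m * κ * (4 * ENNReal.ofReal t₀ +
    2 * (2 ^ ((m : ℝ) - 1)⁻¹ * calderonIntegral Φ ((m : ℝ) - 1)⁻¹ t₀)) + 1
  have hL : L ≠ ⊤ := by
    have : (2 : ℝ≥0∞) ^ ((m : ℝ) - 1)⁻¹ ≠ ⊤ := ENNReal.rpow_ne_top_of_ne_zero (by simp) (by simp)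
    finiteness
  refine ⟨(κ⁻¹ * (2 * C * L)) ^ m, by finiteness, fun c r hr hS ↦ ?_⟩
  set r' := ENNReal.ofReal r
  have hr' : r' ≠ 0 := (ENNReal.ofReal_pos.2 hr).ne'
  have hm : (0 : ℝ) < m := by positivity
  set A := ∫⁻ x in closedBall c r, Φ (v x) ∂μ + r' ^ m
  have hA : A ≠ ⊤ :=
    ENNReal.add_ne_top.2 ⟨ne_top_of_le_ne_top hfin (lintegral_mono_set hS), by finiteness⟩
  set a := A ^ (m : ℝ)⁻¹
  have ham : a ^ m = A := ENNReal.rpow_inv_natCast_pow (by omega) A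
  have hra : r' ≤ a := (ENNReal.le_rpow_inv_iff hm).2 (by
    rw [ENNReal.rpow_natCast]
    exact le_add_self)
  have ha0 : a ≠ 0 := (hr'.bot_lt.trans_le hra).ne'
  have ha : a ≠ ⊤ := ENNReal.rpow_ne_top_of_nonneg (by positivity) hA
  have hpot : ∀ x ∈ closedBall c r,
      ∫⁻ z in closedBall c r, ENNReal.ofReal (v z) * rieszKernel x z ∂μ ≤ L * a := fun x hx ↦
    setLIntegral_ofReal_mul_rieszKernel_le μ hΦ ht₀ hE hv hx ha0 ha hra (ham ▸ le_self_add)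
  have hdiam : ediam (h '' closedBall c r) ≤ κ⁻¹ * (2 * C * (L * a)) :=
    hP.ediam_image_closedBall_le hh hr hS hpot
  calc _ ≤ (κ⁻¹ * (2 * C * (L * a))) ^ m := by gcongr
    _ = (κ⁻¹ * (2 * C * L)) ^ m * a ^ m := by rw [← mul_pow]; ring
    _ = _ := by rw [ham]

end Lusin

section BallCovering

universe u v

variable {X : Type u} {Y : Type v} [MetricSpace X] [EMetricSpace Y] {h : X → Y}

theorem exists_radius_ediam_image_closedBall_le {V : Set X} (hV : IsOpen V)
    (hh : ContinuousOn h V) {η : ℝ≥0∞} (hη : η ≠ 0) {x : X} (hx : x ∈ V) :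
    ∃ r : ℝ, 0 < r ∧ r ≤ 1 ∧ closedBall x r ⊆ V ∧ ediam (h '' closedBall x r) ≤ η := by
  have hpre : h ⁻¹' closedEBall (h x) (η / 2) ∈ 𝓝 x :=
    hh.continuousAt (hV.mem_nhds hx) (closedEBall_mem_nhds _ (ENNReal.half_pos hη))
  obtain ⟨r, hr, hrs⟩ := nhds_basis_closedBall.mem_iff.1 (inter_mem (hV.mem_nhds hx) hpre)
  have hsub := (closedBall_subset_closedBall (x := x) (min_le_left r 1)).trans hrs
  refine ⟨min r 1, lt_min hr one_pos, min_le_right _ _, hsub.trans inter_subset_left, ?_⟩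
  refine ediam_le ?_
  rintro _ ⟨y, hy, rfl⟩ _ ⟨z, hz, rfl⟩
  calc edist (h y) (h z) ≤ edist (h y) (h x) + edist (h z) (h x) := edist_triangle_right _ _ _
    _ ≤ η / 2 + η / 2 := add_le_add (hsub hy).2 (hsub hz).2
    _ = η := ENNReal.add_halves η

variable [SecondCountableTopology X] [MeasurableSpace X] [BorelSpace X] {ν : Measure X} {d : ℝ}

theorem exists_cover_tsum_ediam_le {M : ℕ} {τ : ℝ} (hτ : 1 < τ)
    (hM : IsEmpty (Besicovitch.SatelliteConfig X M τ)) {V N : Set X} (hV : IsOpen V)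
    (hh : ContinuousOn h V) (hN : N ⊆ V)
    (hd : ∀ c r, 0 < r → closedBall c r ⊆ V → ediam (h '' closedBall c r) ^ d ≤ ν (closedBall c r))
    {η : ℝ≥0∞} (hη : η ≠ 0) :
    ∃ (ι : Type u) (_ : Countable ι) (t : ι → Set Y), (∀ i, ediam (t i) ≤ η) ∧
      h '' N ⊆ ⋃ i, t i ∧ ∑' i, ediam (t i) ^ d ≤ M * ν V := by
  choose r hr0 hr1 hrV hrη using fun x : N ↦
    exists_radius_ediam_image_closedBall_le hV hh hη (hN x.2)
  let q : Besicovitch.BallPackage N X := ⟨fun x ↦ x, r, hr0, 1, hr1⟩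
  obtain ⟨s, hsd, hsc⟩ := Besicovitch.exist_disjoint_covering_families hτ hM q
  have hcount : ∀ i, Countable (s i) := fun i ↦
    ((hsd i).countable_of_nonempty_interior fun j _ ↦
      ⟨q.c j, ball_subset_interior_closedBall (mem_ball_self (hr0 j))⟩).to_subtype
  refine ⟨Σ i : Fin M, s i, inferInstance, fun p ↦ h '' closedBall (p.2 : N) (r p.2),
    fun p ↦ hrη _, ?_, ?_⟩
  · rintro _ ⟨x, hx, rfl⟩
    have hcov := hsc ⟨⟨x, hx⟩, rfl⟩
    simp only [mem_iUnion] at hcov ⊢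
    obtain ⟨i, j, hj, hxj⟩ := hcov
    exact ⟨⟨i, ⟨j, hj⟩⟩, mem_image_of_mem _ (ball_subset_closedBall hxj)⟩
  · have hfamily : ∀ i, ∑' j : s i, ediam (h '' closedBall (j : N) (r j)) ^ d ≤ ν V := fun i ↦ calc
      _ ≤ ∑' j : s i, ν (closedBall ((j : N) : X) (r j)) :=
        ENNReal.tsum_le_tsum fun j ↦ hd _ _ (hr0 _) (hrV _)
      _ = ν (⋃ j : s i, closedBall ((j : N) : X) (r j)) :=
        (measure_iUnion (fun (a b : s i) hab ↦ hsd i a.2 b.2 (Subtype.coe_injective.ne hab))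
          fun _ ↦ measurableSet_closedBall).symm
      _ ≤ ν V := measure_mono (iUnion_subset fun j ↦ hrV _)
    rw [ENNReal.tsum_sigma fun (i : Fin M) (j : s i) ↦
      ediam (h '' closedBall ((j : N) : X) (r j)) ^ d, tsum_fintype]
    calc _ ≤ ∑ _ : Fin M, ν V := Finset.sum_le_sum fun i _ ↦ hfamily i
      _ = M * ν V := by simp

theorem hausdorffMeasure_image_eq_zero_of_ediam_le [HasBesicovitchCovering X] [IsFiniteMeasure ν]
    [MeasurableSpace Y] [BorelSpace Y] {S : Set X} (hS : IsOpen S) (hh : ContinuousOn h S)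
    (hd : ∀ c r, 0 < r → closedBall c r ⊆ S → ediam (h '' closedBall c r) ^ d ≤ ν (closedBall c r))
    {N : Set X} (hN : N ⊆ S) (hN0 : ν N = 0) : μH[d] (h '' N) = 0 := by
  obtain ⟨M, τ, hτ, hM⟩ := HasBesicovitchCovering.no_satelliteConfig (α := X)
  have hcover : ∀ k : ℕ, ∃ (ι : Type u) (_ : Countable ι) (t : ι → Set Y),
      (∀ i, ediam (t i) ≤ (2⁻¹ : ℝ≥0∞) ^ k) ∧ h '' N ⊆ ⋃ i, t i ∧
        ∑' i, ediam (t i) ^ d ≤ M * (2⁻¹ : ℝ≥0∞) ^ k := fun k ↦ by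
    have hk : (2⁻¹ : ℝ≥0∞) ^ k ≠ 0 := pow_ne_zero _ (by simp)
    obtain ⟨V, hNV, hV, hVk⟩ := N.exists_isOpen_lt_of_lt (μ := ν) _ (by rw [hN0]; exact hk.bot_lt)
    obtain ⟨ι, hι, t, ht, hcov, hsum⟩ := exists_cover_tsum_ediam_le hτ hM (hV.inter hS)
      (hh.mono inter_subset_right) (subset_inter hNV hN)
      (fun c r hr hc ↦ hd c r hr (hc.trans inter_subset_right)) hk
    exact ⟨ι, hι, t, ht, hcov, hsum.trans
      (by gcongr; exact (measure_mono inter_subset_left).trans hVk.le)⟩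
  choose ι hι t ht hcov hsum using hcover
  have hzero : Tendsto (fun k : ℕ ↦ (2⁻¹ : ℝ≥0∞) ^ k) atTop (𝓝 0) :=
    ENNReal.tendsto_pow_atTop_nhds_zero_of_lt_one (by simp)
  have hzeroM : Tendsto (fun k : ℕ ↦ M * (2⁻¹ : ℝ≥0∞) ^ k) atTop (𝓝 0) := by
    simpa only [mul_zero] using ENNReal.Tendsto.const_mul hzero (Or.inr (by finiteness))
  refine le_antisymm ((Measure.hausdorffMeasure_le_liminf_tsum d (h '' N) _ hzero t
    (Eventually.of_forall ht) (Eventually.of_forall hcov)).trans ?_) zero_le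
  rw [← hzeroM.liminf_eq]
  exact liminf_le_liminf (Eventually.of_forall hsum)

end BallCovering

section LusinN

open Module (finrank)

variable {E F : Type*} [NormedAddCommGroup E] [NormedSpace ℝ E] [FiniteDimensional ℝ E]
  [MeasurableSpace E] [BorelSpace E] [Nontrivial E] {μ : Measure E} [μ.IsAddHaarMeasure]
  [EMetricSpace F] [MeasurableSpace F] [BorelSpace F]

theorem HasRieszPoincareOn.hausdorffMeasure_image_eq_zero {h : E → F} {v : E → ℝ} {C : ℝ≥0∞}
    {S : Set E} (hP : HasRieszPoincareOn μ h (fun x ↦ ENNReal.ofReal (v x)) C S) (hC : C ≠ ⊤)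
    (hS : IsOpen S) (hμS : μ S ≠ ⊤) (hh : ContinuousOn h S) (hE : 2 ≤ finrank ℝ E)
    (hv : Measurable v) {Φ : ℝ → ℝ≥0∞} (hΦ : Monotone Φ) {t₀ : ℝ} (ht₀ : 0 ≤ t₀)
    (hJ : calderonIntegral Φ ((finrank ℝ E : ℝ) - 1)⁻¹ t₀ ≠ ⊤)
    (hfin : ∫⁻ x in S, Φ (v x) ∂μ ≠ ⊤) {N : Set E} (hN : N ⊆ S) (hN0 : μ N = 0) :
    μH[finrank ℝ E] (h '' N) = 0 := by
  obtain ⟨K, hK, hdiam⟩ := hP.exists_ediam_pow_le hC hh hE hv hΦ ht₀ hJ hfin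
  set κ := μ (ball 0 1)
  have hκ0 : κ ≠ 0 := (measure_ball_pos μ 0 one_pos).ne'
  have hκ : κ ≠ ⊤ := measure_ball_lt_top.ne
  let g : E → ℝ≥0∞ := fun x ↦ K * (Φ (v x) + κ⁻¹)
  have hΦv : Measurable fun x ↦ Φ (v x) := hΦ.measurable.comp hv
  have hint : ∀ s, ∫⁻ x in s, g x ∂μ = K * (∫⁻ x in s, Φ (v x) ∂μ + κ⁻¹ * μ s) := fun s ↦ by
    rw [lintegral_const_mul _ (hΦv.add_const _), lintegral_add_left hΦv, setLIntegral_const]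
  have : IsFiniteMeasure ((μ.restrict S).withDensity g) :=
    isFiniteMeasure_withDensity (by rw [hint]; finiteness)
  refine hausdorffMeasure_image_eq_zero_of_ediam_le (ν := (μ.restrict S).withDensity g) hS hh
    (fun c r hr hc ↦ ?_) hN
    (withDensity_absolutelyContinuous _ _ (Measure.restrict_le_self.absolutelyContinuous hN0))
  rw [ENNReal.rpow_natCast, withDensity_apply _ measurableSet_closedBall,
    Measure.restrict_restrict measurableSet_closedBall, inter_eq_left.2 hc, hint,
    Measure.addHaar_closedBall μ c hr.le, mul_comm _ κ, ENNReal.inv_mul_cancel_left hκ0 hκ,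
    ENNReal.ofReal_pow hr.le]
  exact hdiam c r hr hc

end LusinN

section Mollification

open ContinuousLinearMap
open scoped Convolution ContDiff

variable {E F : Type*} [NormedAddCommGroup E] [NormedSpace ℝ E] [MeasurableSpace E] {μ : Measure E}
  [NormedAddCommGroup F] [NormedSpace ℝ F]

/-- `f'` is a weak (distributional) derivative of `f` on `D`: both are locally integrable on `D`
and integration by parts holds against smooth functions compactly supported in `D`. -/
structure HasWeakFDerivOn (μ : Measure E) (f : E → F) (f' : E → E →L[ℝ] F) (D : Set E) :
    Prop where
  locallyIntegrableOn : LocallyIntegrableOn f D μ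
  locallyIntegrableOn_fderiv : LocallyIntegrableOn f' D μ
  integral_smul_eq : ∀ ψ : E → ℝ, ContDiff ℝ ∞ ψ → HasCompactSupport ψ → tsupport ψ ⊆ D →
    ∀ v : E, ∫ x, ψ x • f' x v ∂μ = -∫ x, fderiv ℝ ψ x v • f x ∂μ

variable [FiniteDimensional ℝ E] [BorelSpace E] [μ.IsAddHaarMeasure] (b : ContDiffBump (0 : E))

theorem lintegral_enorm_normed : ∫⁻ x, ‖b.normed μ x‖ₑ ∂μ = 1 := by
  have hnonneg : 0 ≤ᵐ[μ] b.normed μ := Eventually.of_forall b.nonneg_normed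
  calc ∫⁻ x, ‖b.normed μ x‖ₑ ∂μ = ∫⁻ x, ENNReal.ofReal (b.normed μ x) ∂μ :=
        lintegral_congr fun x ↦ Real.enorm_eq_ofReal (b.nonneg_normed x)
    _ = 1 := by
        rw [← ofReal_integral_eq_lintegral_ofReal b.integrable_normed hnonneg, b.integral_normed,
          ENNReal.ofReal_one]

theorem lintegral_enorm_normed_convolution_le {g : E → F} (hg : Integrable g μ) :
    ∫⁻ x, ‖(b.normed μ ⋆[lsmul ℝ ℝ, μ] g) x‖ₑ ∂μ ≤ ∫⁻ x, ‖g x‖ₑ ∂μ :=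
  calc _ ≤ ∫⁻ x, (∫⁻ t, ‖lsmul ℝ ℝ (b.normed μ t) (g (x - t))‖ₑ ∂μ) ∂μ :=
        lintegral_mono fun x ↦ enorm_integral_le_lintegral_enorm _
    _ = ∫⁻ t, (∫⁻ x, ‖lsmul ℝ ℝ (b.normed μ t) (g (x - t))‖ₑ ∂μ) ∂μ :=
        lintegral_lintegral_swap
          (b.integrable_normed.convolution_integrand (lsmul ℝ ℝ) hg).aestronglyMeasurable.enorm
    _ = ∫⁻ t, ‖b.normed μ t‖ₑ * ∫⁻ x, ‖g x‖ₑ ∂μ ∂μ := by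
        refine lintegral_congr fun t ↦ ?_
        simp only [lsmul_apply, enorm_smul]
        rw [lintegral_const_mul' _ _ (by finiteness),
          lintegral_sub_right_eq_self (fun x ↦ ‖g x‖ₑ) t]
    _ = _ := by rw [lintegral_mul_const' _ _ hg.2.ne, lintegral_enorm_normed, one_mul]

theorem enorm_normed_convolution_sub_le [CompleteSpace F] {g c : E → F} (hg : LocallyIntegrable g μ)
    (hc : LocallyIntegrable c μ) {x : E} {t : ℝ≥0}
    (hct : ∀ y ∈ ball x b.rOut, dist (c y) (c x) ≤ t) :
    ‖(b.normed μ ⋆[lsmul ℝ ℝ, μ] g) x - g x‖ₑ ≤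
      ‖(b.normed μ ⋆[lsmul ℝ ℝ, μ] fun y ↦ g y - c y) x‖ₑ + (‖g x - c x‖ₑ + t) := by
  have hsplit : (b.normed μ ⋆[lsmul ℝ ℝ, μ] fun y ↦ g y - c y) x =
      (b.normed μ ⋆[lsmul ℝ ℝ, μ] g) x - (b.normed μ ⋆[lsmul ℝ ℝ, μ] c) x := by
    have hconv : ∀ {u : E → F}, LocallyIntegrable u μ →
        ConvolutionExistsAt (b.normed μ) u x (lsmul ℝ ℝ) μ := fun hu ↦
      b.hasCompactSupport_normed.convolutionExists_left (lsmul ℝ ℝ) b.continuous_normed hu x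
    simp only [convolution_def, map_sub]
    exact integral_sub (hconv hg) (hconv hc)
  have hmoll : ‖(b.normed μ ⋆[lsmul ℝ ℝ, μ] c) x - c x‖ₑ ≤ t := by
    rw [← edist_eq_enorm_sub, edist_le_coe]
    exact b.dist_normed_convolution_le hc.aestronglyMeasurable hct
  calc _ = ‖(b.normed μ ⋆[lsmul ℝ ℝ, μ] fun y ↦ g y - c y) x +
          (-(g x - c x) + ((b.normed μ ⋆[lsmul ℝ ℝ, μ] c) x - c x))‖ₑ := by
        rw [hsplit]
        congr 1
        abel
    _ ≤ _ := by
        refine (enorm_add_le _ _).trans (add_le_add le_rfl ?_)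
        refine (enorm_add_le _ _).trans (add_le_add (enorm_neg _).le hmoll)

theorem exists_setLIntegral_enorm_normed_convolution_sub_le [CompleteSpace F] {g : E → F}
    (hg : Integrable g μ) {S : Set E} (hS : μ S ≠ ⊤) {ε : ℝ≥0∞} (hε : ε ≠ 0) :
    ∃ δ > 0, ∀ b : ContDiffBump (0 : E), b.rOut < δ →
      ∫⁻ x in S, ‖(b.normed μ ⋆[lsmul ℝ ℝ, μ] g) x - g x‖ₑ ∂μ ≤ ε := by
  have hε3 : ε / 3 ≠ 0 := (ENNReal.div_pos hε (by norm_num)).ne'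
  obtain ⟨c, hcs, hgc, hcc, hci⟩ := hg.exists_hasCompactSupport_lintegral_sub_le hε3
  obtain ⟨t, ht0, ht⟩ := ENNReal.exists_nnreal_pos_mul_lt hS hε3
  obtain ⟨δ, hδ, hδc⟩ := Metric.uniformContinuous_iff.1
    (hcs.uniformContinuous_of_continuous hcc) t (by exact_mod_cast ht0)
  refine ⟨δ, hδ, fun b hb ↦ ?_⟩
  have hgc_int : Integrable (fun x ↦ g x - c x) μ := hg.sub hci
  have hconv_meas := (b.integrable_normed.integrable_convolution (lsmul ℝ ℝ)
    hgc_int).aestronglyMeasurable.enorm.restrict (s := S)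
  calc _ ≤ ∫⁻ x in S, (‖(b.normed μ ⋆[lsmul ℝ ℝ, μ] fun y ↦ g y - c y) x‖ₑ +
          (‖g x - c x‖ₑ + t)) ∂μ := lintegral_mono fun x ↦
        enorm_normed_convolution_sub_le b hg.locallyIntegrable hci.locallyIntegrable
          fun y hy ↦ (hδc ((mem_ball.1 hy).trans hb)).le
    _ = (∫⁻ x in S, ‖(b.normed μ ⋆[lsmul ℝ ℝ, μ] fun y ↦ g y - c y) x‖ₑ ∂μ) +
          ((∫⁻ x in S, ‖g x - c x‖ₑ ∂μ) + t * μ S) := by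
        rw [lintegral_add_left' hconv_meas,
          lintegral_add_left' hgc_int.aestronglyMeasurable.enorm.restrict, setLIntegral_const]
    _ ≤ ε / 3 + (ε / 3 + ε / 3) := by
        refine add_le_add ?_ (add_le_add ((setLIntegral_le_lintegral _ _).trans hgc) ht.le)
        exact (setLIntegral_le_lintegral _ _).trans
          ((lintegral_enorm_normed_convolution_le b hgc_int).trans hgc)
    _ = ε := by rw [← add_assoc, ENNReal.add_thirds]

theorem tsupport_normed_const_sub_subset (x : E) :
    tsupport (fun y ↦ b.normed μ (x - y)) ⊆ closedBall x b.rOut := by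
  refine closure_minimal (fun y hy ↦ ?_) isClosed_closedBall
  have hmem : x - y ∈ Function.support (b.normed μ) := hy
  rw [b.support_normed_eq, mem_ball_zero_iff] at hmem
  rw [mem_closedBall, dist_comm, dist_eq_norm]
  exact hmem.le

variable {B : Set E} {x : E}

theorem normed_const_sub_smul_indicator (hx : closedBall x b.rOut ⊆ B) (f : E → F) (y : E) :
    b.normed μ (x - y) • B.indicator f y = b.normed μ (x - y) • f y := by
  by_cases hy : y ∈ B
  · rw [indicator_of_mem hy]
  · have hzero : b.normed μ (x - y) = 0 :=
      image_eq_zero_of_notMem_tsupport (f := fun y ↦ b.normed μ (x - y))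
        fun h ↦ hy (hx (tsupport_normed_const_sub_subset b x h))
    rw [hzero, zero_smul, zero_smul]

theorem fderiv_normed_const_sub_smul_indicator (hx : closedBall x b.rOut ⊆ B) (f : E → F)
    (y v : E) :
    fderiv ℝ (b.normed μ) (x - y) v • B.indicator f y =
      -(fderiv ℝ (fun y ↦ b.normed μ (x - y)) y v • f y) := by
  have hneg : fderiv ℝ (fun y ↦ b.normed μ (x - y)) y v = -fderiv ℝ (b.normed μ) (x - y) v := by
    have hb : HasFDerivAt (b.normed μ) (fderiv ℝ (b.normed μ) (x - y)) (x - y) :=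
      (b.contDiff_normed.differentiable (n := 1) one_ne_zero _).hasFDerivAt
    have hcomp : HasFDerivAt (fun y ↦ b.normed μ (x - y))
        ((fderiv ℝ (b.normed μ) (x - y)).comp (-ContinuousLinearMap.id ℝ E)) y :=
      hb.comp y ((hasFDerivAt_id y).const_sub x)
    rw [hcomp.fderiv, comp_apply, neg_apply, id_apply, map_neg]
  by_cases hy : y ∈ B
  · rw [indicator_of_mem hy, hneg, neg_smul, neg_neg]
  · have hzero : fderiv ℝ (fun y ↦ b.normed μ (x - y)) y = 0 := by
      by_contra hne
      exact hy (hx (tsupport_normed_const_sub_subset (μ := μ) b x (support_fderiv_subset ℝ hne)))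
    rw [indicator_of_notMem hy, hzero, zero_apply, zero_smul, smul_zero, neg_zero]

omit [NormedSpace ℝ F] [μ.IsAddHaarMeasure] [NormedSpace ℝ E] [FiniteDimensional ℝ E] in
theorem integrable_indicator_of_isCompact {D : Set E} {u : E → F}
    (hu : LocallyIntegrableOn u D μ) (hB : IsCompact B) (hBD : B ⊆ D) :
    Integrable (B.indicator u) μ :=
  (hu.integrableOn_compact_subset hBD hB).integrable_indicator hB.measurableSet

/-- Near `x` the test function `y ↦ b (x - y)` does not see the truncation to `B`. -/
theorem HasWeakFDerivOn.hasFDerivAt_normed_convolution_indicator {D : Set E} {f : E → F}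
    {f' : E → E →L[ℝ] F} (hf : HasWeakFDerivOn μ f f' D) (hB : IsCompact B) (hBD : B ⊆ D)
    (hx : closedBall x b.rOut ⊆ B) :
    HasFDerivAt (b.normed μ ⋆[lsmul ℝ ℝ, μ] B.indicator f)
      ((b.normed μ ⋆[lsmul ℝ ℝ, μ] B.indicator f') x) x := by
  have hfi : LocallyIntegrable (B.indicator f) μ :=
    (integrable_indicator_of_isCompact hf.locallyIntegrableOn hB hBD).locallyIntegrable
  have hfi' : LocallyIntegrable (B.indicator f') μ :=
    (integrable_indicator_of_isCompact hf.locallyIntegrableOn_fderiv hB hBD).locallyIntegrable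
  have hb : HasCompactSupport (b.normed μ) := b.hasCompactSupport_normed
  have hb1 : ContDiff ℝ 1 (b.normed μ) := b.contDiff_normed
  refine (hb.hasFDerivAt_convolution_left (lsmul ℝ ℝ) hb1 hfi x).congr_fderiv ?_
  ext1 v
  set ψ : E → ℝ := fun y ↦ b.normed μ (x - y)
  have hψ : tsupport ψ ⊆ closedBall x b.rOut := tsupport_normed_const_sub_subset b x
  have hparts := hf.integral_smul_eq ψ (b.contDiff_normed.comp (contDiff_const.sub contDiff_id))
    (HasCompactSupport.of_support_subset_isCompact (isCompact_closedBall x b.rOut)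
      ((subset_tsupport ψ).trans hψ)) (hψ.trans (hx.trans hBD)) v
  have hf_int := ((hb.fderiv (𝕜 := ℝ)).convolutionExists_left ((lsmul ℝ ℝ).precompL E)
    (hb1.continuous_fderiv one_ne_zero) hfi x).integrable_swap
  have hf'_int := (hb.convolutionExists_left (lsmul ℝ ℝ) hb1.continuous hfi' x).integrable_swap
  rw [convolution_eq_swap, convolution_eq_swap, integral_apply hf_int, integral_apply hf'_int]
  calc _ = ∫ y, -(fderiv ℝ ψ y v • f y) ∂μ := integral_congr_ae <| Eventually.of_forall fun y ↦
        fderiv_normed_const_sub_smul_indicator b hx f y v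
    _ = ∫ y, ψ y • f' y v ∂μ := by rw [integral_neg, hparts]
    _ = _ := integral_congr_ae <| Eventually.of_forall fun y ↦
        congrArg (· v) (normed_const_sub_smul_indicator b hx f' y).symm

theorem HasWeakFDerivOn.exists_contDiff_approx [CompleteSpace F] {D : Set E}
    {f : E → F} {f' : E → E →L[ℝ] F} (hw : HasWeakFDerivOn μ f f' D)
    (hf : ContinuousOn f D) {x₀ : E} {R R' : ℝ} (hR : R < R') (hD : closedBall x₀ R' ⊆ D)
    {t : ℝ} (ht : 0 < t) {ε : ℝ≥0∞} (hε : ε ≠ 0) :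
    ∃ g : E → F, ContDiff ℝ 1 g ∧ (∀ x ∈ ball x₀ R, dist (f x) (g x) ≤ t) ∧
      ∫⁻ x in ball x₀ R, ‖fderiv ℝ g x - f' x‖ₑ ∂μ ≤ ε := by
  set B := closedBall x₀ R'
  have hB : IsCompact B := isCompact_closedBall _ _
  have hfi : Integrable (B.indicator f) μ :=
    integrable_indicator_of_isCompact hw.locallyIntegrableOn hB hD
  have hfi' : Integrable (B.indicator f') μ :=
    integrable_indicator_of_isCompact hw.locallyIntegrableOn_fderiv hB hD
  obtain ⟨δ₁, hδ₁, hderiv⟩ := exists_setLIntegral_enorm_normed_convolution_sub_le hfi'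
    (measure_ball_lt_top (x := x₀) (r := R)).ne hε
  obtain ⟨δ₂, hδ₂, huc⟩ := Metric.uniformContinuousOn_iff.1
    (hB.uniformContinuousOn_of_continuous (hf.mono hD)) t ht
  obtain ⟨δ, hδ, hδ'⟩ := exists_between (lt_min hδ₁ (lt_min hδ₂ (sub_pos.2 hR)))
  simp only [lt_min_iff] at hδ'
  let b : ContDiffBump (0 : E) := ⟨δ / 2, δ, half_pos hδ, half_lt_self hδ⟩
  have hbB : ∀ x ∈ ball x₀ R, closedBall x b.rOut ⊆ B := fun x hx ↦
    closedBall_subset_closedBall' (by linarith [mem_ball.1 hx, hδ'.2.2, show b.rOut = δ from rfl])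
  have hmem : ∀ x ∈ ball x₀ R, x ∈ B := fun x hx ↦
    hbB x hx (mem_closedBall_self b.rOut_pos.le)
  refine ⟨b.normed μ ⋆[lsmul ℝ ℝ, μ] B.indicator f, ?_, fun x hx ↦ ?_, ?_⟩
  · exact b.hasCompactSupport_normed.contDiff_convolution_left (n := 1) (lsmul ℝ ℝ)
      b.contDiff_normed hfi.locallyIntegrable
  · have hclose : ∀ y ∈ ball x b.rOut, dist (B.indicator f y) (B.indicator f x) ≤ t := by
      intro y hy
      have hyB := hbB x hx (ball_subset_closedBall hy)
      rw [indicator_of_mem hyB, indicator_of_mem (hmem x hx)]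
      exact (huc y hyB x (hmem x hx) ((mem_ball.1 hy).trans hδ'.2.1)).le
    have hdist := b.dist_normed_convolution_le hfi.aestronglyMeasurable hclose
    rwa [indicator_of_mem (hmem x hx), dist_comm] at hdist
  · refine le_of_eq_of_le (setLIntegral_congr_fun measurableSet_ball fun x hx ↦ ?_)
      (hderiv b hδ'.1)
    rw [(hw.hasFDerivAt_normed_convolution_indicator b hB hD (hbB x hx)).fderiv,
      indicator_of_mem (hmem x hx)]

theorem HasWeakFDerivOn.exists_seq_contDiff_tendstoUniformlyOn [CompleteSpace F]
    {D : Set E} {f : E → F} {f' : E → E →L[ℝ] F} (hw : HasWeakFDerivOn μ f f' D)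
    (hf : ContinuousOn f D) {x₀ : E} {R R' : ℝ} (hR : R < R') (hD : closedBall x₀ R' ⊆ D) :
    ∃ g : ℕ → E → F, (∀ k, ContDiff ℝ 1 (g k)) ∧ TendstoUniformlyOn g f atTop (ball x₀ R) ∧
      ∀ k, ∫⁻ x in ball x₀ R, ‖fderiv ℝ (g k) x - f' x‖ₑ ∂μ ≤ 4⁻¹ ^ k := by
  choose g hg hfg hg' using fun k : ℕ ↦ hw.exists_contDiff_approx hf hR hD
    (t := 2⁻¹ ^ k) (by positivity) (ε := 4⁻¹ ^ k) (pow_ne_zero _ (by simp))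
  refine ⟨g, hg, Metric.tendstoUniformlyOn_iff.2 fun ε hε ↦ ?_, hg'⟩
  have hlim : Tendsto (fun k : ℕ ↦ (2⁻¹ : ℝ) ^ k) atTop (𝓝 0) :=
    tendsto_pow_atTop_nhds_zero_of_lt_one (by norm_num) (by norm_num)
  filter_upwards [hlim.eventually_lt_const hε] with k hk x hx
  exact (hfg k x hx).trans_lt hk

end Mollification

section Decomposition

open Module (finrank)

variable {E F : Type*} [NormedAddCommGroup E] [NormedSpace ℝ E] [MeasurableSpace E]
  [NormedAddCommGroup F] [NormedSpace ℝ F]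

omit [MeasurableSpace E] in
theorem hasFDerivWithinAt_of_tendsto {g : ℕ → E → F} {g' : ℕ → E →L[ℝ] F} {f : E → F}
    {f' : E →L[ℝ] F} {s : Set E} {x : E} (hg : ∀ k, HasFDerivWithinAt (g k) (g' k) s x)
    (hg' : Tendsto g' atTop (𝓝 f')) {c : ℕ → ℝ≥0} (hc : Tendsto c atTop (𝓝 0))
    (hgf : ∀ k, ∀ᶠ y in 𝓝[s] x, ‖(g k y - g k x) - (f y - f x)‖ ≤ c k * ‖y - x‖) :
    HasFDerivWithinAt f f' s x := by
  rw [hasFDerivWithinAt_iff_isLittleO, Asymptotics.isLittleO_iff]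
  intro η hη
  have hη3 : 0 < η / 3 := by positivity
  obtain ⟨k, hck, hg'k⟩ := ((hc.eventually_lt_const (Real.toNNReal_pos.2 hη3)).and
    (Metric.tendsto_nhds.1 hg' _ hη3)).exists
  rw [dist_eq_norm] at hg'k
  rw [Real.lt_toNNReal_iff_coe_lt] at hck
  filter_upwards [hgf k, (hasFDerivWithinAt_iff_isLittleO.1 (hg k)).def hη3] with y hy hgy
  have hlin : ‖(g' k - f') (y - x)‖ ≤ η / 3 * ‖y - x‖ :=
    ((g' k - f').le_opNorm _).trans (by gcongr)
  calc ‖f y - f x - f' (y - x)‖ = ‖-((g k y - g k x) - (f y - f x)) +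
          (g k y - g k x - g' k (y - x)) + (g' k - f') (y - x)‖ := by
        rw [sub_apply]
        congr 1
        abel
    _ ≤ c k * ‖y - x‖ + η / 3 * ‖y - x‖ + η / 3 * ‖y - x‖ := by
        refine norm_add₃_le.trans (add_le_add (add_le_add ?_ hgy) hlin)
        rwa [norm_neg]
    _ ≤ η / 3 * ‖y - x‖ + η / 3 * ‖y - x‖ + η / 3 * ‖y - x‖ := by gcongr
    _ = η * ‖y - x‖ := by ring

/-- The points whose neighbourhood of radius `1 / (K + 1)` lies in `U` and at which `w` is finite
and has averages at most `K` over all balls of radius at most `1 / (K + 1)`. -/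
def boundedAverageSet (μ : Measure E) (w : E → ℝ≥0∞) (U : Set E) (K : ℕ) : Set E :=
  {x | w x ≠ ⊤ ∧ ∀ r ∈ Ioc 0 ((K : ℝ) + 1)⁻¹,
    ball x r ⊆ U ∧ ∫⁻ z in ball x r, w z ∂μ ≤ K * μ (ball x r)}

omit [NormedSpace ℝ E] in
theorem boundedAverageSet_subset (μ : Measure E) (w : E → ℝ≥0∞) (U : Set E) (K : ℕ) :
    boundedAverageSet μ w U K ⊆ U := fun x hx ↦ by
  have hK : (0 : ℝ) < ((K : ℝ) + 1)⁻¹ := by positivity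
  exact (hx.2 _ ⟨hK, le_rfl⟩).1 (mem_ball_self hK)

variable [FiniteDimensional ℝ E] [BorelSpace E] (μ : Measure E) [μ.IsAddHaarMeasure]

omit [NormedSpace ℝ E] [FiniteDimensional ℝ E] in
theorem isClosed_setLIntegral_ball_le {w : E → ℝ≥0∞} (hw : Measurable w) (M : ℝ≥0∞) (r : ℝ) :
    IsClosed {x | ∫⁻ z in ball x r, w z ∂μ ≤ M * μ (ball x r)} := by
  refine IsSeqClosed.isClosed fun x a hx hxa ↦ ?_
  have hpoint : ∀ z, (ball a r).indicator w z ≤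
      liminf (fun k ↦ (ball (x k) r).indicator w z) atTop := fun z ↦ by
    by_cases hz : z ∈ ball a r
    · refine le_liminf_of_le (by isBoundedDefault) ?_
      have hev := (tendsto_const_nhds.dist hxa).eventually_lt_const hz
      filter_upwards [hev] with k hk
      rw [indicator_of_mem hz, indicator_of_mem (mem_ball.2 hk)]
    · rw [indicator_of_notMem hz]
      exact zero_le
  calc ∫⁻ z in ball a r, w z ∂μ
      ≤ ∫⁻ z, liminf (fun k ↦ (ball (x k) r).indicator w z) atTop ∂μ := by
        rw [← lintegral_indicator measurableSet_ball]
        exact lintegral_mono hpoint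
    _ ≤ liminf (fun k ↦ ∫⁻ z, (ball (x k) r).indicator w z ∂μ) atTop :=
        lintegral_liminf_le fun k ↦ hw.indicator measurableSet_ball
    _ ≤ liminf (fun _ : ℕ ↦ M * μ (ball a r)) atTop := by
        refine liminf_le_liminf (Eventually.of_forall fun k ↦ ?_)
        rw [lintegral_indicator measurableSet_ball, Measure.addHaar_ball_center,
          ← Measure.addHaar_ball_center μ (x k)]
        exact hx k
    _ = M * μ (ball a r) := liminf_const _

omit [NormedSpace ℝ E] [MeasurableSpace E] [FiniteDimensional ℝ E] [BorelSpace E] in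
theorem isClosed_ball_subset (U : Set E) (r : ℝ) : IsClosed {x | ball x r ⊆ U} := by
  refine IsSeqClosed.isClosed fun x a hx hxa z hz ↦ ?_
  obtain ⟨k, hk⟩ := ((tendsto_const_nhds.dist hxa).eventually_lt_const (mem_ball.1 hz)).exists
  exact hx k hk

omit [NormedSpace ℝ E] [FiniteDimensional ℝ E] in
theorem measurableSet_boundedAverageSet {w : E → ℝ≥0∞} (hw : Measurable w) (U : Set E) (K : ℕ) :
    MeasurableSet (boundedAverageSet μ w U K) := by
  have hclosed : IsClosed (⋂ r ∈ Ioc 0 ((K : ℝ) + 1)⁻¹,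
      {x | ball x r ⊆ U} ∩ {x | ∫⁻ z in ball x r, w z ∂μ ≤ K * μ (ball x r)}) :=
    isClosed_biInter fun r _ ↦
      (isClosed_ball_subset U r).inter (isClosed_setLIntegral_ball_le μ hw K r)
  convert (hw (measurableSet_singleton ⊤).compl).inter hclosed.measurableSet using 1
  ext x
  simp only [boundedAverageSet, mem_ofPred_eq, mem_inter_iff, mem_iInter, mem_preimage,
    mem_compl_iff, mem_singleton_iff, ne_eq]

variable [Nontrivial E]

theorem measure_diff_iUnion_boundedAverageSet {w : E → ℝ≥0∞} (hw : Measurable w) {U : Set E}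
    (hU : IsOpen U) (hwU : ∫⁻ x in U, w x ∂μ ≠ ⊤) :
    μ (U \ ⋃ K, boundedAverageSet μ w U K) = 0 := by
  have hind : Measurable (U.indicator w) := hw.indicator hU.measurableSet
  rw [← lintegral_indicator hU.measurableSet] at hwU
  have hae : ∀ᵐ x ∂μ, x ∈ U → x ∈ ⋃ K, boundedAverageSet μ w U K := by
    filter_upwards [(Besicovitch.vitaliFamily μ).ae_tendsto_lintegral_div hind.aemeasurable hwU,
      ae_lt_top hind hwU] with x hlim hfin hx
    obtain ⟨M, hM⟩ := ENNReal.exists_nat_gt hfin.ne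
    have hev := (hlim.comp (Besicovitch.tendsto_filterAt μ x)).eventually_lt_const hM
    obtain ⟨δ, hδ, hball⟩ := Metric.isOpen_iff.1 hU x hx
    obtain ⟨δ', hδ', hmean⟩ := mem_nhdsGT_iff_exists_Ioo_subset.1 hev
    obtain ⟨k, hk⟩ := exists_nat_one_div_lt (lt_min hδ hδ')
    rw [indicator_of_mem hx] at hfin
    refine mem_iUnion.2 ⟨max k M, hfin.ne, fun r hr ↦ ?_⟩
    have hrδ : r < min δ δ' := by
      refine (hr.2.trans ?_).trans_lt hk
      rw [one_div]
      gcongr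
      exact le_max_left _ _
    have hsub : ball x r ⊆ U := (ball_subset_ball (hrδ.le.trans (min_le_left _ _))).trans hball
    have hle := le_of_lt (mem_ofPred_eq ▸ hmean ⟨hr.1, hrδ.trans_le (min_le_right _ _)⟩)
    rw [Function.comp_apply, ENNReal.div_le_iff (measure_closedBall_pos μ x hr.1).ne'
      measure_closedBall_lt_top.ne, Measure.addHaar_closedBall_eq_addHaar_ball] at hle
    refine ⟨hsub, ?_⟩
    calc ∫⁻ z in ball x r, w z ∂μ = ∫⁻ z in ball x r, U.indicator w z ∂μ :=
          setLIntegral_congr_fun measurableSet_ball fun z hz ↦ (indicator_of_mem (hsub hz) w).symm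
      _ ≤ ∫⁻ z in closedBall x r, U.indicator w z ∂μ := lintegral_mono_set ball_subset_closedBall
      _ ≤ M * μ (ball x r) := hle
      _ ≤ (max k M : ℕ) * μ (ball x r) := by
          gcongr
          exact le_max_right _ _
  rwa [ae_iff, show {x | ¬(x ∈ U → x ∈ ⋃ K, boundedAverageSet μ w U K)} =
    U \ ⋃ K, boundedAverageSet μ w U K from ext fun x ↦ Classical.not_imp] at hae

theorem setLIntegral_annulus_mul_rieszKernel_le {w : E → ℝ≥0∞} {x : E} {d : ℝ} (hd : 0 < d)
    {M : ℝ≥0∞} (hM : ∫⁻ z in ball x (4 * d), w z ∂μ ≤ M * μ (ball x (4 * d))) :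
    ∫⁻ z in closedBall x (2 * d) \ closedBall x d, w z * rieszKernel x z ∂μ ≤
      4 ^ finrank ℝ E * M * μ (ball 0 1) * ENNReal.ofReal d := by
  have hm : finrank ℝ E - 1 + 1 = finrank ℝ E := Nat.sub_add_cancel Module.finrank_pos
  set m := finrank ℝ E
  have hpow : (ENNReal.ofReal d ^ (m - 1))⁻¹ * ENNReal.ofReal d ^ m = ENNReal.ofReal d := by
    rw [← hm, pow_succ, Nat.add_sub_cancel]
    exact ENNReal.inv_mul_cancel_left (by simp [hd]) (by finiteness)
  have hA : MeasurableSet (closedBall x (2 * d) \ closedBall x d) :=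
    measurableSet_closedBall.diff measurableSet_closedBall
  calc _ ≤ ∫⁻ z in closedBall x (2 * d) \ closedBall x d,
          w z * (ENNReal.ofReal d ^ (m - 1))⁻¹ ∂μ := by
        refine setLIntegral_mono' hA fun z hz ↦ ?_
        have hdz : ENNReal.ofReal d ≤ edist z x := by
          rw [edist_dist]
          exact ENNReal.ofReal_le_ofReal (not_le.1 hz.2).le
        simp only [rieszKernel]
        gcongr
    _ = (∫⁻ z in closedBall x (2 * d) \ closedBall x d, w z ∂μ) *
          (ENNReal.ofReal d ^ (m - 1))⁻¹ := lintegral_mul_const' _ _ (by simp [hd])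
    _ ≤ (∫⁻ z in ball x (4 * d), w z ∂μ) * (ENNReal.ofReal d ^ (m - 1))⁻¹ :=
        mul_le_mul_left (lintegral_mono_set <|
          sdiff_subset.trans (closedBall_subset_ball (by linarith))) _
    _ ≤ M * ((4 * ENNReal.ofReal d) ^ m * μ (ball 0 1)) * (ENNReal.ofReal d ^ (m - 1))⁻¹ := by
        refine mul_le_mul_left (hM.trans_eq ?_) _
        rw [Measure.addHaar_ball μ x (by positivity), ENNReal.ofReal_pow (by positivity),
          ENNReal.ofReal_mul zero_le_four, ENNReal.ofReal_ofNat]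
    _ = 4 ^ m * M * μ (ball 0 1) *
          ((ENNReal.ofReal d ^ (m - 1))⁻¹ * ENNReal.ofReal d ^ m) := by ring
    _ = _ := by rw [hpow]

theorem setLIntegral_mul_rieszKernel_le {w : E → ℝ≥0∞} {x : E} {ρ : ℝ} (hρ : 0 < ρ) {M : ℝ≥0∞}
    (hM : ∀ r ∈ Ioc 0 (2 * ρ), ∫⁻ z in ball x r, w z ∂μ ≤ M * μ (ball x r)) :
    ∫⁻ z in closedBall x ρ, w z * rieszKernel x z ∂μ ≤
      4 ^ finrank ℝ E * M * μ (ball 0 1) * ENNReal.ofReal ρ := by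
  let d : ℕ → ℝ := fun i ↦ ρ * 2⁻¹ ^ (i + 1)
  have hd0 : ∀ i, 0 < d i := fun i ↦ by positivity
  have hd2 : ∀ i, 2 * d i = ρ * 2⁻¹ ^ i := fun i ↦ by
    simp only [d, pow_succ]
    ring
  have hdρ : ∀ i, 2 * d i ≤ ρ := fun i ↦
    (hd2 i).trans_le (mul_le_of_le_one_right hρ.le (pow_le_one₀ (by norm_num) (by norm_num)))
  have hofReal : ∀ i, ENNReal.ofReal (d i) = ENNReal.ofReal ρ * 2⁻¹ ^ (i + 1) := fun i ↦ by
    rw [ENNReal.ofReal_mul hρ.le, ENNReal.ofReal_pow (by norm_num),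
      ENNReal.ofReal_inv_of_pos two_pos, ENNReal.ofReal_ofNat]
  have hcover : closedBall x ρ ⊆ {x} ∪ ⋃ i, closedBall x (2 * d i) \ closedBall x (d i) :=
    fun z hz ↦ by
      rcases eq_or_ne z x with rfl | hzx
      · exact Or.inl rfl
      obtain ⟨i, hi₁, hi₂⟩ := exists_nat_pow_near_of_lt_one (div_pos (dist_pos.2 hzx) hρ)
        ((div_le_one hρ).2 hz) (y := (2⁻¹ : ℝ)) (by norm_num) (by norm_num)
      rw [lt_div_iff₀' hρ] at hi₁
      rw [div_le_iff₀' hρ, ← hd2] at hi₂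
      exact Or.inr (mem_iUnion.2 ⟨i, hi₂, hi₁.not_ge⟩)
  calc _ ≤ ∫⁻ z in {x} ∪ ⋃ i, closedBall x (2 * d i) \ closedBall x (d i),
          w z * rieszKernel x z ∂μ := lintegral_mono_set hcover
    _ ≤ ∫⁻ z in {x}, w z * rieszKernel x z ∂μ +
          ∫⁻ z in ⋃ i, closedBall x (2 * d i) \ closedBall x (d i), w z * rieszKernel x z ∂μ :=
        lintegral_union_le _ _ _
    _ = ∫⁻ z in ⋃ i, closedBall x (2 * d i) \ closedBall x (d i), w z * rieszKernel x z ∂μ := by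
        rw [setLIntegral_measure_zero _ _ (measure_singleton x), zero_add]
    _ ≤ ∑' i, ∫⁻ z in closedBall x (2 * d i) \ closedBall x (d i), w z * rieszKernel x z ∂μ :=
        lintegral_iUnion_le _ _
    _ ≤ ∑' i, 4 ^ finrank ℝ E * M * μ (ball 0 1) * (ENNReal.ofReal ρ * 2⁻¹ ^ (i + 1)) :=
        ENNReal.tsum_le_tsum fun i ↦ hofReal i ▸ setLIntegral_annulus_mul_rieszKernel_le μ (hd0 i)
          (hM _ ⟨mul_pos four_pos (hd0 i), by linarith [hdρ i]⟩)
    _ = _ := by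
        rw [ENNReal.tsum_mul_left, ENNReal.tsum_mul_left, ENNReal.tsum_geometric_add_one,
          ENNReal.one_sub_inv_two, inv_inv, ENNReal.inv_mul_cancel two_ne_zero ENNReal.ofNat_ne_top,
          mul_one]

theorem setLIntegral_edist_le_of_setLIntegral_ball_le {g : E → F} (hg : ContDiff ℝ 1 g) {x : E}
    {ρ : ℝ} (hρ : 0 < ρ) {s : Set E} (hs : MeasurableSet s) (hsx : StarConvex ℝ x s)
    (hsρ : s ⊆ closedBall x ρ) {M : ℝ≥0∞}
    (hM : ∀ r ∈ Ioc 0 (2 * ρ), ∫⁻ z in ball x r, ‖fderiv ℝ g z‖ₑ ∂μ ≤ M * μ (ball x r)) :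
    ∫⁻ y in s, edist (g x) (g y) ∂μ ≤
      4 ^ finrank ℝ E * M * ENNReal.ofReal ρ * μ (closedBall x ρ) := by
  have hfinrank : (1 : ℝ) ≤ finrank ℝ E := by exact_mod_cast Module.finrank_pos
  calc _ ≤ ENNReal.ofReal (ρ ^ finrank ℝ E / finrank ℝ E) *
          ∫⁻ z in s, ‖fderiv ℝ g z‖ₑ * rieszKernel x z ∂μ :=
        setLIntegral_edist_le_rieszPotential μ hg hs hsx hρ hsρ
    _ ≤ ENNReal.ofReal (ρ ^ finrank ℝ E) *
          (4 ^ finrank ℝ E * M * μ (ball 0 1) * ENNReal.ofReal ρ) :=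
        mul_le_mul' (ENNReal.ofReal_le_ofReal (div_le_self (by positivity) hfinrank))
          ((lintegral_mono_set hsρ).trans (setLIntegral_mul_rieszKernel_le μ hρ hM))
    _ = _ := by
        rw [Measure.addHaar_closedBall μ x hρ.le]
        ring

theorem edist_le_of_setLIntegral_ball_le {g : E → F} (hg : ContDiff ℝ 1 g) {x y : E}
    (hxy : x ≠ y) {M : ℝ≥0∞} (hM : ∀ a ∈ ({x, y} : Set E), ∀ r ∈ Ioc 0 (2 * dist x y),
      ∫⁻ z in ball a r, ‖fderiv ℝ g z‖ₑ ∂μ ≤ M * μ (ball a r)) :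
    edist (g x) (g y) ≤ 2 * 8 ^ finrank ℝ E * M * edist x y := by
  have hρ : 0 < dist x y := dist_pos.2 hxy
  set s := closedBall (midpoint ℝ x y) (dist x y / 2)
  have hx : x ∈ s := by simp [s, dist_left_midpoint, inv_mul_eq_div]
  have hy : y ∈ s := by simp [s, dist_right_midpoint, inv_mul_eq_div]
  have hμs : ∀ a, μ (closedBall a (dist x y)) = 2 ^ finrank ℝ E * μ s := fun a ↦ by
    rw [Measure.addHaar_closedBall μ _ hρ.le, Measure.addHaar_closedBall μ _ (half_pos hρ).le,
      ← mul_assoc, ← ENNReal.ofReal_ofNat, ← ENNReal.ofReal_pow zero_le_two,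
      ← ENNReal.ofReal_mul (by positivity), ← mul_pow, mul_div_cancel₀ _ two_ne_zero]
  have hmean : ∀ a ∈ ({x, y} : Set E), ∫⁻ u in s, edist (g a) (g u) ∂μ ≤
      8 ^ finrank ℝ E * M * edist x y * μ s := fun a ha ↦ by
    have has : a ∈ s := by rcases ha with rfl | rfl <;> assumption
    have hs : s ⊆ closedBall a (dist x y) := fun u hu ↦ by
      have := dist_triangle_right u a (midpoint ℝ x y)
      exact mem_closedBall.2 (by linarith [mem_closedBall.1 hu, mem_closedBall.1 has])
    refine (setLIntegral_edist_le_of_setLIntegral_ball_le μ hg hρ measurableSet_closedBall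
      ((convex_closedBall _ _).starConvex has) hs (hM a ha)).trans_eq ?_
    rw [hμs, edist_dist, show (8 : ℝ≥0∞) = 4 * 2 by norm_num, mul_pow]
    ring
  have hsum := (edist_mul_measure_le μ measurableSet_closedBall
    hg.continuous.continuousOn x y).trans (add_le_add (hmean x (by simp)) (hmean y (by simp)))
  refine (ENNReal.mul_le_mul_iff_left (measure_closedBall_pos μ _ (half_pos hρ)).ne'
    measure_closedBall_lt_top.ne).1 (hsum.trans_eq ?_)
  ring

variable {μ} {U : Set E} {D : E → E →L[ℝ] F} {w : E → ℝ≥0∞} {g : ℕ → E → F} {f : E → F}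

theorem edist_sub_le_of_mem_boundedAverageSet (hg : ∀ k, ContDiff ℝ 1 (g k))
    (hgD : ∀ k, ∀ z ∈ U, ‖fderiv ℝ (g k) z - D z‖ₑ ≤ 2⁻¹ ^ k * w z) {K : ℕ} {x y : E}
    (hx : x ∈ boundedAverageSet μ w U K) (hy : y ∈ boundedAverageSet μ w U K)
    (hxy : 2 * dist x y ≤ ((K : ℝ) + 1)⁻¹) (k : ℕ) :
    edist (g k x - g k y) (g (k + 1) x - g (k + 1) y) ≤
      4 * 8 ^ finrank ℝ E * K * edist x y / 2 ^ k := by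
  rcases eq_or_ne x y with rfl | hne
  · simp
  have hfderiv : ∀ z ∈ U, ‖fderiv ℝ (g k - g (k + 1)) z‖ₑ ≤ 2 * 2⁻¹ ^ k * w z := fun z hz ↦ by
    rw [fderiv_sub ((hg k).differentiable one_ne_zero _)
      ((hg (k + 1)).differentiable one_ne_zero _), ← sub_sub_sub_cancel_right _ _ (D z), two_mul,
      add_mul]
    refine enorm_sub_le.trans (add_le_add (hgD k z hz) ((hgD (k + 1) z hz).trans ?_))
    exact mul_le_mul_left (pow_le_pow_right_of_le_one' (by simp) k.le_succ) _
  have hmean : ∀ a ∈ ({x, y} : Set E), ∀ r ∈ Ioc 0 (2 * dist x y),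
      ∫⁻ z in ball a r, ‖fderiv ℝ (g k - g (k + 1)) z‖ₑ ∂μ ≤
        2 * 2⁻¹ ^ k * K * μ (ball a r) := fun a ha r hr ↦ by
    have haK : a ∈ boundedAverageSet μ w U K := by rcases ha with rfl | rfl <;> assumption
    obtain ⟨hball, hle⟩ := haK.2 r ⟨hr.1, hr.2.trans hxy⟩
    calc _ ≤ ∫⁻ z in ball a r, 2 * 2⁻¹ ^ k * w z ∂μ :=
          setLIntegral_mono' measurableSet_ball fun z hz ↦ hfderiv z (hball hz)
      _ = 2 * 2⁻¹ ^ k * ∫⁻ z in ball a r, w z ∂μ :=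
          lintegral_const_mul' _ _ (by finiteness)
      _ ≤ _ := by
          rw [mul_assoc _ (K : ℝ≥0∞)]
          gcongr
  have hle := edist_le_of_setLIntegral_ball_le μ ((hg k).sub (hg (k + 1))) hne hmean
  calc edist (g k x - g k y) (g (k + 1) x - g (k + 1) y)
      = edist ((g k - g (k + 1)) x) ((g k - g (k + 1)) y) := by
        simp only [edist_eq_enorm_sub, Pi.sub_apply, sub_sub_sub_comm]
    _ ≤ 2 * 8 ^ finrank ℝ E * (2 * 2⁻¹ ^ k * K) * edist x y := hle
    _ = 4 * 8 ^ finrank ℝ E * K * edist x y / 2 ^ k := by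
        rw [div_eq_mul_inv, ENNReal.inv_pow]
        ring

theorem hasFDerivWithinAt_boundedAverageSet (hg : ∀ k, ContDiff ℝ 1 (g k))
    (hgf : ∀ z ∈ U, Tendsto (fun k ↦ g k z) atTop (𝓝 (f z)))
    (hgD : ∀ k, ∀ z ∈ U, ‖fderiv ℝ (g k) z - D z‖ₑ ≤ 2⁻¹ ^ k * w z) {K : ℕ} {x : E}
    (hx : x ∈ boundedAverageSet μ w U K) :
    HasFDerivWithinAt f (D x) (boundedAverageSet μ w U K) x := by
  have hU := boundedAverageSet_subset μ w U K
  have hzero : Tendsto (fun k : ℕ ↦ (2⁻¹ : ℝ≥0∞) ^ k) atTop (𝓝 0) :=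
    ENNReal.tendsto_pow_atTop_nhds_zero_of_lt_one (by simp)
  have hfderiv : Tendsto (fun k ↦ fderiv ℝ (g k) x) atTop (𝓝 (D x)) := by
    refine tendsto_iff_edist_tendsto_0.2 (tendsto_of_tendsto_of_tendsto_of_le_of_le
      tendsto_const_nhds ?_ (fun _ ↦ zero_le) fun k ↦
        (edist_eq_enorm_sub _ _).trans_le (hgD k x (hU hx)))
    simpa only [zero_mul] using ENNReal.Tendsto.mul_const hzero (Or.inr hx.1)
  let c : ℕ → ℝ≥0 := fun k ↦ 2 * (4 * 8 ^ finrank ℝ E * K) * 2⁻¹ ^ k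
  have hc : Tendsto c atTop (𝓝 0) := by
    have hpow : Tendsto (fun k : ℕ ↦ (2⁻¹ : ℝ≥0) ^ k) atTop (𝓝 0) :=
      NNReal.tendsto_pow_atTop_nhds_zero_of_lt_one (by norm_num)
    simpa only [mul_zero] using hpow.const_mul (2 * (4 * 8 ^ finrank ℝ E * (K : ℝ≥0)))
  refine hasFDerivWithinAt_of_tendsto
    (fun k ↦ ((hg k).differentiable one_ne_zero x).hasFDerivAt.hasFDerivWithinAt) hfderiv hc
    fun k ↦ ?_
  have hnear : ∀ᶠ y in 𝓝[boundedAverageSet μ w U K] x, dist y x < ((K : ℝ) + 1)⁻¹ / 2 :=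
    mem_nhdsWithin_of_mem_nhds (ball_mem_nhds x (by positivity))
  filter_upwards [hnear, self_mem_nhdsWithin] with y hyx hy
  have hlim := edist_le_of_edist_le_geometric_two_of_tendsto _
    (edist_sub_le_of_mem_boundedAverageSet hg hgD hy hx (by linarith))
    ((hgf y (hU hy)).sub (hgf x (hU hx))) k
  have hreal : edist (g k y - g k x) (f y - f x) ≤ (c k * ‖y - x‖₊ : ℝ≥0) := by
    refine hlim.trans_eq ?_
    rw [edist_eq_enorm_sub, enorm_eq_nnnorm, div_eq_mul_inv]
    push_cast [c]
    rw [ENNReal.inv_pow]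
    ring
  rw [edist_eq_enorm_sub, enorm_eq_nnnorm, ENNReal.coe_le_coe] at hreal
  exact_mod_cast hreal

theorem exists_iUnion_hasFDerivWithinAt (hU : IsOpen U) (hD : StronglyMeasurable D)
    (hg : ∀ k, ContDiff ℝ 1 (g k)) (hgf : ∀ z ∈ U, Tendsto (fun k ↦ g k z) atTop (𝓝 (f z)))
    (hgD : ∀ k, ∫⁻ z in U, ‖fderiv ℝ (g k) z - D z‖ₑ ∂μ ≤ 4⁻¹ ^ k) :
    ∃ P : ℕ → Set E, (∀ K, MeasurableSet (P K)) ∧ (∀ K, P K ⊆ U) ∧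
      Pairwise (Function.onFun Disjoint P) ∧
      (∀ K, ∀ x ∈ P K, HasFDerivWithinAt f (D x) (P K) x) ∧ μ (U \ ⋃ K, P K) = 0 := by
  let e : ℕ → E → ℝ≥0∞ := fun k z ↦ ‖fderiv ℝ (g k) z - D z‖ₑ
  have he : ∀ k, Measurable (e k) := fun k ↦
    (((hg k).continuous_fderiv one_ne_zero).stronglyMeasurable.sub hD).enorm
  let w : E → ℝ≥0∞ := fun z ↦ ∑' k, 2 ^ k * e k z
  have hw : Measurable w := Measurable.tsum fun k ↦ (he k).const_mul _
  have hwU : ∫⁻ z in U, w z ∂μ ≠ ⊤ := by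
    refine ne_top_of_le_ne_top ENNReal.ofNat_ne_top (b := 2) ?_
    calc ∫⁻ z in U, w z ∂μ = ∑' k, 2 ^ k * ∫⁻ z in U, e k z ∂μ := by
          rw [lintegral_tsum fun k ↦ ((he k).const_mul _).aemeasurable]
          simp only [lintegral_const_mul _ (he _)]
      _ ≤ ∑' k : ℕ, 2⁻¹ ^ k := by
          refine ENNReal.tsum_le_tsum fun k ↦ (mul_le_mul_right (hgD k) _).trans_eq ?_
          rw [← mul_pow, show (4 : ℝ≥0∞) = 2 * 2 by norm_num, ENNReal.mul_inv (by simp) (by simp),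
            ENNReal.mul_inv_cancel_left two_ne_zero ENNReal.ofNat_ne_top]
      _ = 2 := by rw [ENNReal.tsum_geometric, ENNReal.one_sub_inv_two, inv_inv]
  have hew : ∀ k, ∀ z ∈ U, ‖fderiv ℝ (g k) z - D z‖ₑ ≤ 2⁻¹ ^ k * w z := fun k z _ ↦ by
    calc e k z = 2⁻¹ ^ k * (2 ^ k * e k z) := by
          rw [← mul_assoc, ← mul_pow, ENNReal.inv_mul_cancel two_ne_zero ENNReal.ofNat_ne_top,
            one_pow, one_mul]
      _ ≤ 2⁻¹ ^ k * w z := mul_le_mul_right (ENNReal.le_tsum (f := fun k ↦ 2 ^ k * e k z) k) _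
  refine ⟨disjointed (boundedAverageSet μ w U),
    MeasurableSet.disjointed (measurableSet_boundedAverageSet μ hw U),
    fun K ↦ (disjointed_subset _ K).trans (boundedAverageSet_subset μ w U K),
    disjoint_disjointed _, fun K x hx ↦ ?_, ?_⟩
  · exact (hasFDerivWithinAt_boundedAverageSet hg hgf hew (disjointed_subset _ K hx)).mono
      (disjointed_subset _ K)
  · rw [iUnion_disjointed]
    exact measure_diff_iUnion_boundedAverageSet μ hw hU hwU

end Decomposition

section AreaInequality

theorem le_setLIntegral_pow_of_forall_le {α : Type*} [MeasurableSpace α] {ν : Measure α}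
    [IsFiniteMeasure ν] {v : α → ℝ≥0∞} (hv : Measurable v) {c : ℝ≥0∞} {d : ℕ} {δ : ℕ → ℝ≥0}
    (hδ : ∀ i, δ i ≤ 1) (hδ0 : Tendsto δ atTop (𝓝 0)) (hc : ∀ i, c ≤ ∫⁻ x, (v x + δ i) ^ d ∂ν) :
    c ≤ ∫⁻ x, v x ^ d ∂ν := by
  by_cases htop : ∫⁻ x, v x ^ d ∂ν = ⊤
  · exact htop ▸ le_top
  have hbound : ∀ i x, (v x + δ i) ^ d ≤ 2 ^ d * (v x ^ d + 1) := fun i x ↦ by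
    calc (v x + δ i) ^ d ≤ (2 * max (v x) 1) ^ d := by
          rw [two_mul]
          gcongr
          · exact le_max_left _ _
          · exact le_max_of_le_right (by exact_mod_cast hδ i)
      _ ≤ 2 ^ d * (v x ^ d + 1) := by
          rw [mul_pow, (pow_left_mono d).map_max, one_pow]
          gcongr
          exact max_le_add_of_nonneg zero_le zero_le
  have hfin : ∫⁻ x, 2 ^ d * (v x ^ d + 1) ∂ν ≠ ⊤ := by
    rw [lintegral_const_mul _ ((hv.pow_const d).add_const 1),
      lintegral_add_right _ measurable_const, lintegral_const, one_mul]
    finiteness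
  have hlim : ∀ x, Tendsto (fun i ↦ (v x + δ i) ^ d) atTop (𝓝 (v x ^ d)) := fun x ↦ by
    have hadd := (ENNReal.tendsto_coe.2 hδ0).const_add (v x)
    rw [ENNReal.coe_zero, add_zero] at hadd
    exact ((ENNReal.continuous_pow d).tendsto _).comp hadd
  exact ge_of_tendsto' (tendsto_lintegral_of_dominated_convergence _
    (fun i ↦ (hv.add_const _).pow_const d) (fun i ↦ ae_of_all _ (hbound i)) hfin
    (ae_of_all _ hlim)) hc

section General

variable {α β : Type*} [MeasurableSpace α] [MeasurableSpace β] {ν : Measure α} {ν' : Measure β}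
  {f : α → β} {φ : α → ℝ≥0∞}

theorem measure_image_diff_iUnion_le_setLIntegral {s N : ℕ → Set α}
    (hs : ∀ n, MeasurableSet (s n)) (hdisj : Pairwise (Function.onFun Disjoint s))
    (h : ∀ n A, MeasurableSet A → A ⊆ s n → ν' (f '' (A \ N n)) ≤ ∫⁻ x in A, φ x ∂ν)
    {A : Set α} (hA : MeasurableSet A) (hAs : A ⊆ ⋃ n, s n) :
    ν' (f '' (A \ ⋃ n, N n)) ≤ ∫⁻ x in A, φ x ∂ν := by
  have hcover : f '' (A \ ⋃ n, N n) ⊆ ⋃ n, f '' ((A ∩ s n) \ N n) := by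
    rintro _ ⟨x, ⟨hxA, hxN⟩, rfl⟩
    obtain ⟨n, hn⟩ := mem_iUnion.1 (hAs hxA)
    exact mem_iUnion.2 ⟨n, x, ⟨⟨hxA, hn⟩, fun h ↦ hxN (mem_iUnion.2 ⟨n, h⟩)⟩, rfl⟩
  calc ν' (f '' (A \ ⋃ n, N n)) ≤ ∑' n, ν' (f '' ((A ∩ s n) \ N n)) :=
        (measure_mono hcover).trans (measure_iUnion_le _)
    _ ≤ ∑' n, ∫⁻ x in A ∩ s n, φ x ∂ν :=
        ENNReal.tsum_le_tsum fun n ↦ h n _ (hA.inter (hs n)) inter_subset_right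
    _ = ∫⁻ x in ⋃ n, A ∩ s n, φ x ∂ν := by
        rw [lintegral_iUnion (fun n ↦ hA.inter (hs n))
          (hdisj.mono fun _ _ hij ↦ hij.mono inter_subset_right inter_subset_right)]
    _ ≤ ∫⁻ x in A, φ x ∂ν := lintegral_mono_set (iUnion_subset fun _ ↦ inter_subset_left)

theorem setLIntegral_image_le_setLIntegral_comp_mul (hφ : Measurable φ) {A : Set α}
    (hA : MeasurableSet A) (hf : Measurable (A.domRestrict f))
    (h : ∀ B, MeasurableSet B → B ⊆ A → ν' (f '' B) ≤ ∫⁻ x in B, φ x ∂ν) {g : β → ℝ≥0∞}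
    (hg : Measurable g) :
    ∫⁻ y in f '' A, g y ∂ν' ≤ ∫⁻ x in A, g (f x) * φ x ∂ν := by
  set κ := (ν.restrict A).withDensity φ
  have hfA : AEMeasurable f (ν.restrict A) := aemeasurable_restrict_of_measurable_subtype hA hf
  have hfκ : AEMeasurable f κ := hfA.mono_ac (withDensity_absolutelyContinuous _ _)
  have hle : ν'.restrict (f '' A) ≤ κ.map f := by
    refine Measure.le_iff.2 fun B hB ↦ ?_
    have hAB : MeasurableSet (A ∩ f ⁻¹' B) := by
      rw [← Subtype.image_preimage_coe]
      exact hA.subtype_image (hf hB)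
    calc ν'.restrict (f '' A) B = ν' (f '' (A ∩ f ⁻¹' B)) := by
          rw [Measure.restrict_apply hB, image_inter_preimage, inter_comm]
      _ ≤ ∫⁻ x in A ∩ f ⁻¹' B, φ x ∂ν := h _ hAB inter_subset_left
      _ = κ (A ∩ f ⁻¹' B) := by
          rw [withDensity_apply _ hAB, Measure.restrict_restrict hAB,
            inter_eq_left.2 inter_subset_left]
      _ ≤ κ.map f B := by
          rw [Measure.map_apply_of_aemeasurable hfκ hB]
          exact measure_mono inter_subset_right
  calc ∫⁻ y in f '' A, g y ∂ν' ≤ ∫⁻ y, g y ∂κ.map f := lintegral_mono' hle le_rfl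
    _ = ∫⁻ x, g (f x) ∂κ := lintegral_map' hg.aemeasurable hfκ
    _ = ∫⁻ x in A, φ x * g (f x) ∂ν := lintegral_withDensity_eq_lintegral_mul₀' hφ.aemeasurable
        (hg.comp_aemeasurable hfκ)
    _ = ∫⁻ x in A, g (f x) * φ x ∂ν := by simp only [mul_comm]

end General

variable {E : Type*} [NormedAddCommGroup E] [NormedSpace ℝ E] [FiniteDimensional ℝ E]
  [MeasurableSpace E] [BorelSpace E] (μ : Measure E) [μ.IsAddHaarMeasure]
  {f : E → E} {D : E → E →L[ℝ] E}

theorem exists_null_hausdorffMeasure_image_le_of_approximatesLinearOn {B : E →L[ℝ] E} {s : Set E}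
    {δ : ℝ≥0} (hB : ApproximatesLinearOn f B s δ) (hs : MeasurableSet s)
    (hf : ∀ x ∈ s, HasFDerivWithinAt f (D x) s x) :
    ∃ N, μ N = 0 ∧ ∀ (d : ℕ) A, MeasurableSet A → A ⊆ s →
      μH[d] (f '' (A \ N)) ≤ ∫⁻ x in A, (‖D x‖ₑ + (2 * δ : ℝ≥0)) ^ d ∂μH[d] := by
  have hae := hB.norm_fderiv_sub_le μ hs D hf
  rw [ae_restrict_iff' hs, ae_iff] at hae
  refine ⟨toMeasurable μ _, (measure_toMeasurable _).trans hae, fun d A hA hAs ↦ ?_⟩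
  set N := toMeasurable μ {x | ¬(x ∈ s → ‖D x - B‖₊ ≤ δ)}
  have hDB : ∀ x ∈ A \ N, ‖D x - B‖₊ ≤ δ := fun x hx ↦ by
    by_contra hlt
    exact hx.2 (subset_toMeasurable _ _ fun himp ↦ hlt (himp (hAs hx.1)))
  have hLip : LipschitzOnWith (‖B‖₊ + δ) f (A \ N) :=
    (lipschitzOnWith_iff_restrict.2 hB.lipschitz).mono (sdiff_subset.trans hAs)
  calc μH[d] (f '' (A \ N)) ≤ ((‖B‖₊ + δ : ℝ≥0) : ℝ≥0∞) ^ d * μH[d] (A \ N) := by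
        simpa only [ENNReal.rpow_natCast] using hLip.hausdorffMeasure_image_le d.cast_nonneg
    _ = ∫⁻ _ in A \ N, ((‖B‖₊ + δ : ℝ≥0) : ℝ≥0∞) ^ d ∂μH[d] := (setLIntegral_const _ _).symm
    _ ≤ ∫⁻ x in A \ N, (‖D x‖ₑ + (2 * δ : ℝ≥0)) ^ d ∂μH[d] := by
        refine setLIntegral_mono' (hA.diff (measurableSet_toMeasurable _ _)) fun x hx ↦ ?_
        have hnorm : ‖B‖₊ + δ ≤ ‖D x‖₊ + 2 * δ := by
          calc ‖B‖₊ + δ = ‖D x - (D x - B)‖₊ + δ := by rw [sub_sub_cancel]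
            _ ≤ ‖D x‖₊ + δ + δ := by
                gcongr
                exact (nnnorm_sub_le _ _).trans (add_le_add_right (hDB x hx) _)
            _ = ‖D x‖₊ + 2 * δ := by ring
        rw [enorm_eq_nnnorm, ← ENNReal.coe_add]
        gcongr
    _ ≤ ∫⁻ x in A, (‖D x‖ₑ + (2 * δ : ℝ≥0)) ^ d ∂μH[d] := lintegral_mono_set sdiff_subset

theorem exists_null_hausdorffMeasure_image_le_add {s : Set E} (hs : MeasurableSet s)
    (hf : ∀ x ∈ s, HasFDerivWithinAt f (D x) s x) {δ : ℝ≥0} (hδ : δ ≠ 0) :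
    ∃ N, μ N = 0 ∧ ∀ (d : ℕ) A, MeasurableSet A → A ⊆ s →
      μH[d] (f '' (A \ N)) ≤ ∫⁻ x in A, (‖D x‖ₑ + (2 * δ : ℝ≥0)) ^ d ∂μH[d] := by
  obtain ⟨t, B, htdisj, ht, hst, hB, -⟩ :=
    exists_partition_approximatesLinearOn_of_hasFDerivWithinAt f s D hf (fun _ ↦ δ) fun _ ↦ hδ
  choose N hN hle using fun n ↦ exists_null_hausdorffMeasure_image_le_of_approximatesLinearOn μ
    (hB n) (hs.inter (ht n)) fun x hx ↦ (hf x hx.1).mono inter_subset_left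
  refine ⟨⋃ n, N n, measure_iUnion_null hN, fun d A hA hAs ↦
    measure_image_diff_iUnion_le_setLIntegral (fun n ↦ hs.inter (ht n))
      (htdisj.mono fun _ _ hij ↦ hij.mono inter_subset_right inter_subset_right)
      (fun n ↦ hle n d) hA ?_⟩
  rw [← inter_iUnion, inter_eq_left.2 hst]
  exact hAs

variable {P : ℕ → Set E} (hP : ∀ K, MeasurableSet (P K))
  (hPdisj : Pairwise (Function.onFun Disjoint P))
  (hf : ∀ K, ∀ x ∈ P K, HasFDerivWithinAt f (D x) (P K) x)

include hP hPdisj hf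

theorem exists_null_hausdorffMeasure_image_le (hD : Measurable fun x ↦ ‖D x‖ₑ) :
    ∃ N, μ N = 0 ∧ ∀ (d : ℕ) A, MeasurableSet A → A ⊆ ⋃ K, P K → μH[d] A ≠ ⊤ →
      μH[d] (f '' (A \ N)) ≤ ∫⁻ x in A, ‖D x‖ₑ ^ d ∂μH[d] := by
  have hδ : ∀ i : ℕ, (2⁻¹ : ℝ≥0) ^ (i + 1) ≠ 0 := fun i ↦ by positivity
  choose N hN hle using fun i K ↦
    exists_null_hausdorffMeasure_image_le_add μ (hP K) (hf K) (hδ i)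
  refine ⟨⋃ i, ⋃ K, N i K, measure_iUnion_null fun i ↦ measure_iUnion_null (hN i),
    fun d A hA hAP hAfin ↦ ?_⟩
  have : IsFiniteMeasure ((μH[d] : Measure E).restrict A) :=
    isFiniteMeasure_restrict.2 hAfin
  have hδ2 : ∀ i : ℕ, 2 * (2⁻¹ : ℝ≥0) ^ (i + 1) = 2⁻¹ ^ i := fun i ↦ by
    rw [pow_succ', mul_inv_cancel_left₀ two_ne_zero]
  refine le_setLIntegral_pow_of_forall_le hD (δ := fun i ↦ 2 * 2⁻¹ ^ (i + 1)) (fun i ↦ ?_) ?_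
    fun i ↦ ?_
  · exact (hδ2 i).trans_le (pow_le_one₀ zero_le (by norm_num))
  · simpa only [hδ2] using NNReal.tendsto_pow_atTop_nhds_zero_of_lt_one (r := 2⁻¹) (by norm_num)
  · exact (measure_mono (image_mono (sdiff_subset_sdiff_right
      (subset_iUnion (fun i ↦ ⋃ K, N i K) i)))).trans
      (measure_image_diff_iUnion_le_setLIntegral hP hPdisj (fun K ↦ hle i K d) hA hAP)

theorem lintegral_abs_det_mul_comp_le {U : Set E} (hPU : ∀ K, P K ⊆ U)
    (hU : μ (U \ ⋃ K, P K) = 0) (hinj : InjOn f U) (g : E → ℝ≥0∞) :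
    ∫⁻ x in U, ENNReal.ofReal |(D x).det| * g (f x) ∂μ ≤ ∫⁻ y, g y ∂μ := by
  have himage : Pairwise (Function.onFun Disjoint fun K ↦ f '' P K) := fun i j hij ↦
    (hPdisj hij).image hinj (hPU i) (hPU j)
  calc _ ≤ ∫⁻ x in (⋃ K, P K) ∪ (U \ ⋃ K, P K), ENNReal.ofReal |(D x).det| * g (f x) ∂μ :=
        lintegral_mono_set (union_sdiff_self.symm ▸ subset_union_right)
    _ ≤ ∫⁻ x in ⋃ K, P K, ENNReal.ofReal |(D x).det| * g (f x) ∂μ +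
          ∫⁻ x in U \ ⋃ K, P K, ENNReal.ofReal |(D x).det| * g (f x) ∂μ :=
        lintegral_union_le _ _ _
    _ = ∫⁻ x in ⋃ K, P K, ENNReal.ofReal |(D x).det| * g (f x) ∂μ := by
        rw [setLIntegral_measure_zero _ _ hU, add_zero]
    _ = ∑' K, ∫⁻ x in P K, ENNReal.ofReal |(D x).det| * g (f x) ∂μ := lintegral_iUnion hP hPdisj _
    _ = ∑' K, ∫⁻ y in f '' P K, g y ∂μ := by
        simp only [lintegral_image_eq_lintegral_abs_det_fderiv_mul μ (hP _) (hf _)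
          (hinj.mono (hPU _))]
    _ = ∫⁻ y in ⋃ K, f '' P K, g y ∂μ := (lintegral_iUnion (fun K ↦
        measurable_image_of_fderivWithin (hP K) (hf K) (hinj.mono (hPU K))) himage _).symm
    _ ≤ ∫⁻ y, g y ∂μ := setLIntegral_le_lintegral _ _

end AreaInequality

section LipschitzImage

open Module (finrank)

variable {X Y : Type*} [NormedAddCommGroup X] [NormedSpace ℝ X] [FiniteDimensional ℝ X]
  [MeasurableSpace X] [BorelSpace X] [NormedAddCommGroup Y] [NormedSpace ℝ Y]
  [FiniteDimensional ℝ Y] [MeasurableSpace Y] [BorelSpace Y] (μ : Measure X) [μ.IsAddHaarMeasure]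
  (ν : Measure Y) [ν.IsAddHaarMeasure]

theorem exists_addHaar_image_le_of_lipschitzOnWith (h : finrank ℝ X = finrank ℝ Y) (L : ℝ≥0) :
    ∃ c : ℝ≥0, ∀ (f : X → Y) (s : Set X), LipschitzOnWith L f s → ν (f '' s) ≤ c * μ s := by
  have hX : ∃ a : ℝ≥0, (μH[finrank ℝ X] : Measure X) = a • μ :=
    ⟨_, Measure.isAddLeftInvariant_eq_smul _ μ⟩
  have hY : ∃ b : ℝ≥0, ν = b • (μH[finrank ℝ Y] : Measure Y) :=
    ⟨_, Measure.isAddLeftInvariant_eq_smul ν _⟩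
  obtain ⟨a, ha⟩ := hX
  obtain ⟨b, hb⟩ := hY
  refine ⟨b * (L ^ finrank ℝ X * a), fun f s hf ↦ ?_⟩
  calc ν (f '' s) = b * μH[finrank ℝ X] (f '' s) := by
        rw [hb, h, Measure.smul_apply, ENNReal.smul_def, smul_eq_mul]
    _ ≤ b * (L ^ (finrank ℝ X : ℝ) * μH[finrank ℝ X] s) := by
        gcongr
        exact hf.hausdorffMeasure_image_le (Nat.cast_nonneg _)
    _ = (b * (L ^ finrank ℝ X * a) : ℝ≥0) * μ s := by
        rw [ha, Measure.smul_apply, ENNReal.smul_def, smul_eq_mul, ENNReal.rpow_natCast]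
        push_cast
        ring

end LipschitzImage

section Comp

open Module (finrank)

variable {E W F : Type*} [NormedAddCommGroup E] [NormedSpace ℝ E]
  [NormedAddCommGroup W] [NormedSpace ℝ W] [FiniteDimensional ℝ W] [MeasurableSpace W]
  [BorelSpace W] [Nontrivial W] (ν : Measure W) [ν.IsAddHaarMeasure]
  [NormedAddCommGroup F] [NormedSpace ℝ F]

omit [FiniteDimensional ℝ W] [MeasurableSpace W] [BorelSpace W] [Nontrivial W] in
theorem enorm_fderiv_comp_le {g : E → F} (hg : ContDiff ℝ 1 g) {ψ : W → E} (hψ : ContDiff ℝ 1 ψ)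
    {w : W} {L : ℝ≥0} (hL : ‖fderiv ℝ ψ w‖ₑ ≤ L) (A : E →L[ℝ] F) :
    ‖fderiv ℝ (g ∘ ψ) w‖ₑ ≤ L * ‖A‖ₑ + L * ‖fderiv ℝ g (ψ w) - A‖ₑ := by
  have hcomp : fderiv ℝ (g ∘ ψ) w = (fderiv ℝ g (ψ w)).comp (fderiv ℝ ψ w) :=
    fderiv_comp w (hg.differentiable one_ne_zero _) (hψ.differentiable one_ne_zero w)
  calc ‖fderiv ℝ (g ∘ ψ) w‖ₑ ≤ ‖fderiv ℝ g (ψ w)‖ₑ * ‖fderiv ℝ ψ w‖ₑ := by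
        rw [hcomp]
        exact ContinuousLinearMap.opENorm_comp_le _ _
    _ ≤ (‖A‖ₑ + ‖fderiv ℝ g (ψ w) - A‖ₑ) * L := by
        gcongr
        calc ‖fderiv ℝ g (ψ w)‖ₑ = ‖A + (fderiv ℝ g (ψ w) - A)‖ₑ := by rw [add_sub_cancel]
          _ ≤ _ := ENNReal.coe_le_coe.2 (nnnorm_add_le A (fderiv ℝ g (ψ w) - A))
    _ = _ := by ring

theorem hasRieszPoincareOn_comp_of_tendsto {f : E → F} {g : ℕ → E → F} {D : E → E →L[ℝ] F}
    {ψ : W → E} {S : Set W} {L : ℝ≥0} (hg : ∀ k, ContDiff ℝ 1 (g k)) (hψ : ContDiff ℝ 1 ψ)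
    (hL : ∀ w ∈ S, ‖fderiv ℝ ψ w‖ₑ ≤ L)
    (hlim : ∀ w ∈ S, Tendsto (fun k ↦ g k (ψ w)) atTop (𝓝 (f (ψ w))))
    (hD : ∀ k, Measurable fun w ↦ ‖fderiv ℝ (g k) (ψ w) - D (ψ w)‖ₑ)
    (hgD : ∫⁻ w in S, ∑' k, ‖fderiv ℝ (g k) (ψ w) - D (ψ w)‖ₑ ∂ν ≠ ⊤) :
    HasRieszPoincareOn ν (f ∘ ψ) (fun w ↦ ‖D (ψ w)‖ₑ)
      (ENNReal.ofReal (2 ^ finrank ℝ W / finrank ℝ W) * L) S := by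
  have hzero : Tendsto (fun k ↦ ∫⁻ w in S, L * ‖fderiv ℝ (g k) (ψ w) - D (ψ w)‖ₑ ∂ν) atTop
      (𝓝 0) := by
    rw [lintegral_tsum fun k ↦ (hD k).aemeasurable] at hgD
    have h := ENNReal.Tendsto.const_mul (a := L) (ENNReal.tendsto_atTop_zero_of_tsum_ne_top hgD)
      (Or.inr ENNReal.coe_ne_top)
    rw [mul_zero] at h
    exact h.congr fun k ↦ (lintegral_const_mul _ (hD k)).symm
  exact .of_tendsto ENNReal.ofReal_ne_top ENNReal.coe_ne_top
    (fun k ↦ hasRieszPoincareOn_of_contDiff ν ((hg k).comp hψ) S)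
    (fun k ↦ ((hg k).comp hψ).continuous) hlim
    (fun k w hw ↦ enorm_fderiv_comp_le (hg k) hψ (hL w hw) _)
    (fun k ↦ (hD k).const_mul _) hzero

end Comp

section CentralChart

open Module (finrank)

variable {E : Type*} [NormedAddCommGroup E] [InnerProductSpace ℝ E]

/-- Central projection to the sphere of centre `x₀` and radius `q.1` of the point `x₀ + e + q.2`
of the hyperplane tangent at `x₀ + e` to the unit sphere around `x₀`. Its second factor is linear,
which makes the potential estimates of balls available on spheres. -/
noncomputable def centralChart (x₀ e : E) (q : ℝ × (ℝ ∙ e)ᗮ) : E :=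
  x₀ + (q.1 * ‖e + q.2‖⁻¹) • (e + q.2)

/-- The inverse of `centralChart x₀ e` on the half-space `0 < ⟪e, x - x₀⟫`. -/
noncomputable def centralChartInv (x₀ e x : E) : ℝ × (ℝ ∙ e)ᗮ :=
  (‖x - x₀‖, ⟪e, x - x₀⟫⁻¹ • (ℝ ∙ e)ᗮ.orthogonalProjectionOnto (x - x₀))

/-- The part of the sphere `sphere x₀ r` at angle less than `π / 3` from the direction `e`. -/
def sphericalCap (x₀ e : E) (r : ℝ) : Set E := {x ∈ sphere x₀ r | r / 2 < ⟪e, x - x₀⟫}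

variable {x₀ e : E} {r : ℝ} (he : ‖e‖ = 1)

include he

theorem inner_add_orthogonal_self (w : (ℝ ∙ e)ᗮ) : ⟪e, e + w⟫ = 1 := by
  rw [inner_add_right, Submodule.mem_orthogonal_singleton_iff_inner_right.1 w.2, add_zero,
    real_inner_self_eq_norm_sq, he, one_pow]

theorem one_le_norm_add_orthogonal (w : (ℝ ∙ e)ᗮ) : 1 ≤ ‖e + w‖ := by
  simpa only [inner_add_orthogonal_self he, he, one_mul] using real_inner_le_norm e (e + w)

theorem norm_add_orthogonal_pos (w : (ℝ ∙ e)ᗮ) : 0 < ‖e + w‖ :=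
  one_pos.trans_le (one_le_norm_add_orthogonal he w)

theorem contDiff_centralChart (x₀ : E) : ContDiff ℝ 1 (centralChart x₀ e) := by
  have hadd : ContDiff ℝ 1 fun q : ℝ × (ℝ ∙ e)ᗮ ↦ e + (q.2 : E) :=
    contDiff_const.add ((ℝ ∙ e)ᗮ.subtypeL.contDiff.comp contDiff_snd)
  have hnorm : ContDiff ℝ 1 fun q : ℝ × (ℝ ∙ e)ᗮ ↦ ‖e + (q.2 : E)‖ :=
    hadd.norm ℝ fun q ↦ norm_pos_iff.1 (norm_add_orthogonal_pos he q.2)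
  exact contDiff_const.add
    ((contDiff_fst.mul (hnorm.inv fun q ↦ (norm_add_orthogonal_pos he q.2).ne')).smul hadd)

theorem contDiff_centralChart_right (x₀ : E) (r : ℝ) :
    ContDiff ℝ 1 fun w : (ℝ ∙ e)ᗮ ↦ centralChart x₀ e (r, w) :=
  (contDiff_centralChart he x₀).comp (contDiff_const.prodMk contDiff_id)

theorem norm_centralChart_sub (hr : 0 ≤ r) (w : (ℝ ∙ e)ᗮ) :
    ‖centralChart x₀ e (r, w) - x₀‖ = r := by
  rw [centralChart, add_sub_cancel_left, norm_smul, norm_mul, norm_inv, norm_norm,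
    Real.norm_of_nonneg hr, inv_mul_cancel_right₀ (norm_add_orthogonal_pos he w).ne']

theorem inner_centralChart_sub (w : (ℝ ∙ e)ᗮ) :
    ⟪e, centralChart x₀ e (r, w) - x₀⟫ = r * ‖e + w‖⁻¹ := by
  rw [centralChart, add_sub_cancel_left, inner_smul_right, inner_add_orthogonal_self he, mul_one]

theorem le_inner_centralChart_sub (hr : 0 ≤ r) {w : (ℝ ∙ e)ᗮ} (hw : w ∈ ball 0 2) :
    r / 3 ≤ ⟪e, centralChart x₀ e (r, w) - x₀⟫ := by
  have hw2 : ‖(w : E)‖ < 2 := mem_ball_zero_iff.1 hw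
  have hle : ‖e + w‖ ≤ 3 := by linarith [norm_add_le e (w : E)]
  rw [inner_centralChart_sub he, div_eq_mul_inv]
  gcongr
  exact norm_add_orthogonal_pos he w

theorem centralChartInv_centralChart (hr : 0 < r) (w : (ℝ ∙ e)ᗮ) :
    centralChartInv x₀ e (centralChart x₀ e (r, w)) = (r, w) := by
  have hpos := norm_add_orthogonal_pos he w
  have hproj : (ℝ ∙ e)ᗮ.orthogonalProjectionOnto (centralChart x₀ e (r, w) - x₀) =
      (r * ‖e + w‖⁻¹) • w := by
    rw [centralChart, add_sub_cancel_left, map_smul, map_add,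
      Submodule.orthogonalProjectionOnto_orthogonal_apply_eq_zero
        (Submodule.mem_span_singleton_self e),
      Submodule.orthogonalProjectionOnto_mem_subspace_eq_self, zero_add]
  rw [centralChartInv, norm_centralChart_sub he hr.le, inner_centralChart_sub he, hproj, smul_smul,
    inv_mul_cancel₀ (by positivity), one_smul]

theorem sphericalCap_subset_image_centralChart (hr : 0 < r) :
    sphericalCap x₀ e r ⊆ (fun w ↦ centralChart x₀ e (r, w)) '' ball 0 2 := by
  rintro x ⟨hx, hxe⟩
  rw [mem_sphere_iff_norm] at hx
  set a := ⟪e, x - x₀⟫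
  set v := (ℝ ∙ e)ᗮ.orthogonalProjectionOnto (x - x₀)
  have ha : 0 < a := by linarith
  refine ⟨a⁻¹ • v, ?_, ?_⟩
  · have hvr : ‖v‖ ≤ r := hx ▸ Submodule.norm_orthogonalProjectionOnto_apply_le _ _
    rw [mem_ball_zero_iff, norm_smul, norm_inv, Real.norm_of_nonneg ha.le, inv_mul_lt_iff₀ ha]
    linarith
  · have hdecomp : a • e + v = x - x₀ := by
      have h := Submodule.starProjection_add_starProjection_orthogonal (K := ℝ ∙ e) (x - x₀)
      rwa [Submodule.starProjection_unit_singleton ℝ he] at h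
    have hdir : e + ((a⁻¹ • v : (ℝ ∙ e)ᗮ) : E) = a⁻¹ • (x - x₀) := by
      rw [← hdecomp, smul_add, inv_smul_smul₀ ha.ne', Submodule.coe_smul]
    have hcancel : r * (a⁻¹ * r)⁻¹ * a⁻¹ = 1 := by field_simp
    simp only [centralChart, hdir, norm_smul, norm_inv, Real.norm_of_nonneg ha.le, hx, smul_smul,
      hcancel, one_smul, add_sub_cancel]

variable [FiniteDimensional ℝ E]

omit he in
theorem exists_lipschitzOnWith_centralChartInv (x₀ e : E) {a : ℝ} (ha : 0 < a) (b : ℝ) :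
    ∃ L, LipschitzOnWith L (centralChartInv x₀ e)
      ({x | a ≤ ⟪e, x - x₀⟫} ∩ closedBall x₀ b) := by
  have hhalf : {x | a ≤ ⟪e, x - x₀⟫} = {x | a + ⟪e, x₀⟫ ≤ innerSL ℝ e x} := by
    ext x
    rw [mem_ofPred_eq, mem_ofPred_eq, inner_sub_right, innerSL_apply_apply, le_sub_iff_add_le]
  have hconv : Convex ℝ ({x | a ≤ ⟪e, x - x₀⟫} ∩ closedBall x₀ b) := by
    rw [hhalf]
    exact (convex_halfSpace_ge (innerSL ℝ e).isLinear _).inter (convex_closedBall _ _)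
  have hcomp : IsCompact ({x | a ≤ ⟪e, x - x₀⟫} ∩ closedBall x₀ b) :=
    (isCompact_closedBall x₀ b).inter_left (isClosed_le continuous_const (by fun_prop))
  have hne : ∀ x ∈ {x | a ≤ ⟪e, x - x₀⟫} ∩ closedBall x₀ b, ⟪e, x - x₀⟫ ≠ 0 :=
    fun x hx ↦ (ha.trans_le hx.1).ne'
  have hsub : ContDiff ℝ 1 fun x : E ↦ x - x₀ := contDiff_id.sub contDiff_const
  have hsmooth : ContDiffOn ℝ 1 (centralChartInv x₀ e)
      ({x | a ≤ ⟪e, x - x₀⟫} ∩ closedBall x₀ b) := by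
    refine (hsub.contDiffOn.norm ℝ fun x hx h0 ↦ hne x hx ?_).prodMk
      ((ContDiffOn.inv (contDiff_const.inner ℝ hsub).contDiffOn hne).smul
        (((ℝ ∙ e)ᗮ.orthogonalProjectionOnto).contDiff.comp hsub).contDiffOn)
    rw [h0, inner_zero_right]
  exact hsmooth.exists_lipschitzOnWith one_ne_zero hconv hcomp

theorem finrank_orthogonal_span_singleton_add_one : finrank ℝ (ℝ ∙ e)ᗮ + 1 = finrank ℝ E := by
  rw [← (ℝ ∙ e).finrank_add_finrank_orthogonal,
    finrank_span_singleton (norm_ne_zero_iff.1 (he.trans_ne one_ne_zero)), add_comm]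

variable [MeasurableSpace E] [BorelSpace E]

theorem measurable_centralChart (x₀ : E) : Measurable (centralChart x₀ e) :=
  (contDiff_centralChart he x₀).continuous.measurable

variable (μ : Measure E) [μ.IsAddHaarMeasure] {a b : ℝ}

theorem exists_map_centralChart_le (x₀ : E) (ha : 0 < a) (b : ℝ) :
    ∃ C : ℝ≥0, ((volume.restrict (Ioo a b)).prod (volume.restrict (ball 0 2))).map
      (centralChart x₀ e) ≤ (C : ℝ≥0∞) • μ.restrict (ball x₀ b) := by
  obtain ⟨L, hL⟩ := exists_lipschitzOnWith_centralChartInv x₀ e (div_pos ha three_pos) b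
  have hdim : finrank ℝ E = finrank ℝ (ℝ × (ℝ ∙ e)ᗮ) := by
    rw [Module.finrank_prod, Module.finrank_self, add_comm,
      finrank_orthogonal_span_singleton_add_one he]
  obtain ⟨C, hC⟩ := exists_addHaar_image_le_of_lipschitzOnWith μ
    ((volume : Measure ℝ).prod (volume : Measure (ℝ ∙ e)ᗮ)) hdim L
  have hΨ := measurable_centralChart he x₀
  refine ⟨C, Measure.le_iff.2 fun B hB ↦ ?_⟩
  rw [Measure.map_apply hΨ hB, Measure.prod_restrict, Measure.restrict_apply (hΨ hB),
    Measure.smul_apply, Measure.restrict_apply hB, smul_eq_mul]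
  have hsub : centralChart x₀ e ⁻¹' B ∩ Ioo a b ×ˢ ball 0 2 ⊆ centralChartInv x₀ e ''
      ((B ∩ ball x₀ b) ∩ ({x | a / 3 ≤ ⟪e, x - x₀⟫} ∩ closedBall x₀ b)) := by
    rintro ⟨r, w⟩ ⟨hB, hr, hw⟩
    have hr0 : 0 < r := ha.trans hr.1
    have hball : centralChart x₀ e (r, w) ∈ ball x₀ b :=
      mem_ball_iff_norm.2 ((norm_centralChart_sub he hr0.le w).trans_lt hr.2)
    have hinner : a / 3 ≤ ⟪e, centralChart x₀ e (r, w) - x₀⟫ :=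
      (div_le_div_of_nonneg_right hr.1.le three_pos.le).trans
        (le_inner_centralChart_sub he hr0.le hw)
    exact ⟨_, ⟨⟨hB, hball⟩, hinner, ball_subset_closedBall hball⟩,
      centralChartInv_centralChart he hr0 w⟩
  calc _ ≤ C * μ ((B ∩ ball x₀ b) ∩ ({x | a / 3 ≤ ⟪e, x - x₀⟫} ∩ closedBall x₀ b)) :=
        (measure_mono hsub).trans (hC _ _ (hL.mono inter_subset_right))
    _ ≤ C * μ (B ∩ ball x₀ b) := by gcongr C * μ ?_; exact inter_subset_left

theorem ae_setLIntegral_comp_centralChart_ne_top (ha : 0 < a) {g : E → ℝ≥0∞} (hg : Measurable g)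
    (hfin : ∫⁻ x in ball x₀ b, g x ∂μ ≠ ⊤) :
    ∀ᵐ r ∂volume.restrict (Ioo a b), ∫⁻ w in ball 0 2, g (centralChart x₀ e (r, w)) ≠ ⊤ := by
  obtain ⟨C, hC⟩ := exists_map_centralChart_le he μ x₀ ha b
  have hgΨ : Measurable fun q ↦ g (centralChart x₀ e q) := hg.comp (measurable_centralChart he x₀)
  have hle : ∫⁻ r in Ioo a b, (∫⁻ w in ball 0 2, g (centralChart x₀ e (r, w))) ≤
      C * ∫⁻ x in ball x₀ b, g x ∂μ := by
    rw [← lintegral_prod _ hgΨ.aemeasurable, ← lintegral_map hg (measurable_centralChart he x₀)]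
    exact (lintegral_mono' hC le_rfl).trans_eq (lintegral_smul_measure _ _)
  filter_upwards [ae_lt_top hgΨ.lintegral_prod_right'
    (ne_top_of_le_ne_top (ENNReal.mul_ne_top ENNReal.coe_ne_top hfin) hle)] with r hr using hr.ne

theorem ae_volume_ball_inter_preimage_centralChart_eq_zero (x₀ : E) (ha : 0 < a) (b : ℝ)
    {N : Set E} (hN : μ N = 0) :
    ∀ᵐ r ∂volume.restrict (Ioo a b),
      volume {w ∈ ball (0 : (ℝ ∙ e)ᗮ) 2 | centralChart x₀ e (r, w) ∈ N} = 0 := by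
  obtain ⟨C, hC⟩ := exists_map_centralChart_le he μ x₀ ha b
  have hΨN : ((volume.restrict (Ioo a b)).prod (volume.restrict (ball 0 2)))
      (centralChart x₀ e ⁻¹' N) = 0 :=
    Measure.preimage_null_of_map_null (measurable_centralChart he x₀).aemeasurable
      (Measure.absolutelyContinuous_of_le hC (by
        rw [Measure.smul_apply, Measure.restrict_apply' measurableSet_ball,
          measure_mono_null inter_subset_left hN, smul_zero]))
  filter_upwards [Measure.ae_ae_of_ae_prod (measure_eq_zero_iff_ae_notMem.1 hΨN)] with r hr
  rw [ae_restrict_iff' measurableSet_ball, ae_iff] at hr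
  exact measure_mono_null (fun w hw ↦ by simpa using hw) hr

end CentralChart

section Sphere

open Module (finrank)

theorem addHaar_preimage_dist_eq_zero {E : Type*} [NormedAddCommGroup E] [NormedSpace ℝ E]
    [FiniteDimensional ℝ E] [MeasurableSpace E] [BorelSpace E] [Nontrivial E] (μ : Measure E)
    [μ.IsAddHaarMeasure] (x₀ : E) {A : Set ℝ} (hA : volume A = 0) :
    μ {x | dist x x₀ ∈ A} = 0 := by
  set T := toMeasurable volume A
  have hT : MeasurableSet T := measurableSet_toMeasurable _ _
  have hT0 : volume T = 0 := (measure_toMeasurable A).trans hA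
  have hcenter : μ {x | ‖x‖ ∈ T} = 0 := by
    calc μ {x | ‖x‖ ∈ T} = ∫⁻ x, T.indicator 1 ‖x‖ ∂μ :=
          (lintegral_indicator_one (measurable_norm hT)).symm
      _ = finrank ℝ E * μ (ball 0 1) *
            ∫⁻ r in Ioi 0, ENNReal.ofReal (r ^ (finrank ℝ E - 1)) * T.indicator 1 r :=
          lintegral_fun_norm_addHaar μ (measurable_one.indicator hT)
      _ = 0 := by
          rw [lintegral_eq_zero_of_ae_eq_zero, mul_zero]
          filter_upwards [ae_restrict_of_ae (measure_eq_zero_iff_ae_notMem.1 hT0)] with r hr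
          rw [indicator_of_notMem hr, mul_zero, Pi.zero_apply]
  refine measure_mono_null (t := (· - x₀) ⁻¹' {x | ‖x‖ ∈ T}) (fun x hx ↦ ?_) ?_
  · exact subset_toMeasurable volume A (dist_eq_norm x x₀ ▸ hx)
  · rw [← hcenter]
    simpa only [sub_eq_add_neg] using measure_preimage_add_right μ (-x₀) {x | ‖x‖ ∈ T}

variable {E F : Type*} [NormedAddCommGroup E] [InnerProductSpace ℝ E] [FiniteDimensional ℝ E]

variable (E) in
theorem exists_finite_sphere_subset_iUnion_sphericalCap :
    ∃ t : Set E, t.Finite ∧ (∀ e ∈ t, ‖e‖ = 1) ∧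
      ∀ (x₀ : E) {r : ℝ}, 0 < r → sphere x₀ r ⊆ ⋃ e ∈ t, sphericalCap x₀ e r := by
  obtain ⟨t, ht, htf, htc⟩ := finite_cover_balls_of_compact (isCompact_sphere (0 : E) 1) one_pos
  have ht1 : ∀ e ∈ t, ‖e‖ = 1 := fun e he ↦ mem_sphere_zero_iff_norm.1 (ht he)
  refine ⟨t, htf, ht1, fun x₀ r hr x hx ↦ ?_⟩
  set u := r⁻¹ • (x - x₀)
  have hu : ‖u‖ = 1 := by
    rw [norm_smul, mem_sphere_iff_norm.1 hx, norm_inv, Real.norm_of_nonneg hr.le,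
      inv_mul_cancel₀ hr.ne']
  obtain ⟨e, he, hue⟩ := mem_iUnion₂.1 (htc (mem_sphere_zero_iff_norm.2 hu))
  have hpolar : ‖u - e‖ ^ 2 = 2 - 2 * (r⁻¹ * ⟪e, x - x₀⟫) := by
    rw [norm_sub_sq_real, hu, ht1 e he, real_inner_comm, inner_smul_right]
    ring
  have hlt : ‖u - e‖ ^ 2 < 1 := pow_lt_one₀ (norm_nonneg _) (mem_ball_iff_norm.1 hue) two_ne_zero
  have hhalf : 1 / 2 < r⁻¹ * ⟪e, x - x₀⟫ := by linarith
  rw [inv_mul_eq_div, lt_div_iff₀ hr] at hhalf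
  exact mem_iUnion₂.2 ⟨e, he, hx, by linarith⟩

variable [MeasurableSpace E] [BorelSpace E]

theorem isAddHaarMeasure_hausdorffMeasure_orthogonal {m : ℕ} (hm : finrank ℝ E = m + 1) {e : E}
    (he : ‖e‖ = 1) : (μH[m] : Measure (ℝ ∙ e)ᗮ).IsAddHaarMeasure := by
  have hW : finrank ℝ (ℝ ∙ e)ᗮ = m :=
    Nat.succ_injective ((finrank_orthogonal_span_singleton_add_one he).trans hm)
  exact hW ▸ isAddHaarMeasure_hausdorffMeasure

theorem hausdorffMeasure_sphericalCap_ne_top {m : ℕ} (hm : finrank ℝ E = m + 1) (x₀ : E) {e : E}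
    (he : ‖e‖ = 1) {r : ℝ} (hr : 0 < r) : μH[m] (sphericalCap x₀ e r) ≠ ⊤ := by
  have := isAddHaarMeasure_hausdorffMeasure_orthogonal hm he
  obtain ⟨L, hL⟩ := (contDiff_centralChart_right he x₀ r).contDiffOn.exists_lipschitzOnWith
    one_ne_zero (convex_closedBall 0 2) (isCompact_closedBall 0 2)
  refine ne_top_of_le_ne_top ?_ ((measure_mono (sphericalCap_subset_image_centralChart he hr)).trans
    ((hL.mono ball_subset_closedBall).hausdorffMeasure_image_le (Nat.cast_nonneg m)))
  rw [ENNReal.rpow_natCast]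
  exact ENNReal.mul_ne_top (by finiteness) measure_ball_lt_top.ne

theorem hausdorffMeasure_sphere_ne_top {m : ℕ} (hm : finrank ℝ E = m + 1) (x₀ : E) {r : ℝ}
    (hr : 0 < r) : μH[m] (sphere x₀ r) ≠ ⊤ := by
  obtain ⟨t, htf, ht1, htc⟩ := exists_finite_sphere_subset_iUnion_sphericalCap E
  exact ne_top_of_le_ne_top (measure_biUnion_lt_top htf fun e he ↦
    (hausdorffMeasure_sphericalCap_ne_top hm x₀ (ht1 e he) hr).lt_top).ne (measure_mono (htc x₀ hr))

theorem hausdorffMeasure_sphere_ne_zero {m : ℕ} (hm : finrank ℝ E = m + 1) (x₀ : E) {r : ℝ}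
    (hr : 0 < r) : μH[m] (sphere x₀ r) ≠ 0 := by
  intro h0
  have : Nontrivial E := Module.nontrivial_of_finrank_pos (R := ℝ) (hm ▸ m.succ_pos)
  obtain ⟨e, he⟩ := exists_norm_eq E zero_le_one
  have := isAddHaarMeasure_hausdorffMeasure_orthogonal hm he
  obtain ⟨L, hL⟩ := exists_lipschitzOnWith_centralChartInv x₀ e (div_pos hr three_pos) r
  have hL2 : LipschitzOnWith L (fun x ↦ (centralChartInv x₀ e x).2)
      (sphere x₀ r ∩ ({x | r / 3 ≤ ⟪e, x - x₀⟫} ∩ closedBall x₀ r)) := by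
    simpa only [one_mul, Function.comp_def] using
      LipschitzWith.prod_snd.comp_lipschitzOnWith (hL.mono inter_subset_right)
  have hball : ball (0 : (ℝ ∙ e)ᗮ) 2 ⊆ (fun x ↦ (centralChartInv x₀ e x).2) ''
      (sphere x₀ r ∩ ({x | r / 3 ≤ ⟪e, x - x₀⟫} ∩ closedBall x₀ r)) := fun w hw ↦ by
    have hsphere : centralChart x₀ e (r, w) ∈ sphere x₀ r :=
      mem_sphere_iff_norm.2 (norm_centralChart_sub he hr.le w)
    exact ⟨_, ⟨hsphere, le_inner_centralChart_sub he hr.le hw, sphere_subset_closedBall hsphere⟩,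
      congrArg Prod.snd (centralChartInv_centralChart he hr w)⟩
  have hle := (measure_mono hball).trans (hL2.hausdorffMeasure_image_le (Nat.cast_nonneg m))
  rw [measure_mono_null inter_subset_left h0, mul_zero] at hle
  exact (measure_ball_pos μH[m] _ two_pos).not_ge hle

end Sphere

section SphereLusin

open Module (finrank)

variable {E F : Type*} [NormedAddCommGroup E] [InnerProductSpace ℝ E] [FiniteDimensional ℝ E]
  [MeasurableSpace E] [BorelSpace E] (μ : Measure E) [μ.IsAddHaarMeasure]
  [NormedAddCommGroup F] [NormedSpace ℝ F] [MeasurableSpace F] [BorelSpace F]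
  {m : ℕ} (hm : finrank ℝ E = m + 1) (hm2 : 2 ≤ m) {x₀ : E} {a b : ℝ} (ha : 0 < a)
  {f : E → F} (hf : ContinuousOn f (ball x₀ b)) {D : E → E →L[ℝ] F} (hD : StronglyMeasurable D)
  {g : ℕ → E → F} (hg : ∀ k, ContDiff ℝ 1 (g k))
  (hlim : ∀ x ∈ ball x₀ b, Tendsto (fun k ↦ g k x) atTop (𝓝 (f x)))
  (hgD : ∫⁻ x in ball x₀ b, ∑' k, ‖fderiv ℝ (g k) x - D x‖ₑ ∂μ ≠ ⊤)
  {Φ : ℝ → ℝ≥0∞} (hΦ : Monotone Φ) {t₀ : ℝ} (ht₀ : 0 ≤ t₀)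
  (hJ : calderonIntegral Φ ((m : ℝ) - 1)⁻¹ t₀ ≠ ⊤)
  (hfin : ∫⁻ x in ball x₀ b, Φ ‖D x‖ ∂μ ≠ ⊤) {N : Set E} (hN : μ N = 0)

include hm hm2 ha hf hD hg hlim hgD hΦ ht₀ hJ hfin hN

theorem ae_hausdorffMeasure_image_sphericalCap_inter_eq_zero {e : E} (he : ‖e‖ = 1) :
    ∀ᵐ r ∂volume.restrict (Ioo a b), μH[m] (f '' (sphericalCap x₀ e r ∩ N)) = 0 := by
  have hW : finrank ℝ (ℝ ∙ e)ᗮ = m :=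
    Nat.succ_injective ((finrank_orthogonal_span_singleton_add_one he).trans hm)
  have : Nontrivial (ℝ ∙ e)ᗮ := Module.nontrivial_of_finrank_pos (R := ℝ) (by lia)
  have hgDm : ∀ k, Measurable fun x ↦ ‖fderiv ℝ (g k) x - D x‖ₑ := fun k ↦
    (((hg k).continuous_fderiv one_ne_zero).stronglyMeasurable.sub hD).enorm
  have hDm : Measurable fun x ↦ ‖D x‖ := hD.norm.measurable
  filter_upwards [ae_volume_ball_inter_preimage_centralChart_eq_zero he μ x₀ ha b hN,
    ae_setLIntegral_comp_centralChart_ne_top he μ ha (hΦ.measurable.comp hDm) hfin,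
    ae_setLIntegral_comp_centralChart_ne_top he μ ha (Measurable.tsum hgDm) hgD,
    ae_restrict_mem measurableSet_Ioo] with r hrN hrΦ hrg hr
  have hr0 : 0 < r := ha.trans hr.1
  let ψ : (ℝ ∙ e)ᗮ → E := fun w ↦ centralChart x₀ e (r, w)
  have hψ : ContDiff ℝ 1 ψ := contDiff_centralChart_right he x₀ r
  have hψm : Measurable ψ := hψ.continuous.measurable
  have hψball : ∀ w, ψ w ∈ ball x₀ b := fun w ↦
    mem_ball_iff_norm.2 ((norm_centralChart_sub he hr0.le w).trans_lt hr.2)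
  obtain ⟨L, hL⟩ := (isCompact_closedBall (0 : (ℝ ∙ e)ᗮ) 2).exists_bound_of_continuousOn
    (hψ.continuous_fderiv one_ne_zero).continuousOn
  have hL' : ∀ w ∈ ball 0 2, ‖fderiv ℝ ψ w‖ₑ ≤ L.toNNReal := fun w hw ↦ by
    rw [← ofReal_norm]
    exact ENNReal.ofReal_le_ofReal (hL w (ball_subset_closedBall hw))
  have hP := hasRieszPoincareOn_comp_of_tendsto volume hg hψ hL' (fun w _ ↦ hlim _ (hψball w))
    (fun k ↦ (hgDm k).comp hψm) hrg
  simp only [← ofReal_norm] at hP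
  have hzero := hP.hausdorffMeasure_image_eq_zero (by finiteness) isOpen_ball
    measure_ball_lt_top.ne (hf.comp hψ.continuous.continuousOn fun w _ ↦ hψball w)
    (hW.symm ▸ hm2) (hDm.comp hψm) hΦ ht₀ (hW.symm ▸ hJ) hrΦ (sep_subset _ _) hrN
  rw [hW] at hzero
  refine measure_mono_null ?_ hzero
  rintro _ ⟨x, ⟨hx, hxN⟩, rfl⟩
  obtain ⟨w, hw, rfl⟩ := sphericalCap_subset_image_centralChart he hr0 hx
  exact ⟨w, ⟨hw, hxN⟩, rfl⟩

theorem ae_hausdorffMeasure_image_sphere_inter_eq_zero :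
    ∀ᵐ r ∂volume.restrict (Ioo a b), μH[m] (f '' (sphere x₀ r ∩ N)) = 0 := by
  obtain ⟨t, htf, ht1, htc⟩ := exists_finite_sphere_subset_iUnion_sphericalCap E
  filter_upwards [(ae_ball_iff htf.countable).2 fun e he ↦
      ae_hausdorffMeasure_image_sphericalCap_inter_eq_zero μ hm hm2 ha hf hD hg hlim hgD hΦ ht₀ hJ
        hfin hN (ht1 e he),
    ae_restrict_mem measurableSet_Ioo] with r hcap hr
  refine measure_mono_null ?_ ((measure_biUnion_null_iff htf.countable).2 hcap)
  rw [← image_iUnion₂, ← iUnion₂_inter]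
  gcongr
  exact htc x₀ (ha.trans hr.1)

end SphereLusin

section SphereArea

open Module (finrank)

theorem measure_image_le_setLIntegral_of_image_inter_eq_zero {α β : Type*} [MeasurableSpace α]
    [MeasurableSpace β] {ν : Measure α} {ν' : Measure β} {f : α → β} {φ : α → ℝ≥0∞}
    {V N S B : Set α} (hV : MeasurableSet V)
    (h : ∀ A, MeasurableSet A → A ⊆ V → ν A ≠ ⊤ → ν' (f '' (A \ N)) ≤ ∫⁻ x in A, φ x ∂ν)
    (hS : ν S ≠ ⊤) (hN : ν' (f '' (S ∩ (N ∪ S \ V))) = 0) (hB : MeasurableSet B) (hBS : B ⊆ S) :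
    ν' (f '' B) ≤ ∫⁻ x in B, φ x ∂ν := by
  have hsub : B ⊆ ((B ∩ V) \ N) ∪ (S ∩ (N ∪ S \ V)) := fun x hx ↦ by
    by_cases hxN : x ∈ N
    · exact Or.inr ⟨hBS hx, Or.inl hxN⟩
    by_cases hxV : x ∈ V
    · exact Or.inl ⟨⟨hx, hxV⟩, hxN⟩
    · exact Or.inr ⟨hBS hx, Or.inr ⟨hBS hx, hxV⟩⟩
  calc ν' (f '' B) ≤ ν' (f '' ((B ∩ V) \ N) ∪ f '' (S ∩ (N ∪ S \ V))) := by
        rw [← image_union]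
        exact measure_mono (image_mono hsub)
    _ ≤ ν' (f '' ((B ∩ V) \ N)) := by
        refine (measure_union_le _ _).trans_eq ?_
        rw [hN, add_zero]
    _ ≤ ∫⁻ x in B ∩ V, φ x ∂ν := h _ (hB.inter hV) inter_subset_right
        (ne_top_of_le_ne_top hS (measure_mono (inter_subset_left.trans hBS)))
    _ ≤ ∫⁻ x in B, φ x ∂ν := lintegral_mono_set inter_subset_left

variable {E F : Type*} [NormedAddCommGroup E] [InnerProductSpace ℝ E] [FiniteDimensional ℝ E]
  [MeasurableSpace E] [BorelSpace E] {μ : Measure E} [μ.IsAddHaarMeasure]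
  {U : Set E} {x₀ : E} {b R : ℝ}

theorem HasWeakFDerivOn.exists_stronglyMeasurable_seq_contDiff [NormedAddCommGroup F]
    [NormedSpace ℝ F] [CompleteSpace F] {f : E → F} {f' : E → E →L[ℝ] F}
    (hw : HasWeakFDerivOn μ f f' U) (hf : ContinuousOn f U) (hR : b < R)
    (hU : closedBall x₀ R ⊆ U) :
    ∃ (D : E → E →L[ℝ] F) (g : ℕ → E → F), StronglyMeasurable D ∧
      f' =ᵐ[μ.restrict (ball x₀ b)] D ∧ (∀ k, ContDiff ℝ 1 (g k)) ∧
      (∀ x ∈ ball x₀ b, Tendsto (fun k ↦ g k x) atTop (𝓝 (f x))) ∧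
      ∀ k, ∫⁻ x in ball x₀ b, ‖fderiv ℝ (g k) x - D x‖ₑ ∂μ ≤ 4⁻¹ ^ k := by
  have hint : IntegrableOn f' (ball x₀ b) μ :=
    (hw.locallyIntegrableOn_fderiv.integrableOn_compact_subset hU
      (isCompact_closedBall _ _)).mono_set
      ((ball_subset_ball hR.le).trans ball_subset_closedBall)
  obtain ⟨D, hD, hDae⟩ := hint.aestronglyMeasurable
  obtain ⟨g, hg, hlim, hgf'⟩ := hw.exists_seq_contDiff_tendstoUniformlyOn hf hR hU
  refine ⟨D, g, hD, hDae, hg, fun x hx ↦ hlim.tendsto_at hx, fun k ↦ ?_⟩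
  refine (lintegral_congr_ae ?_).trans_le (hgf' k)
  filter_upwards [hDae] with x hx
  rw [hx]

theorem lintegral_tsum_enorm_ne_top_of_le_pow {α G : Type*} [MeasurableSpace α] {ν : Measure α}
    [NormedAddCommGroup G] {u : ℕ → α → G} (hu : ∀ k, StronglyMeasurable (u k))
    (h : ∀ k, ∫⁻ x, ‖u k x‖ₑ ∂ν ≤ 4⁻¹ ^ k) : ∫⁻ x, ∑' k, ‖u k x‖ₑ ∂ν ≠ ⊤ := by
  rw [lintegral_tsum fun k ↦ (hu k).enorm.aemeasurable]
  refine ne_top_of_le_ne_top ?_ (ENNReal.tsum_le_tsum h)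
  rw [ENNReal.tsum_geometric]
  exact ENNReal.inv_ne_top.2 (tsub_pos_of_lt (ENNReal.inv_lt_one.2 (by norm_num))).ne'

theorem HasWeakFDerivOn.exists_area_inequalities {f : E → E} {f' : E → E →L[ℝ] E}
    (hw : HasWeakFDerivOn μ f f' U) (hf : ContinuousOn f U) (hinj : InjOn f U) (hR : b < R)
    (hU : closedBall x₀ R ⊆ U) {m : ℕ} (hm : finrank ℝ E = m + 1) (hm2 : 2 ≤ m)
    {Φ : ℝ → ℝ≥0∞} (hΦ : Monotone Φ) {t₀ : ℝ} (ht₀ : 0 ≤ t₀)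
    (hJ : calderonIntegral Φ ((m : ℝ) - 1)⁻¹ t₀ ≠ ⊤)
    (hfin : ∫⁻ x in ball x₀ b, Φ ‖f' x‖ ∂μ ≠ ⊤) :
    ∃ D : E → E →L[ℝ] E, StronglyMeasurable D ∧ f' =ᵐ[μ.restrict (ball x₀ b)] D ∧
      (∀ a > 0, ∀ᵐ r ∂volume.restrict (Ioo a b), ∀ g : E → ℝ≥0∞, Measurable g →
        ∫⁻ y in f '' sphere x₀ r, g y ∂μH[m] ≤
          ∫⁻ x in sphere x₀ r, g (f x) * ‖D x‖ₑ ^ m ∂μH[m]) ∧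
      ∀ g : E → ℝ≥0∞,
        ∫⁻ x in ball x₀ b, ENNReal.ofReal |(D x).det| * g (f x) ∂μ ≤ ∫⁻ y, g y ∂μ := by
  have : Nontrivial E := Module.nontrivial_of_finrank_pos (R := ℝ) (by lia)
  have hbU : ball x₀ b ⊆ U := (ball_subset_ball hR.le).trans (ball_subset_closedBall.trans hU)
  have hfb : ContinuousOn f (ball x₀ b) := hf.mono hbU
  obtain ⟨D, g, hD, hDae, hg, hlim, hgD⟩ := hw.exists_stronglyMeasurable_seq_contDiff hf hR hU
  obtain ⟨P, hP, hPU, hPdisj, hPD, hPnull⟩ := exists_iUnion_hasFDerivWithinAt isOpen_ball hD hg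
    hlim hgD
  obtain ⟨N, hN, himage⟩ := exists_null_hausdorffMeasure_image_le μ hP hPdisj hPD hD.enorm
  refine ⟨D, hD, hDae, fun a ha ↦ ?_,
    lintegral_abs_det_mul_comp_le μ hP hPdisj hPD hPU hPnull (hinj.mono hbU)⟩
  have hfinD : ∫⁻ x in ball x₀ b, Φ ‖D x‖ ∂μ ≠ ⊤ :=
    ne_of_eq_of_ne (lintegral_congr_ae (hDae.symm.fun_comp fun A ↦ Φ ‖A‖)) hfin
  have hsum := lintegral_tsum_enorm_ne_top_of_le_pow
    (fun k ↦ ((hg k).continuous_fderiv one_ne_zero).stronglyMeasurable.sub hD) hgD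
  filter_upwards [ae_hausdorffMeasure_image_sphere_inter_eq_zero μ hm hm2 ha hfb hD hg hlim hsum
      hΦ ht₀ hJ hfinD (measure_union_null hN hPnull), ae_restrict_mem measurableSet_Ioo]
    with r hr0 hr u hu
  have hsphere : sphere x₀ r ⊆ ball x₀ b := sphere_subset_ball hr.2
  refine setLIntegral_image_le_setLIntegral_comp_mul (hD.enorm.pow_const m)
    isClosed_sphere.measurableSet (hfb.mono hsphere).domRestrict.measurable (fun B hB hBr ↦ ?_) hu
  refine measure_image_le_setLIntegral_of_image_inter_eq_zero (.iUnion hP) (himage m)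
    (hausdorffMeasure_sphere_ne_top hm x₀ (ha.trans hr.1)) (measure_mono_null ?_ hr0) hB hBr
  gcongr

end SphereArea

section OrliczSobolev

variable {n : ℕ} {φ : ℝ → ℝ}

/-- The function `φ` on `(0, ∞)`, extended by zero and regarded as valued in `[0, ∞]`. -/
noncomputable def youngExtension (φ : ℝ → ℝ) : ℝ → ℝ≥0∞ :=
  (Ioi 0).indicator fun t ↦ ENNReal.ofReal (φ t)

theorem youngExtension_of_pos {t : ℝ} (ht : 0 < t) : youngExtension φ t = ENNReal.ofReal (φ t) :=
  indicator_of_mem ht _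

theorem youngExtension_of_nonpos {t : ℝ} (ht : t ≤ 0) : youngExtension φ t = 0 :=
  indicator_of_notMem (notMem_Ioi.2 ht) _

theorem NondecPos.monotone_youngExtension (hφ : NondecPos φ) : Monotone (youngExtension φ) := by
  intro s t hst
  rcases le_or_gt s 0 with hs | hs
  · simp only [youngExtension_of_nonpos hs, zero_le]
  · rw [youngExtension_of_pos hs, youngExtension_of_pos (hs.trans_le hst)]
    exact ENNReal.ofReal_le_ofReal (hφ.1 s t hs hst)

theorem CalderonCond.exists_calderonIntegral_ne_top (hcal : CalderonCond n φ)
    (hφ : NondecPos φ) :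
    ∃ t₀ > 0, calderonIntegral (youngExtension φ) ((n : ℝ) - 2)⁻¹ t₀ ≠ ⊤ := by
  obtain ⟨t₀, ht₀, hint⟩ := hcal
  refine ⟨t₀, ht₀, ne_of_eq_of_ne ?_ hint.lintegral_lt_top.ne⟩
  refine setLIntegral_congr_fun measurableSet_Ioi fun t ht ↦ ?_
  have ht : 0 < t := ht₀.trans ht
  simp only [youngExtension_of_pos ht, one_div]
  rw [← ENNReal.ofReal_div_of_pos (hφ.2 t ht), ENNReal.ofReal_rpow_of_pos (div_pos ht (hφ.2 t ht))]

theorem opNorm_le_frobNorm {m : ℕ} (A : Eucl n →L[ℝ] Eucl m) : ‖A‖ ≤ frobNorm A := by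
  refine A.opNorm_le_bound (Real.sqrt_nonneg _) fun x ↦ ?_
  rw [EuclideanSpace.norm_eq, EuclideanSpace.norm_eq, frobNorm, ← Real.sqrt_mul (by positivity),
    Finset.sum_mul]
  refine Real.sqrt_le_sqrt (Finset.sum_le_sum fun i _ ↦ ?_)
  have hAx : A x i = ∑ j, A (EuclideanSpace.single j 1) i * x j := by
    conv_lhs => rw [← (EuclideanSpace.basisFun (Fin n) ℝ).sum_repr x, map_sum]
    simp [mul_comm]
  simp only [hAx, Real.norm_eq_abs, sq_abs]
  exact Finset.sum_mul_sq_le_sq_mul_sq _ _ _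

theorem NondecPos.youngExtension_norm_le (hφ : NondecPos φ) {m : ℕ} (A : Eucl n →L[ℝ] Eucl m) :
    youngExtension φ ‖A‖ ≤ ENNReal.ofReal (φ (frobNorm A)) := by
  rcases (norm_nonneg A).eq_or_lt with hA | hA
  · simp only [youngExtension_of_nonpos hA.ge, zero_le]
  · rw [youngExtension_of_pos hA]
    exact ENNReal.ofReal_le_ofReal (hφ.1 _ _ hA (opNorm_le_frobNorm A))

theorem MemOrliczSobolevOn.lintegral_youngExtension_ne_top {m : ℕ} {D K : Set (Eucl n)}
    {f : Eucl n → Eucl m} {Df : Eucl n → Eucl n →L[ℝ] Eucl m} (h : MemOrliczSobolevOn φ D f Df)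
    (hφ : NondecPos φ) (hKD : K ⊆ D) (hK : IsCompact K) :
    ∫⁻ x in K, youngExtension φ ‖Df x‖ ≠ ⊤ :=
  ne_top_of_le_ne_top (h.2 K hKD hK).ne (lintegral_mono fun x ↦ hφ.youngExtension_norm_le (Df x))

end OrliczSobolev

section LowerModulus

variable {n k : ℕ} {x₀ : Eucl n} {p : ℝ}

theorem Surface.mult_eq_indicator {S : Surface n k} (hS : InjOn S.toFun S.dom) :
    S.mult = (S.toFun '' S.dom).indicator 1 := by
  ext y
  by_cases hy : y ∈ S.toFun '' S.dom
  · obtain ⟨x, hx, rfl⟩ := hy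
    have hfibre : S.dom ∩ S.toFun ⁻¹' {S.toFun x} = {x} :=
      Subset.antisymm (fun z hz ↦ hS hz.1 hx hz.2) (singleton_subset_iff.2 ⟨hx, rfl⟩)
    rw [indicator_of_mem (mem_image_of_mem _ hx), Surface.mult, hfibre, encard_singleton,
      ENat.toENNReal_one, Pi.one_apply]
  · have hfibre : S.dom ∩ S.toFun ⁻¹' {y} = ∅ :=
      eq_empty_of_forall_notMem fun z hz ↦ hy ⟨z, hz.1, hz.2⟩
    rw [indicator_of_notMem hy, Surface.mult, hfibre, encard_empty, ENat.toENNReal_zero]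

theorem Surface.sint_eq_setLIntegral_image {S : Surface n k} (hS : InjOn S.toFun S.dom)
    (hmeas : MeasurableSet (S.toFun '' S.dom)) (ρ : Eucl n → ℝ≥0∞) :
    S.sint ρ = ∫⁻ y in S.toFun '' S.dom, ρ y ∂μH[k] := by
  rw [Surface.sint, ← lintegral_indicator hmeas]
  simp only [mult_eq_indicator hS, ← indicator_mul_right, Pi.one_apply, mul_one]

theorem one_le_setLIntegral_image_of_mem_surfAdm {Γ : Set (Surface n k)} {f : Eucl n → Eucl n}
    {ρ : Eucl n → ℝ≥0∞} (hρ : ρ ∈ surfAdm k (imageFam f Γ)) {S : Surface n k} (hSΓ : S ∈ Γ)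
    (hS : InjOn S.toFun S.dom) (hf : ContinuousOn f (S.toFun '' S.dom))
    (hinj : InjOn f (S.toFun '' S.dom)) (hmeas : MeasurableSet (f '' (S.toFun '' S.dom))) :
    1 ≤ ∫⁻ y in f '' (S.toFun '' S.dom), ρ y ^ k ∂μH[k] := by
  let fS : Surface n k :=
    ⟨S.dom, S.isOpen_dom, f ∘ S.toFun, hf.comp S.continuousOn (mapsTo_image _ _)⟩
  have himage : fS.toFun '' fS.dom = f '' (S.toFun '' S.dom) := image_comp f S.toFun S.dom
  rw [← himage, ← Surface.sint_eq_setLIntegral_image (hinj.comp hS (mapsTo_image _ _))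
    (himage ▸ hmeas)]
  exact hρ.2 fS ⟨S, hSΓ, rfl, fun _ _ ↦ rfl⟩

theorem surfModulus_eq_zero_of_image_eq_sphere (hn : 2 ≤ n) (hp : 0 < p) {A : Set ℝ}
    (hA : volume A = 0) {Γ : Set (Surface n (n - 1))} (hΓ : ∀ S ∈ Γ, InjOn S.toFun S.dom ∧
      ∃ r ∈ A, 0 < r ∧ S.toFun '' S.dom = sphere x₀ r) :
    surfModulus p (n - 1) Γ = 0 := by
  have hdim : Module.finrank ℝ (Eucl n) = (n - 1) + 1 := by
    rw [finrank_euclideanSpace_fin, Nat.sub_add_cancel (by lia)]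
  have : Nontrivial (Eucl n) := Module.nontrivial_of_finrank_pos (R := ℝ) (hdim ▸ Nat.succ_pos _)
  set X : Set (Eucl n) := toMeasurable volume {x | dist x x₀ ∈ A}
  have hX : MeasurableSet X := measurableSet_toMeasurable _ _
  have hX0 : volume X = 0 :=
    (measure_toMeasurable _).trans (addHaar_preimage_dist_eq_zero volume x₀ hA)
  refine le_antisymm (iInf₂_le_of_le (X.indicator ⊤)
    ⟨measurable_const.indicator hX, fun S hS ↦ ?_⟩ ?_) bot_le
  · obtain ⟨hinj, r, hrA, hr, himage⟩ := hΓ S hS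
    have htop : ∀ x ∈ sphere x₀ r, X.indicator (⊤ : Eucl n → ℝ≥0∞) x ^ (n - 1) = ⊤ := by
      intro x hx
      have hxX : x ∈ X := subset_toMeasurable _ _ (show dist x x₀ ∈ A from hx.symm ▸ hrA)
      rw [indicator_of_mem hxX]
      exact ENNReal.top_pow (by lia)
    rw [Surface.sint_eq_setLIntegral_image hinj (himage ▸ isClosed_sphere.measurableSet), himage,
      setLIntegral_congr_fun isClosed_sphere.measurableSet htop, setLIntegral_const,
      ENNReal.top_mul (hausdorffMeasure_sphere_ne_zero hdim x₀ hr)]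
    exact le_top
  · refine (lintegral_eq_zero_of_ae_eq_zero ?_).le
    filter_upwards [measure_eq_zero_iff_ae_notMem.1 hX0] with x hx
    rw [indicator_of_notMem hx, ENNReal.zero_rpow_of_pos hp, Pi.zero_apply]

variable {D : Set (Eucl n)} {ε ε₀ : ℝ} {f : Eucl n → Eucl n} {w : Eucl n → ℝ≥0∞}
  {ρ : Eucl n → ℝ≥0∞}

theorem mul_comp_mem_extAdm_sphereFam (hn : 2 ≤ n) (hp : 0 < p) (hε : 0 < ε)
    (hball : ball x₀ ε₀ ⊆ D) (hf : ContinuousOn f D) (hinj : InjOn f D) (hw : Measurable w)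
    (harea : ∀ᵐ r ∂volume.restrict (Ioo ε ε₀), ∀ g : Eucl n → ℝ≥0∞, Measurable g →
      ∫⁻ y in f '' sphere x₀ r, g y ∂μH[(n - 1 : ℕ)] ≤
        ∫⁻ x in sphere x₀ r, g (f x) * w x ^ (n - 1) ∂μH[(n - 1 : ℕ)])
    (hρ : ρ ∈ surfAdm (n - 1) (imageFam f (sphereFam D x₀ (Ioo ε ε₀)))) :
    (fun x ↦ ρ ((ball x₀ ε₀).piecewise f 0 x) * w x) ∈
      extAdm p (n - 1) (sphereFam D x₀ (Ioo ε ε₀)) := by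
  have hF : Measurable ((ball x₀ ε₀).piecewise f 0) :=
    (hf.mono hball).measurable_piecewise continuousOn_const measurableSet_ball
  refine ⟨(hρ.1.comp hF).mul hw, ?_⟩
  rw [ae_restrict_iff' measurableSet_Ioo, ae_iff] at harea
  refine surfModulus_eq_zero_of_image_eq_sphere (x₀ := x₀) hn hp harea ?_
  rintro S ⟨hSΓ, hSρ⟩
  obtain ⟨r, hr, -, hS, himage⟩ := id hSΓ
  have hrball : sphere x₀ r ⊆ ball x₀ ε₀ := sphere_subset_ball hr.2
  have hrD : sphere x₀ r ⊆ D := hrball.trans hball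
  rw [inter_eq_left.2 hrD] at himage
  refine ⟨hS, r, fun hr_area ↦ hSρ ?_, hε.trans hr.1, himage⟩
  have hfr : ContinuousOn f (sphere x₀ r) := hf.mono hrD
  have hmeas : MeasurableSet (f '' sphere x₀ r) :=
    ((isCompact_sphere x₀ r).image_of_continuousOn hfr).measurableSet
  have hone := one_le_setLIntegral_image_of_mem_surfAdm hρ hSΓ hS (himage ▸ hfr)
    (himage ▸ hinj.mono hrD) (himage ▸ hmeas)
  rw [himage] at hone
  rw [Surface.sint_eq_setLIntegral_image hS (himage ▸ isClosed_sphere.measurableSet), himage]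
  calc 1 ≤ _ := hone
    _ ≤ _ := hr_area hr _ (hρ.1.pow_const _)
    _ = _ := setLIntegral_congr_fun isClosed_sphere.measurableSet fun x hx ↦ by
      simp only [piecewise_eq_of_mem _ _ _ (hrball hx), mul_pow]

theorem iInf_extAdm_sphereFam_le_surfModulus_imageFam (hn : 2 ≤ n) (hp : 0 < p) (hε : 0 < ε)
    (hball : ball x₀ ε₀ ⊆ D) (hf : ContinuousOn f D) (hinj : InjOn f D) (hw : Measurable w)
    (harea : ∀ᵐ r ∂volume.restrict (Ioo ε ε₀), ∀ g : Eucl n → ℝ≥0∞, Measurable g →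
      ∫⁻ y in f '' sphere x₀ r, g y ∂μH[(n - 1 : ℕ)] ≤
        ∫⁻ x in sphere x₀ r, g (f x) * w x ^ (n - 1) ∂μH[(n - 1 : ℕ)])
    {J Q : Eucl n → ℝ≥0∞}
    (hvol : ∀ g : Eucl n → ℝ≥0∞, ∫⁻ x in ball x₀ ε₀, J x * g (f x) ≤ ∫⁻ y, g y)
    (hQ : ∀ᵐ x ∂volume.restrict (ball x₀ ε₀), ∀ c : ℝ≥0∞, (c * w x) ^ p / Q x ≤ J x * c ^ p) :
    ⨅ ρ ∈ extAdm p (n - 1) (sphereFam D x₀ (Ioo ε ε₀)), ∫⁻ x in ringA x₀ ε ε₀, ρ x ^ p / Q x ≤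
      surfModulus p (n - 1) (imageFam f (sphereFam D x₀ (Ioo ε ε₀))) := by
  refine le_iInf₂ fun ρ hρ ↦ iInf₂_le_of_le _
    (mul_comp_mem_extAdm_sphereFam hn hp hε hball hf hinj hw harea hρ) ?_
  calc ∫⁻ x in ringA x₀ ε ε₀, (ρ ((ball x₀ ε₀).piecewise f 0 x) * w x) ^ p / Q x
      ≤ ∫⁻ x in ball x₀ ε₀, (ρ ((ball x₀ ε₀).piecewise f 0 x) * w x) ^ p / Q x :=
        lintegral_mono_set fun x hx ↦ mem_ball.2 hx.2
    _ ≤ ∫⁻ x in ball x₀ ε₀, J x * ρ (f x) ^ p := by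
        refine lintegral_mono_ae ?_
        filter_upwards [hQ, ae_restrict_mem measurableSet_ball] with x hx hxball
        rw [piecewise_eq_of_mem _ _ _ hxball]
        exact hx _
    _ ≤ ∫⁻ y, ρ y ^ p := hvol fun y ↦ ρ y ^ p

theorem mul_enorm_rpow_div_distortionKp_le (hp : 0 < p)
    {Df : Eucl n → Eucl n →L[ℝ] Eucl n} {x : Eucl n} {K : ℝ} (hK : 1 ≤ K)
    (h : ‖Df x‖ ^ n ≤ K * (Df x).det) (c : ℝ≥0∞) :
    (c * ‖Df x‖ₑ) ^ p / distortionKp p Df x ≤ ENNReal.ofReal |(Df x).det| * c ^ p := by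
  rcases eq_or_ne (Df x) 0 with hzero | hne
  · have hzero' : ‖Df x‖ₑ = 0 := by
      rw [← ofReal_norm, norm_eq_zero.2 hzero, ENNReal.ofReal_zero]
    rw [hzero', mul_zero, ENNReal.zero_rpow_of_pos hp, ENNReal.zero_div]
    exact zero_le
  have hnorm : 0 < ‖Df x‖ := norm_pos_iff.2 hne
  have hdet : 0 < (Df x).det :=
    pos_of_mul_pos_right ((pow_pos hnorm n).trans_le h) (zero_le_one.trans hK)
  have hnormp : 0 < ‖Df x‖ ^ p := Real.rpow_pos_of_pos hnorm p
  rw [distortionKp, if_pos hdet.ne', ENNReal.mul_rpow_of_nonneg _ _ hp.le, abs_of_pos hdet,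
    ← ofReal_norm, ENNReal.ofReal_rpow_of_pos hnorm, ENNReal.ofReal_div_of_pos hdet, div_eq_mul_inv,
    ENNReal.inv_div (.inl ENNReal.ofReal_ne_top) (.inl (ENNReal.ofReal_pos.2 hdet).ne'), mul_assoc,
    ENNReal.mul_div_cancel (ENNReal.ofReal_pos.2 hnormp).ne' ENNReal.ofReal_ne_top, mul_comm]

end LowerModulus

theorem subset_of_isPreconnected_of_disjoint_frontier {X : Type*} [TopologicalSpace X]
    {C U : Set X} (hC : IsPreconnected C) (hU : IsOpen U) (hCU : (C ∩ U).Nonempty)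
    (h : Disjoint C (frontier U)) : C ⊆ U := by
  refine hC.subset_left_of_subset_union hU isClosed_closure.isOpen_compl
    (disjoint_compl_right_iff_subset.2 subset_closure) (fun x hx ↦ ?_) hCU
  rw [disjoint_left, hU.frontier_eq] at h
  exact or_iff_not_imp_left.2 fun hxU hcl ↦ h hx ⟨hcl, hxU⟩

theorem exists_closedBall_subset_of_lt_infEDist_frontier {E : Type*} [NormedAddCommGroup E]
    [NormedSpace ℝ E] {U : Set E} (hU : IsOpen U) {x₀ : E} (hx₀ : x₀ ∈ U) {r : ℝ} (hr : 0 ≤ r)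
    (h : ENNReal.ofReal r < infEDist x₀ (frontier U)) : ∃ R > r, closedBall x₀ R ⊆ U := by
  obtain ⟨R, hrR, hR⟩ := ENNReal.lt_iff_exists_nnreal_btwn.1 h
  refine ⟨R, ?_, ?_⟩
  · rwa [← ENNReal.ofReal_coe_nnreal, ENNReal.ofReal_lt_ofReal_iff_of_nonneg hr] at hrR
  · refine subset_of_isPreconnected_of_disjoint_frontier (convex_closedBall x₀ R).isPreconnected hU
      ⟨x₀, mem_closedBall_self R.2, hx₀⟩ ?_
    rw [← closedEBall_coe]
    exact disjoint_closedEBall_of_lt_infEDist hR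

theorem stmt_6_general (n : ℕ) (hn : 3 ≤ n) (D : Set (Eucl n)) (hD : IsOpen D)
    (φ : ℝ → ℝ) (hφ : NondecPos φ) (hcal : CalderonCond n φ)
    (f : Eucl n → Eucl n) (Df : Eucl n → Eucl n →L[ℝ] Eucl n)
    (hf : ContinuousOn f D) (hinj : InjOn f D) (hsob : MemOrliczSobolevOn φ D f Df)
    (hfd : HasFiniteDistortionOn D Df) (p : ℝ) (hp : 0 < p) (x₀ : Eucl n) (hx₀ : x₀ ∈ D) :
    IsLowerQHomeoAt D f (distortionKp p Df) p x₀ (infEDist x₀ (frontier D)) := by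
  intro ε ε₀ hε hεε₀ hdist
  have hdim : Module.finrank ℝ (Eucl n) = (n - 1) + 1 := by
    rw [finrank_euclideanSpace_fin, Nat.sub_add_cancel (by lia)]
  have hexponent : ((n - 1 : ℕ) : ℝ) - 1 = n - 2 := by
    rw [Nat.cast_sub (by lia)]
    ring
  obtain ⟨R, hR, hRD⟩ := exists_closedBall_subset_of_lt_infEDist_frontier hD hx₀
    (hε.trans hεε₀).le hdist
  have hball : ball x₀ ε₀ ⊆ closedBall x₀ R :=
    (ball_subset_ball hR.le).trans ball_subset_closedBall
  obtain ⟨t₀, ht₀, hJ⟩ := hcal.exists_calderonIntegral_ne_top hφ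
  have hfin := hsob.lintegral_youngExtension_ne_top hφ hRD (isCompact_closedBall x₀ R)
  have hw : HasWeakFDerivOn volume f Df D := ⟨hsob.1.1, hsob.1.2.1, hsob.1.2.2⟩
  obtain ⟨G, hG, hGae, harea, hvol⟩ := hw.exists_area_inequalities hf hinj hR hRD hdim (by lia)
    hφ.monotone_youngExtension ht₀.le (hexponent ▸ hJ)
    (ne_top_of_le_ne_top hfin (lintegral_mono_set hball))
  obtain ⟨K, -, hK⟩ := hfd
  refine iInf_extAdm_sphereFam_le_surfModulus_imageFam (by lia) hp hε (hball.trans hRD) hf hinj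
    hG.enorm (harea ε hε) hvol ?_
  filter_upwards [hGae, ae_restrict_of_ae_restrict_of_subset (hball.trans hRD) hK] with x hGx hKx
  rw [← hGx]
  exact mul_enorm_rpow_div_distortionKp_le hp hKx.1 hKx.2

/-- under the Calderón-type condition on `φ`, any homeomorphism `f : D → D'` of
finite distortion of class `W^{1,φ}_loc` is a lower `K_p(·,f)`-homeomorphism w.r.t. the
`p`-modulus at every point, for every `p > n-1`. -/
theorem stmt_6 (n : ℕ) (hn : 3 ≤ n) (D D' : Set (Eucl n))
    (hDopen : IsOpen D) (hDconn : IsConnected D)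
    (hD'open : IsOpen D') (hD'conn : IsConnected D')
    (φ : ℝ → ℝ) (hφ : NondecPos φ) (hcal : CalderonCond n φ)
    (f : Eucl n → Eucl n) (Df : Eucl n → Eucl n →L[ℝ] Eucl n)
    (hf : IsHomeoOn f D D')
    (hsob : MemOrliczSobolevOn φ D f Df)
    (hfd : HasFiniteDistortionOn D Df)
    (p : ℝ) (hp : (n : ℝ) - 1 < p) (x₀ : Eucl n) (hx₀ : x₀ ∈ D) :
    IsLowerQHomeoAt D f (distortionKp p Df) p x₀ (EMetric.infEdist x₀ (frontier D)) :=
  stmt_6_general n hn D hDopen φ hφ hcal f Df hf.continuousOn hf.injOn hsob hfd p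
    (by linarith [show (3 : ℝ) ≤ n from mod_cast hn]) x₀ hx₀
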